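/- For every N ≥ 1 and every n ∈ ℕ, the following are equivalent: (1) there exists an ℝ-linear map f : ℝⁿ → M(2N,ℝ) such that every f(v) is symmetric, satisfies f(v)ᵀ J_N + J_N f(v) = 0, and f(v)² = ‖v‖² I_{2N} for all v ∈ ℝⁿ; (2) there exists an ℝ-linear map f : ℝⁿ → M(2N,ℝ) with every f(v) symmetric satisfying f(v)ᵀ J_N + J_N f(v) = 0 and f(v) invertible for every nonzero v; (3) n ≤ ρ(N/2) + 2. (Entry 𝔤 = 𝔰𝔭(N,ℝ) of the Hurwitz–Radon value theorem, the 𝔭-part being the symmetric elements of 𝔰𝔭(N,ℝ).) -/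

import Mathlib

open Matrix

/-- Extended Hurwitz–Radon number: writing the 2-adic valuation of `t` as `4a + b`
with `a ∈ ℤ` and `b ∈ {0,1,2,3}`, `ρ(t) := 8a + 2^b`. -/
noncomputable def hrRho (t : ℚ) : ℤ :=
  8 * (padicValRat 2 t / 4) + 2 ^ (padicValRat 2 t % 4).toNat

/-- The `2N × 2N` real block matrix `J_N = [[0, −I_N],[I_N, 0]]`. -/
def Jreal (N : ℕ) : Matrix (Fin N ⊕ Fin N) (Fin N ⊕ Fin N) ℝ :=
  Matrix.fromBlocks 0 (-1) 1 0

/-- Clifford relations with squares `s i`. -/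
def IsCl {R : Type*} [Ring R] {ι : Type*} (s : ι → ℤ) (e : ι → R) : Prop :=
  (∀ i, e i * e i = (s i : R)) ∧ ∀ i j, i ≠ j → e i * e j = -(e j * e i)

theorem IsCl.comp {R : Type*} [Ring R] {ι κ : Type*} {s : ι → ℤ} {e : ι → R} (h : IsCl s e)
    (g : κ → ι) (hg : Function.Injective g) : IsCl (s ∘ g) (e ∘ g) :=
  ⟨fun i => h.1 (g i), fun i j hij => h.2 _ _ (fun h' => hij (hg h'))⟩

theorem cl_w_sq {R : Type*} [Ring R] (e0 e1 e2 e3 : R) (a : ℤ) (ha : a * a = 1)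
    (h0 : e0 * e0 = a) (h1 : e1 * e1 = a) (h2 : e2 * e2 = a) (h3 : e3 * e3 = a)
    (h01 : e1 * e0 = -(e0 * e1)) (h02 : e2 * e0 = -(e0 * e2)) (h03 : e3 * e0 = -(e0 * e3))
    (h12 : e2 * e1 = -(e1 * e2)) (h13 : e3 * e1 = -(e1 * e3)) (h23 : e3 * e2 = -(e2 * e3)) :
    (e0 * e1 * e2 * e3) * (e0 * e1 * e2 * e3) = 1 := by
  have haR : (a : R) * a = 1 := by exact_mod_cast congrArg (Int.cast : ℤ → R) ha
  have hc : ∀ x : R, (a : R) * x = x * a := fun x => (Int.cast_commute a x).eq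
  calc (e0 * e1 * e2 * e3) * (e0 * e1 * e2 * e3)
      = e0 * e1 * e2 * (e3 * e0) * e1 * e2 * e3 := by noncomm_ring
    _ = -(e0 * e1 * (e2 * e0) * (e3 * e1) * e2 * e3) := by rw [h03]; noncomm_ring
    _ = -(e0 * (e1 * e0) * e2 * e1 * (e3 * e2) * e3) := by rw [h02, h13]; noncomm_ring
    _ = -(e0 * e0 * e1 * (e2 * e1) * e2 * (e3 * e3)) := by rw [h01, h23]; noncomm_ring
    _ = (e0 * e0) * (e1 * e1) * (e2 * e2) * (e3 * e3) := by rw [h12]; noncomm_ring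
    _ = 1 := by rw [h0, h1, h2, h3, haR, one_mul, haR]

/-- the element `w = e0 e1 e2 e3`. -/
def clW {R : Type*} [Ring R] {ι : Type*} (e : ι ⊕ Fin 4 → R) : R :=
  e (Sum.inr 0) * e (Sum.inr 1) * e (Sum.inr 2) * e (Sum.inr 3)

theorem clW_sq {R : Type*} [Ring R] {ι : Type*} {s : ι → ℤ} {a : ℤ} (ha : a * a = 1)
    {e : ι ⊕ Fin 4 → R} (h : IsCl (Sum.elim s (fun _ => a)) e) : clW e * clW e = 1 := by
  have h1 := fun i => h.1 (Sum.inr i)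
  have h2 := fun i j (hij : i ≠ j) => h.2 (Sum.inr i) (Sum.inr j) (by simpa using hij)
  exact cl_w_sq _ _ _ _ a ha (h1 0) (h1 1) (h1 2) (h1 3) (h2 _ _ (by decide)) (h2 _ _ (by decide))
    (h2 _ _ (by decide)) (h2 _ _ (by decide)) (h2 _ _ (by decide)) (h2 _ _ (by decide))

theorem cl_comm4 {R : Type*} [Ring R] (x e0 e1 e2 e3 : R)
    (h0 : x * e0 = -(e0 * x)) (h1 : x * e1 = -(e1 * x)) (h2 : x * e2 = -(e2 * x))
    (h3 : x * e3 = -(e3 * x)) : x * (e0 * e1 * e2 * e3) = (e0 * e1 * e2 * e3) * x := by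
  calc x * (e0 * e1 * e2 * e3) = (x * e0) * e1 * e2 * e3 := by noncomm_ring
    _ = -(e0 * (x * e1) * e2 * e3) := by rw [h0]; noncomm_ring
    _ = e0 * e1 * (x * e2) * e3 := by rw [h1]; noncomm_ring
    _ = -(e0 * e1 * e2 * (x * e3)) := by rw [h2]; noncomm_ring
    _ = _ := by rw [h3]; noncomm_ring

theorem clW_comm {R : Type*} [Ring R] {ι : Type*} {s : ι → ℤ} {a : ℤ}
    {e : ι ⊕ Fin 4 → R} (h : IsCl (Sum.elim s (fun _ => a)) e) (i : ι) :
    e (Sum.inl i) * clW e = clW e * e (Sum.inl i) := by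
  apply cl_comm4 <;> exact h.2 _ _ (by simp)

theorem clW_anti {R : Type*} [Ring R] {ι : Type*} {s : ι → ℤ} {a : ℤ}
    {e : ι ⊕ Fin 4 → R} (h : IsCl (Sum.elim s (fun _ => a)) e) (i : Fin 4) :
    e (Sum.inr i) * clW e = -(clW e * e (Sum.inr i)) := by
  have h2 := fun i j (hij : i ≠ j) => h.2 (Sum.inr i) (Sum.inr j) (by simpa using hij)
  unfold clW
  set e0 := e (Sum.inr 0); set e1 := e (Sum.inr 1); set e2 := e (Sum.inr 2)
  set e3 := e (Sum.inr 3)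
  have h01 : e1 * e0 = -(e0 * e1) := h2 _ _ (by decide)
  have h02 : e2 * e0 = -(e0 * e2) := h2 _ _ (by decide)
  have h03 : e3 * e0 = -(e0 * e3) := h2 _ _ (by decide)
  have h12 : e2 * e1 = -(e1 * e2) := h2 _ _ (by decide)
  have h13 : e3 * e1 = -(e1 * e3) := h2 _ _ (by decide)
  have h23 : e3 * e2 = -(e2 * e3) := h2 _ _ (by decide)
  fin_cases i
  · change e0 * (e0 * e1 * e2 * e3) = -((e0 * e1 * e2 * e3) * e0)
    calc _ = e0 * (e0 * e1 * e2 * e3) := rfl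
      _ = -(e0 * e1 * e2 * (-(e0 * e3))) + (e0 * (e0 * e1 * e2 * e3) - e0 * e1 * e2 * (e0 * e3)) := by
        noncomm_ring
      _ = -(e0 * e1 * e2 * (e3 * e0)) + (e0 * (e0 * e1 * e2 * e3) - e0 * e1 * (e2 * e0) * e3) := by
        rw [h03]; noncomm_ring
      _ = -(e0 * e1 * e2 * (e3 * e0)) + (e0 * (e0 * e1 * e2 * e3) + e0 * (e1 * e0) * e2 * e3) := by
        rw [h02]; noncomm_ring
      _ = _ := by rw [h01]; noncomm_ring
  · change e1 * (e0 * e1 * e2 * e3) = -((e0 * e1 * e2 * e3) * e1)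
    calc _ = (e1 * e0) * e1 * e2 * e3 := by noncomm_ring
      _ = -(e0 * e1 * (-(e2 * e1)) * e3) := by rw [h01, h12]; noncomm_ring
      _ = -(e0 * e1 * e2 * (-(e1 * e3))) := by noncomm_ring
      _ = -(e0 * e1 * e2 * (e3 * e1)) := by rw [h13]
      _ = _ := by noncomm_ring
  · change e2 * (e0 * e1 * e2 * e3) = -((e0 * e1 * e2 * e3) * e2)
    calc _ = (e2 * e0) * e1 * e2 * e3 := by noncomm_ring
      _ = -(e0 * (e2 * e1) * e2 * e3) := by rw [h02]; noncomm_ring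
      _ = -(e0 * e1 * e2 * (-(e2 * e3))) := by rw [h12]; noncomm_ring
      _ = -(e0 * e1 * e2 * (e3 * e2)) := by rw [h23]
      _ = _ := by noncomm_ring
  · change e3 * (e0 * e1 * e2 * e3) = -((e0 * e1 * e2 * e3) * e3)
    calc _ = (e3 * e0) * e1 * e2 * e3 := by noncomm_ring
      _ = -(e0 * (e3 * e1) * e2 * e3) := by rw [h03]; noncomm_ring
      _ = (e0 * e1 * (e3 * e2) * e3) := by rw [h13]; noncomm_ring
      _ = _ := by rw [h23]; noncomm_ring

/-- Flip the sign of four generators. -/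
def clFlip {R : Type*} [Ring R] {ι : Type*} (e : ι ⊕ Fin 4 → R) : ι ⊕ Fin 4 → R :=
  Sum.elim (fun i => e (Sum.inl i)) (fun i => e (Sum.inr i) * clW e)

theorem isCl_flip {R : Type*} [Ring R] {ι : Type*} {s : ι → ℤ} {a : ℤ} (ha : a * a = 1)
    {e : ι ⊕ Fin 4 → R} (h : IsCl (Sum.elim s (fun _ => a)) e) :
    IsCl (Sum.elim s (fun _ => -a)) (clFlip e) := by
  have hw := clW_sq ha h
  have hc := clW_comm h
  have hA := clW_anti h
  set w := clW e with hwdef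
  constructor
  · rintro (i | i)
    · exact h.1 (Sum.inl i)
    · have := h.1 (Sum.inr i)
      simp only [Sum.elim_inr] at this
      change e (Sum.inr i) * w * (e (Sum.inr i) * w) = ((-a : ℤ) : R)
      calc _ = (e (Sum.inr i) * w) * e (Sum.inr i) * w := by noncomm_ring
        _ = -(w * (e (Sum.inr i) * e (Sum.inr i)) * w) := by rw [hA]; noncomm_ring
        _ = -(w * (a : R) * w) := by rw [this]
        _ = -((a : R) * (w * w)) := by rw [← (Int.cast_commute a w).eq]; noncomm_ring
        _ = _ := by rw [hw]; simp
  · rintro (i | i) (j | j) hij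
    · exact h.2 _ _ hij
    · change e (Sum.inl i) * (e (Sum.inr j) * w) = -((e (Sum.inr j) * w) * e (Sum.inl i))
      rw [← mul_assoc, h.2 _ _ (by simp), mul_assoc (e (Sum.inr j)), ← hc, neg_mul]
      noncomm_ring
    · change (e (Sum.inr i) * w) * e (Sum.inl j) = -(e (Sum.inl j) * (e (Sum.inr i) * w))
      rw [mul_assoc, ← hc, ← mul_assoc, h.2 (Sum.inr i) (Sum.inl j) (by simp)]
      noncomm_ring
    · have hij' := h.2 _ _ hij
      change (e (Sum.inr i) * w) * (e (Sum.inr j) * w) = -((e (Sum.inr j) * w) * (e (Sum.inr i) * w))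
      have hA' : ∀ k, w * e (Sum.inr k) = -(e (Sum.inr k) * w) := fun k => by rw [hA k, neg_neg]
      have key : ∀ i j, (e (Sum.inr i) * w) * (e (Sum.inr j) * w) = -(e (Sum.inr i) * e (Sum.inr j)) := by
        intro i j
        calc _ = e (Sum.inr i) * (w * e (Sum.inr j)) * w := by noncomm_ring
          _ = -(e (Sum.inr i) * e (Sum.inr j) * (w * w)) := by rw [hA']; noncomm_ring
          _ = _ := by rw [hw, mul_one]
      rw [key, key, hij']

theorem isCl_restrict {V : Type*} [AddCommGroup V] [Module ℝ V] {ι : Type*} {s : ι → ℤ}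
    {e : ι → Module.End ℝ V} (h : IsCl s e) (p : Submodule ℝ V)
    (hp : ∀ i, ∀ v ∈ p, e i v ∈ p) : IsCl s (fun i => (e i).restrict (hp i)) := by
  constructor
  · intro i
    ext v
    have := LinearMap.congr_fun (h.1 i) v
    simpa using this
  · intro i j hij
    ext v
    have := LinearMap.congr_fun (h.2 i j hij) v
    simpa using this

/-- existence of a Clifford module of dimension `D`. -/
def HasCl {ι : Type} (s : ι → ℤ) (D : ℕ) : Prop :=
  ∃ (V : Type) (_ : AddCommGroup V) (_ : Module ℝ V) (_ : FiniteDimensional ℝ V)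
    (e : ι → Module.End ℝ V), IsCl s e ∧ Module.finrank ℝ V = D

theorem HasCl.comp {ι κ : Type} {s : ι → ℤ} {D : ℕ} (h : HasCl s D) (g : κ → ι)
    (hg : Function.Injective g) (t : κ → ℤ) (ht : ∀ k, t k = s (g k)) : HasCl t D := by
  obtain ⟨V, _, _, _, e, he, hD⟩ := h
  refine ⟨V, _, _, ‹_›, e ∘ g, ?_, hD⟩
  have : t = s ∘ g := funext ht
  rw [this]
  exact he.comp g hg

theorem HasCl.flip {ι : Type} {s : ι → ℤ} {a : ℤ} (ha : a * a = 1) {D : ℕ}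
    (h : HasCl (Sum.elim s (fun _ : Fin 4 => a)) D) : HasCl (Sum.elim s (fun _ : Fin 4 => -a)) D := by
  obtain ⟨V, _, _, _, e, he, hD⟩ := h
  exact ⟨V, _, _, ‹_›, clFlip e, isCl_flip ha he, hD⟩

theorem finrank_split {V : Type*} [AddCommGroup V] [Module ℝ V] [FiniteDimensional ℝ V]
    (e g : Module.End ℝ V) (he : e * e = 1) (hg : g * g = 1) (heg : e * g = -(g * e)) :
    Module.finrank ℝ V = 2 * Module.finrank ℝ (LinearMap.eqLocus g LinearMap.id) := by
  set p := LinearMap.eqLocus g LinearMap.id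
  have he' : ∀ v, e (e v) = v := fun v => LinearMap.congr_fun he v
  have hg' : ∀ v, g (g v) = v := fun v => LinearMap.congr_fun hg v
  have heg' : ∀ v, g (e v) = - e (g v) := fun v => by
    have := LinearMap.congr_fun heg v
    simp at this
    rw [this, neg_neg]
  have hp : ∀ v, v ∈ p ↔ g v = v := fun v => by simp [p, LinearMap.mem_eqLocus]
  let φ : (p × p) →ₗ[ℝ] V := LinearMap.coprod p.subtype (e ∘ₗ p.subtype)
  have hφ : ∀ a b : p, φ (a, b) = a + e b := fun a b => by simp [φ]
  have hinj : Function.Injective φ := by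
    rw [← LinearMap.ker_eq_bot, LinearMap.ker_eq_bot']
    rintro ⟨a, b⟩ hab
    rw [hφ] at hab
    have ha := (hp _).1 a.2
    have hb := (hp _).1 b.2
    have h2 : (a : V) - e b = 0 := by
      have := congrArg g hab
      rw [map_add, heg', ha, hb, map_zero] at this
      rw [sub_eq_add_neg]; exact this
    have h3 : (a : V) = 0 := by
      have h4 : (2 : ℝ) • (a : V) = 0 := by
        calc (2 : ℝ) • (a : V) = ((a : V) + e b) + (a - e b) := by rw [two_smul]; abel
          _ = 0 := by rw [hab, h2, add_zero]
      simpa using h4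
    have h5 : (b : V) = 0 := by
      rw [h3, zero_add] at hab
      rw [← he' b, hab, map_zero]
    ext <;> simp [h3, h5]
  have hsurj : Function.Surjective φ := by
    intro v
    refine ⟨(⟨(1/2 : ℝ) • (v + g v), ?_⟩, ⟨(1/2 : ℝ) • e (v - g v), ?_⟩), ?_⟩
    · rw [hp, map_smul, map_add, hg', add_comm]
    · rw [hp, map_smul, heg', map_sub, hg', ← map_neg, neg_sub]
    · rw [hφ]
      simp only [map_smul, he']
      rw [← smul_add, add_add_sub_cancel, ← two_smul ℝ v, smul_smul]
      norm_num
  rw [← (LinearEquiv.ofBijective φ ⟨hinj, hsurj⟩).finrank_eq, Module.finrank_prod, two_mul]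

theorem hasCl_split {ι : Type} {s : ι → ℤ} {V : Type} [AddCommGroup V] [Module ℝ V]
    [FiniteDimensional ℝ V] (e g : Module.End ℝ V) (he : e * e = 1) (hg : g * g = 1)
    (heg : e * g = -(g * e)) (x : ι → Module.End ℝ V) (hx : IsCl s x)
    (hxg : ∀ i, g * x i = x i * g) : ∃ D', Module.finrank ℝ V = 2 * D' ∧ HasCl s D' := by
  refine ⟨_, finrank_split e g he hg heg, _, _, _, inferInstance, _,
    isCl_restrict hx (LinearMap.eqLocus g LinearMap.id) ?_, rfl⟩
  intro i v hv
  have hv' : g v = v := hv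
  change g (x i v) = x i v
  have := LinearMap.congr_fun (hxg i) v
  simp at this
  rw [this, hv']

/-- `p` positive and `q` negative generators -/
def sgn (p q : ℕ) : Fin p ⊕ Fin q → ℤ := Sum.elim (fun _ => 1) (fun _ => -1)

theorem HasCl.halve {p q D : ℕ} (h : HasCl (sgn (p+1) (q+1)) D) :
    ∃ D', D = 2 * D' ∧ HasCl (sgn p q) D' := by
  obtain ⟨V, _, _, _, e, he, rfl⟩ := h
  have he1 : e (Sum.inl (Fin.last p)) * e (Sum.inl (Fin.last p)) = 1 := by
    rw [he.1]; simp [sgn]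
  have hf1 : e (Sum.inr (Fin.last q)) * e (Sum.inr (Fin.last q)) = -1 := by
    rw [he.1]; simp [sgn]
  have hef := he.2 (Sum.inl (Fin.last p)) (Sum.inr (Fin.last q)) (by simp)
  set a := e (Sum.inl (Fin.last p))
  set b := e (Sum.inr (Fin.last q))
  refine hasCl_split a (a * b) he1 ?_ ?_ (e ∘ Sum.map Fin.castSucc Fin.castSucc) ?_ ?_
  · calc a * b * (a * b) = (a * b) * a * b := by noncomm_ring
      _ = -(b * (a * a) * b) := by rw [hef]; noncomm_ring
      _ = 1 := by rw [he1, mul_one, hf1, neg_neg]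
  · rw [hef]; noncomm_ring
    rw [← mul_assoc, hef]; noncomm_ring
  · have := he.comp (Sum.map (Fin.castSucc : Fin p → _) (Fin.castSucc : Fin q → _))
      (Function.Injective.sumMap (Fin.castSucc_injective _) (Fin.castSucc_injective _))
    convert this using 1
    funext i; rcases i with i | i <;> rfl
  · intro i
    have h1 : (e ∘ Sum.map Fin.castSucc Fin.castSucc) i * a =
        -(a * (e ∘ Sum.map Fin.castSucc Fin.castSucc) i) := by
      apply he.2
      rcases i with i | i
      · simpa using (Fin.castSucc_lt_last i).ne
      · simp
    have h2 : (e ∘ Sum.map Fin.castSucc Fin.castSucc) i * b =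
        -(b * (e ∘ Sum.map Fin.castSucc Fin.castSucc) i) := by
      apply he.2
      rcases i with i | i
      · simp
      · simpa using (Fin.castSucc_lt_last i).ne
    set x := (e ∘ Sum.map Fin.castSucc Fin.castSucc) i
    calc a * b * x = a * (b * x) := by noncomm_ring
      _ = -(a * (x * b)) := by rw [h2]; noncomm_ring
      _ = -((a * x) * b) := by noncomm_ring
      _ = (x * a) * b := by rw [h1]; noncomm_ring
      _ = _ := by noncomm_ring

theorem HasCl.even_part {p D : ℕ} (h : HasCl (sgn (p+2) 0) D) :
    ∃ D', D = 2 * D' ∧ HasCl (sgn 0 p) D' := by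
  obtain ⟨V, _, _, _, e, he, rfl⟩ := h
  have hs : ∀ i, e i * e i = 1 := fun i => by
    rw [he.1]; rcases i with i | i
    · simp [sgn]
    · exact i.elim0
  have hne : ∀ i : Fin p, (Fin.last (p+1)) ≠ i.castSucc.castSucc := fun i =>
    (Fin.castSucc_lt_last _).ne'
  have hne2 : ∀ i : Fin p, (Fin.last p).castSucc ≠ i.castSucc.castSucc := fun i => by
    simpa [Fin.ext_iff] using i.2.ne'
  have hne3 : (Fin.last (p+1)) ≠ (Fin.last p).castSucc := (Fin.castSucc_lt_last _).ne'
  set a := e (Sum.inl (Fin.last (p+1))) with ha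
  set b := e (Sum.inl (Fin.last p).castSucc) with hb
  have hab : b * a = -(a * b) := he.2 _ _ (by simpa using hne3.symm)
  let y : Fin p → Module.End ℝ V := fun i => e (Sum.inl i.castSucc.castSucc)
  have hya : ∀ i, y i * a = -(a * y i) := fun i => he.2 _ _ (by simpa using (hne i).symm)
  have hyb : ∀ i, y i * b = -(b * y i) := fun i => he.2 _ _ (by simpa using (hne2 i).symm)
  have hyy : ∀ i j, i ≠ j → y i * y j = -(y j * y i) := fun i j hij => he.2 _ _ (by simpa using hij)
  have hys : ∀ i, y i * y i = 1 := fun i => hs _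
  have hkey : ∀ i j, (b * y i) * (b * y j) = -(y i * y j) := fun i j => by
    calc _ = b * (y i * b) * y j := by noncomm_ring
      _ = -((b * b) * (y i * y j)) := by rw [hyb]; noncomm_ring
      _ = _ := by rw [hs, one_mul]
  refine hasCl_split b a (hs _) (hs _) hab (Sum.elim Fin.elim0 (fun i => b * y i)) ?_ ?_
  · constructor
    · rintro (i | i)
      · exact i.elim0
      · simp only [Sum.elim_inr, sgn]
        rw [hkey, hys]; simp
    · rintro (i | i) (j | j) hij
      · exact i.elim0
      · exact i.elim0
      · exact j.elim0
      · simp only [Sum.elim_inr]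
        rw [hkey, hkey, hyy i j (by simpa using hij)]
  · rintro (i | i)
    · exact i.elim0
    · simp only [Sum.elim_inr]
      calc a * (b * y i) = (a * b) * y i := by noncomm_ring
        _ = -(b * (a * y i)) := by rw [← neg_eq_iff_eq_neg.mpr hab]; noncomm_ring
        _ = _ := by rw [← neg_eq_iff_eq_neg.mpr (hya i)]; noncomm_ring

theorem HasCl.flip_neg {p q D : ℕ} (h : HasCl (sgn (p+4) q) D) : HasCl (sgn p (q+4)) D := by
  have h1 : HasCl (Sum.elim (sgn p q) (fun _ : Fin 4 => 1)) D := by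
    refine h.comp (Sum.elim (Sum.map (Fin.castAdd 4) id) (fun k => Sum.inl (Fin.natAdd p k))) ?_ _ ?_
    · rintro ((i | i) | i) ((j | j) | j) hij <;> simp [Fin.ext_iff] at hij ⊢ <;> omega
    · rintro ((i | i) | i) <;> simp [sgn]
  have h2 := h1.flip (by norm_num)
  refine h2.comp (Sum.elim (fun i => Sum.inl (Sum.inl i))
    (fun j => Fin.addCases (fun i => Sum.inl (Sum.inr i)) (fun i => Sum.inr i) j)) ?_ _ ?_
  · rintro (i | i) (j | j) hij
    · simpa using hij
    · induction j using Fin.addCases <;> simp at hij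
    · induction i using Fin.addCases <;> simp at hij
    · induction j using Fin.addCases <;> induction i using Fin.addCases <;> simp at hij ⊢ <;> exact hij
  · rintro (i | i)
    · simp [sgn]
    · induction i using Fin.addCases <;> simp [sgn]

theorem HasCl.flip_pos {p q D : ℕ} (h : HasCl (sgn p (q+4)) D) : HasCl (sgn (p+4) q) D := by
  have h1 : HasCl (Sum.elim (sgn p q) (fun _ : Fin 4 => -1)) D := by
    refine h.comp (Sum.elim (Sum.map id (Fin.castAdd 4)) (fun k => Sum.inr (Fin.natAdd q k))) ?_ _ ?_
    · rintro ((i | i) | i) ((j | j) | j) hij <;> simp [Fin.ext_iff] at hij ⊢ <;> omega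
    · rintro ((i | i) | i) <;> simp [sgn]
  have h2 := h1.flip (by norm_num)
  refine h2.comp (Sum.elim 
    (fun j => Fin.addCases (fun i => Sum.inl (Sum.inl i)) (fun i => Sum.inr i) j)
      (fun i => Sum.inl (Sum.inr i))) ?_ _ ?_
  · rintro (i | i) (j | j) hij
    · induction j using Fin.addCases <;> induction i using Fin.addCases <;> simp at hij ⊢ <;> exact hij
    · induction i using Fin.addCases <;> simp at hij
    · induction j using Fin.addCases <;> simp at hij
    · simpa using hij
  · rintro (i | i)
    · induction i using Fin.addCases <;> simp [sgn]
    · simp [sgn]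

theorem HasCl.mono {p q p' D : ℕ} (h : HasCl (sgn p q) D) (hp : p' ≤ p) : HasCl (sgn p' q) D := by
  refine h.comp (Sum.map (Fin.castLE hp) id) ?_ _ ?_
  · exact Function.Injective.sumMap (Fin.castLE_injective hp) Function.injective_id
  · rintro (i | i) <;> rfl

theorem HasCl.even_of_complex {D : ℕ} (h : HasCl (sgn 0 1) D) : 2 ∣ D := by
  obtain ⟨V, _, _, _, e, he, rfl⟩ := h
  have h1 : e (Sum.inr 0) * e (Sum.inr 0) = -1 := by rw [he.1]; simp [sgn]
  have h2 := congrArg LinearMap.det h1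
  rw [map_mul] at h2
  have h3 : LinearMap.det (-1 : Module.End ℝ V) = (-1) ^ Module.finrank ℝ V := by
    have := LinearMap.det_smul (-1 : ℝ) (1 : Module.End ℝ V)
    simpa using this
  rw [h3] at h2
  rcases Nat.even_or_odd (Module.finrank ℝ V) with h | h
  · exact h.two_dvd
  · rw [h.neg_one_pow] at h2
    nlinarith [mul_self_nonneg (LinearMap.det (e (Sum.inr 0)))]

theorem HasCl.four_of_quat {D : ℕ} (h : HasCl (sgn 0 2) D) : 4 ∣ D := by
  obtain ⟨V, _, _, _, e, he, rfl⟩ := h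
  have h1 : e (Sum.inr 0) * e (Sum.inr 0) = -1 := by rw [he.1]; simp [sgn]
  have h2 : e (Sum.inr 1) * e (Sum.inr 1) = -1 := by rw [he.1]; simp [sgn]
  have h3 := he.2 (Sum.inr 1) (Sum.inr 0) (by simp)
  let B : QuaternionAlgebra.Basis (Module.End ℝ V) (-1 : ℝ) 0 (-1) :=
    { i := e (Sum.inr 0), j := e (Sum.inr 1), k := e (Sum.inr 0) * e (Sum.inr 1)
      i_mul_i := by simp [h1], j_mul_j := by simp [h2]
      i_mul_j := rfl, j_mul_i := by simp [h3] }
  letI : Module (Quaternion ℝ) V := Module.compHom V B.liftHom.toRingHom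
  haveI : IsScalarTower ℝ (Quaternion ℝ) V := ⟨fun r q v => by
    change B.liftHom (r • q) v = r • (B.liftHom q v)
    exact LinearMap.congr_fun (B.liftHom.toLinearMap.map_smul r q) v⟩
  have := Module.finrank_mul_finrank ℝ (Quaternion ℝ) V
  rw [Quaternion.finrank_eq_four] at this
  exact ⟨_, this.symm⟩

/-- exponents of two -/
def hrBeta (m : ℕ) : ℕ := 4 * (m / 8) + (![0,0,1,2,3,3,4,4] : Fin 8 → ℕ) ⟨m % 8, Nat.mod_lt _ (by norm_num)⟩

theorem HasCl.step8 {m D : ℕ} (h : HasCl (sgn (m+8) 0) D) : ∃ D', D = 16 * D' ∧ HasCl (sgn m 0) D' := by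
  have h1 : HasCl (sgn (m+4) (0+4)) D := HasCl.flip_neg h
  obtain ⟨D1, e1, h1⟩ := HasCl.halve (p := m+3) (q := 3) h1
  obtain ⟨D2, e2, h2⟩ := HasCl.halve (p := m+2) (q := 2) h1
  obtain ⟨D3, e3, h3⟩ := HasCl.halve (p := m+1) (q := 1) h2
  obtain ⟨D4, e4, h4⟩ := HasCl.halve (p := m) (q := 0) h3
  exact ⟨D4, by omega, h4⟩

theorem HasCl.beta_dvd (m : ℕ) : ∀ {D : ℕ}, HasCl (sgn m 0) D → 2 ^ hrBeta m ∣ D := by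
  induction m using Nat.strong_induction_on with
  | _ m ih =>
    intro D h
    by_cases hm : 8 ≤ m
    · obtain ⟨m, rfl⟩ := Nat.exists_eq_add_of_le' hm
      obtain ⟨D', rfl, h'⟩ := h.step8
      have := ih m (by omega) h'
      have hb : hrBeta (m+8) = hrBeta m + 4 := by
        unfold hrBeta
        have h1 : (m+8)/8 = m/8+1 := by omega
        have h2 : (m+8)%8 = m%8 := by omega
        simp only [h1, h2]; ring
      rw [hb, pow_add, mul_comm]
      exact mul_dvd_mul (by norm_num) this
    · have q2 : ∀ {D}, HasCl (sgn 2 0) D → 2 ∣ D := fun h => by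
        obtain ⟨D', rfl, h'⟩ := HasCl.even_part (p := 0) h
        exact ⟨_, rfl⟩
      have q3 : ∀ {D}, HasCl (sgn 3 0) D → 4 ∣ D := fun h => by
        obtain ⟨D', rfl, h'⟩ := HasCl.even_part (p := 1) h
        have := h'.even_of_complex
        omega
      have q4 : ∀ {D}, HasCl (sgn 4 0) D → 8 ∣ D := fun h => by
        obtain ⟨D', rfl, h'⟩ := HasCl.even_part (p := 2) h
        have := h'.four_of_quat
        omega
      have q6 : ∀ {D}, HasCl (sgn 6 0) D → 16 ∣ D := fun h => by
        obtain ⟨D', rfl, h'⟩ := HasCl.even_part (p := 4) h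
        have := q4 (HasCl.flip_pos (p := 0) (q := 0) h')
        omega
      have : m = 0 ∨ m = 1 ∨ m = 2 ∨ m = 3 ∨ m = 4 ∨ m = 5 ∨ m = 6 ∨ m = 7 := by omega
      rcases this with rfl | rfl | rfl | rfl | rfl | rfl | rfl | rfl
      · simp [hrBeta]
      · simp [hrBeta]
      · exact q2 h
      · exact q3 h
      · exact q4 h
      · exact q4 (h.mono (by norm_num))
      · exact q6 h
      · exact q6 (h.mono (by norm_num))

theorem HasCl.beta_dvd' {m D : ℕ} (h : HasCl (sgn (m+1) 1) D) : 2 ^ (hrBeta m + 1) ∣ D := by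
  obtain ⟨D', rfl, h'⟩ := HasCl.halve (p := m) (q := 0) h
  rw [pow_succ, mul_comm]
  exact mul_dvd_mul_left _ h'.beta_dvd

theorem rho_iff (N : ℕ) (hN : 1 ≤ N) (m : ℕ) :
    2 ^ hrBeta m ∣ N ↔ ((m + 1 : ℕ) : ℤ) ≤ hrRho ((N : ℚ) / 2) + 2 := by
  have h1 : padicValRat 2 ((N : ℚ) / 2) = (padicValNat 2 N : ℤ) - 1 := by
    rw [padicValRat.div (by exact_mod_cast (by omega : N ≠ 0)) (by norm_num), padicValRat.of_nat]
    congr 1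
    exact padicValRat.self (by norm_num)
  rw [padicValNat_dvd_iff_le (by omega), hrRho, h1]
  generalize padicValNat 2 N = v
  obtain ⟨b, t, ht, rfl⟩ : ∃ b t, t < 8 ∧ m = 8 * b + t := ⟨m / 8, m % 8, by omega, by omega⟩
  obtain ⟨a, r, hr, rfl⟩ : ∃ a r, r < 4 ∧ v = 4 * a + r := ⟨v / 4, v % 4, by omega, by omega⟩
  have hb1 : (8 * b + t) / 8 = b := by omega
  have hb2 : (8 * b + t) % 8 = t := by omega
  unfold hrBeta
  simp only [hb1, hb2]
  interval_cases r
  · have e1 : (((4 * a + 0 : ℕ) : ℤ) - 1) / 4 = a - 1 := by omega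
    have e2 : (((4 * a + 0 : ℕ) : ℤ) - 1) % 4 = 3 := by omega
    rw [e1, e2]
    interval_cases t <;> simp <;> omega
  · have e1 : (((4 * a + 1 : ℕ) : ℤ) - 1) / 4 = a := by omega
    have e2 : (((4 * a + 1 : ℕ) : ℤ) - 1) % 4 = 0 := by omega
    rw [e1, e2]
    interval_cases t <;> simp <;> omega
  · have e1 : (((4 * a + 2 : ℕ) : ℤ) - 1) / 4 = a := by omega
    have e2 : (((4 * a + 2 : ℕ) : ℤ) - 1) % 4 = 1 := by omega
    rw [e1, e2]
    interval_cases t <;> simp <;> omega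
  · have e1 : (((4 * a + 3 : ℕ) : ℤ) - 1) / 4 = a := by omega
    have e2 : (((4 * a + 3 : ℕ) : ℤ) - 1) % 4 = 2 := by omega
    rw [e1, e2]
    interval_cases t <;> simp <;> omega

/-- orthogonal matrix Clifford systems. -/
def HasM {ι : Type} (s : ι → ℤ) (D : ℕ) : Prop :=
  ∃ (κ : Type) (_ : Fintype κ) (_ : DecidableEq κ) (e : ι → Matrix κ κ ℝ),
    IsCl s e ∧ (∀ i, (e i)ᵀ = (s i : Matrix κ κ ℝ) * e i) ∧ Fintype.card κ = D

theorem HasM.comp {ι κ : Type} {s : ι → ℤ} {D : ℕ} (h : HasM s D) (g : κ → ι)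
    (hg : Function.Injective g) (t : κ → ℤ) (ht : ∀ k, t k = s (g k)) : HasM t D := by
  obtain ⟨V, _, _, e, he, hT, hD⟩ := h
  refine ⟨V, inferInstance, inferInstance, e ∘ g, ?_, ?_, hD⟩
  · have : t = s ∘ g := funext ht
    rw [this]
    exact he.comp g hg
  · intro i
    rw [ht]; exact hT _

theorem HasM.flip {ι : Type} {s : ι → ℤ} {a : ℤ} (ha : a * a = 1) {D : ℕ}
    (h : HasM (Sum.elim s (fun _ : Fin 4 => a)) D) : HasM (Sum.elim s (fun _ : Fin 4 => -a)) D := by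
  obtain ⟨V, _, _, e, he, hT, hD⟩ := h
  refine ⟨V, inferInstance, inferInstance, clFlip e, isCl_flip ha he, ?_, hD⟩
  have hA := clW_anti he
  have h2 := fun i j (hij : i ≠ j) => he.2 (Sum.inr i) (Sum.inr j) (by simpa using hij)
  have hTr : ∀ i, (e (Sum.inr i))ᵀ = (a : Matrix V V ℝ) * e (Sum.inr i) := fun i => hT (Sum.inr i)
  have haR : (a : Matrix V V ℝ) * a = 1 := by exact_mod_cast congrArg (Int.cast : ℤ → Matrix V V ℝ) ha
  have hc : ∀ x : Matrix V V ℝ, x * (a : Matrix V V ℝ) = a * x := fun x => (Int.cast_commute a x).eq.symm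
  have hw : (clW e)ᵀ = clW e := by
    unfold clW
    rw [transpose_mul, transpose_mul, transpose_mul, hTr, hTr, hTr, hTr]
    set e0 := e (Sum.inr 0); set e1 := e (Sum.inr 1); set e2 := e (Sum.inr 2)
    set e3 := e (Sum.inr 3)
    have h01 : e1 * e0 = -(e0 * e1) := h2 _ _ (by decide)
    have h02 : e2 * e0 = -(e0 * e2) := h2 _ _ (by decide)
    have h03 : e3 * e0 = -(e0 * e3) := h2 _ _ (by decide)
    have h12 : e2 * e1 = -(e1 * e2) := h2 _ _ (by decide)
    have h13 : e3 * e1 = -(e1 * e3) := h2 _ _ (by decide)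
    have h23 : e3 * e2 = -(e2 * e3) := h2 _ _ (by decide)
    calc (a : Matrix V V ℝ) * e3 * (a * e2 * (a * e1 * (a * e0)))
        = a * (e3 * a) * e2 * a * (e1 * a) * e0 := by noncomm_ring
      _ = (a * a) * e3 * (e2 * a) * a * e1 * e0 := by rw [hc e3, hc e1]; noncomm_ring
      _ = (a * a) * (e3 * a) * e2 * a * e1 * e0 := by rw [hc e2]; noncomm_ring
      _ = (a * a) * a * e3 * (e2 * a) * e1 * e0 := by rw [hc e3]; noncomm_ring
      _ = (a * a) * a * (e3 * a) * e2 * e1 * e0 := by rw [hc e2]; noncomm_ring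
      _ = (a * a) * (a * a) * (e3 * e2 * e1 * e0) := by rw [hc e3]; noncomm_ring
      _ = e3 * (e2 * (e1 * e0)) := by rw [haR]; noncomm_ring
      _ = -(e3 * (e2 * e0) * e1) := by rw [h01]; noncomm_ring
      _ = (e3 * e0) * (e2 * e1) := by rw [h02]; noncomm_ring
      _ = e0 * (e3 * e1) * e2 := by rw [h03, h12]; noncomm_ring
      _ = -(e0 * e1 * (e3 * e2)) := by rw [h13]; noncomm_ring
      _ = _ := by rw [h23]; noncomm_ring
  rintro (i | i)
  · exact hT (Sum.inl i)
  · change (e (Sum.inr i) * clW e)ᵀ = ((-a : ℤ) : Matrix V V ℝ) * (e (Sum.inr i) * clW e)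
    rw [transpose_mul, hw, hTr, ← mul_assoc, hc, mul_assoc, hA]
    push_cast; noncomm_ring

theorem HasM.flip_pos {p q D : ℕ} (h : HasM (sgn p (q+4)) D) : HasM (sgn (p+4) q) D := by
  have h1 : HasM (Sum.elim (sgn p q) (fun _ : Fin 4 => -1)) D := by
    refine h.comp (Sum.elim (Sum.map id (Fin.castAdd 4)) (fun k => Sum.inr (Fin.natAdd q k))) ?_ _ ?_
    · rintro ((i | i) | i) ((j | j) | j) hij <;> simp [Fin.ext_iff] at hij ⊢ <;> omega
    · rintro ((i | i) | i) <;> simp [sgn]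
  have h2 := h1.flip (by norm_num)
  refine h2.comp (Sum.elim 
    (fun j => Fin.addCases (fun i => Sum.inl (Sum.inl i)) (fun i => Sum.inr i) j)
      (fun i => Sum.inl (Sum.inr i))) ?_ _ ?_
  · rintro (i | i) (j | j) hij
    · induction j using Fin.addCases <;> induction i using Fin.addCases <;> simp at hij ⊢ <;> exact hij
    · induction i using Fin.addCases <;> simp at hij
    · induction j using Fin.addCases <;> simp at hij
    · simpa using hij
  · rintro (i | i)
    · induction i using Fin.addCases <;> simp [sgn]
    · simp [sgn]

theorem HasM.mono {p q p' q' D : ℕ} (h : HasM (sgn p q) D) (hp : p' ≤ p) (hq : q' ≤ q) :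
    HasM (sgn p' q') D := by
  refine h.comp (Sum.map (Fin.castLE hp) (Fin.castLE hq)) ?_ _ ?_
  · exact Function.Injective.sumMap (Fin.castLE_injective hp) (Fin.castLE_injective hq)
  · rintro (i | i) <;> rfl

/-- doubled generators -/
def dbl {ι κ : Type} [DecidableEq κ] (e : ι → Matrix κ κ ℝ) :
    ι ⊕ Fin 2 → Matrix (κ ⊕ κ) (κ ⊕ κ) ℝ :=
  Sum.elim (fun i => fromBlocks (e i) 0 0 (-(e i))) ![fromBlocks 0 1 1 0, fromBlocks 0 (-1) 1 0]

theorem isCl_dbl {ι κ : Type} [Fintype κ] [DecidableEq κ] {s : ι → ℤ} {e : ι → Matrix κ κ ℝ}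
    (he : IsCl s e) : IsCl (Sum.elim s ![1, -1]) (dbl e) := by
  constructor
  · rintro (i | i)
    · simp only [dbl, Sum.elim_inl, fromBlocks_multiply, he.1]
      have : ((s i : ℤ) : Matrix (κ ⊕ κ) (κ ⊕ κ) ℝ) = fromBlocks (s i : Matrix κ κ ℝ) 0 0 (s i) := by
        ext (a | a) (b | b) <;> simp [Matrix.intCast_apply]
      rw [this]; simp [he.1]
    · fin_cases i
      · simp [dbl, fromBlocks_multiply]
      · simp only [dbl, fromBlocks_multiply]
        simp [dbl, fromBlocks_multiply, ← fromBlocks_one, fromBlocks_neg]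
  · rintro (i | i) (j | j) hij
    · have := he.2 i j (by simpa using hij)
      simp [dbl, fromBlocks_multiply, this, fromBlocks_neg]
    · fin_cases j <;> simp [dbl, fromBlocks_multiply, fromBlocks_neg]
    · fin_cases i <;> simp [dbl, fromBlocks_multiply, fromBlocks_neg]
    · fin_cases i <;> fin_cases j <;> simp [dbl, fromBlocks_multiply, fromBlocks_neg] at hij ⊢

theorem dbl_transpose {ι κ : Type} [Fintype κ] [DecidableEq κ] {s : ι → ℤ} {e : ι → Matrix κ κ ℝ}
    (hT : ∀ i, (e i)ᵀ = (s i : Matrix κ κ ℝ) * e i) (i : ι ⊕ Fin 2) :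
    (dbl e i)ᵀ = (Sum.elim s ![1, -1] i : ℤ) * dbl e i := by
  rcases i with i | i
  · have : ((s i : ℤ) : Matrix (κ ⊕ κ) (κ ⊕ κ) ℝ) = fromBlocks (s i : Matrix κ κ ℝ) 0 0 (s i) := by
      ext (a | a) (b | b) <;> simp [Matrix.intCast_apply]
    simp [dbl, fromBlocks_transpose, this, hT, fromBlocks_multiply]
  · fin_cases i <;> simp [dbl, fromBlocks_transpose, fromBlocks_neg]

theorem HasM.double {p q D : ℕ} (h : HasM (sgn p q) D) : HasM (sgn (p+1) (q+1)) (2 * D) := by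
  obtain ⟨κ, _, _, e, he, hT, hD⟩ := h
  have : HasM (Sum.elim (sgn p q) ![1, -1]) (2 * D) :=
    ⟨κ ⊕ κ, _, inferInstance, dbl e, isCl_dbl he, dbl_transpose hT, by rw [Fintype.card_sum, hD, two_mul]⟩
  refine this.comp (Sum.elim (Fin.lastCases (Sum.inr 0) (fun i => Sum.inl (Sum.inl i)))
    (Fin.lastCases (Sum.inr 1) (fun i => Sum.inl (Sum.inr i)))) ?_ _ ?_
  · rintro (i | i) (j | j) hij <;> induction i using Fin.lastCases <;> induction j using Fin.lastCases <;>
      simp at hij ⊢ <;> exact hij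
  · rintro (i | i) <;> induction i using Fin.lastCases <;> simp [sgn]

theorem HasM.mul {ι : Type} {s : ι → ℤ} {D : ℕ} (h : HasM s D) (k : ℕ) : HasM s (D * k) := by
  obtain ⟨κ, _, _, e, he, hT, hD⟩ := h
  let φ : Matrix κ κ ℝ →+* Matrix (κ × Fin k) (κ × Fin k) ℝ :=
    (blockDiagonalRingHom κ (Fin k) ℝ).comp (Pi.constRingHom (Fin k) (Matrix κ κ ℝ))
  refine ⟨κ × Fin k, inferInstance, inferInstance, fun i => φ (e i), ⟨?_, ?_⟩, ?_, by simp [hD]⟩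
  · intro i
    rw [← map_mul, he.1, map_intCast]
  · intro i j hij
    rw [← map_mul, he.2 i j hij, map_neg, map_mul]
  · intro i
    rw [← map_intCast φ, ← map_mul, ← hT]
    exact blockDiagonal_transpose _

theorem hasM_base : HasM (sgn 1 0) 1 := by
  refine ⟨Unit, inferInstance, inferInstance, fun _ => 1, ⟨?_, ?_⟩, ?_, by simp⟩
  · rintro (i | i)
    · simp [sgn]
    · exact i.elim0
  · rintro (i | i) (j | j) hij
    · exact absurd (by rw [Subsingleton.elim i j]) hij
    · exact j.elim0
    · exact i.elim0
    · exact i.elim0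
  · rintro (i | i)
    · simp [sgn]
    · exact i.elim0

theorem hasM_three : HasM (sgn 3 0) 4 :=
  (HasM.double (p := 2) (q := 1) (HasM.double (p := 1) (q := 0) hasM_base)).mono le_rfl (by norm_num)

theorem hasM_quat : HasM (sgn 0 3) 4 := by
  obtain ⟨κ, _, _, e, he, hT, hD⟩ := hasM_three
  have hs : ∀ i, e (Sum.inl i) * e (Sum.inl i) = 1 := fun i => by rw [he.1]; simp [sgn]
  have ht : ∀ i, (e (Sum.inl i))ᵀ = e (Sum.inl i) := fun i => by rw [hT]; simp [sgn]
  have h01 := he.2 (Sum.inl 1) (Sum.inl 0) (by simp)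
  have h02 := he.2 (Sum.inl 2) (Sum.inl 0) (by simp)
  have h12 := he.2 (Sum.inl 2) (Sum.inl 1) (by simp)
  have s0 := hs 0; have s1 := hs 1; have s2 := hs 2
  have t0 := ht 0; have t1 := ht 1; have t2 := ht 2
  set a := e (Sum.inl 0); set b := e (Sum.inl 1); set c := e (Sum.inl 2)
  have sq : ∀ x y : Matrix κ κ ℝ, x * x = 1 → y * y = 1 → y * x = -(x * y) →
      (x * y) * (x * y) = -1 := fun x y hx hy hxy => by
    calc _ = x * (y * x) * y := by noncomm_ring
      _ = -((x * x) * (y * y)) := by rw [hxy]; noncomm_ring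
      _ = _ := by rw [hx, hy, one_mul]
  have m12 : (a * b) * (a * c) = -(b * c) := by
    calc _ = a * (b * a) * c := by noncomm_ring
      _ = -((a * a) * (b * c)) := by rw [h01]; noncomm_ring
      _ = _ := by rw [s0, one_mul]
  have m21 : (a * c) * (a * b) = (b * c) := by
    calc _ = a * (c * a) * b := by noncomm_ring
      _ = -((a * a) * (c * b)) := by rw [h02]; noncomm_ring
      _ = _ := by rw [s0, one_mul, h12, neg_neg]
  have m13 : (a * b) * (b * c) = a * c := by
    calc _ = a * (b * b) * c := by noncomm_ring
      _ = _ := by rw [s1, mul_one]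
  have m31 : (b * c) * (a * b) = -(a * c) := by
    calc _ = b * (c * a) * b := by noncomm_ring
      _ = -((b * a) * (c * b)) := by rw [h02]; noncomm_ring
      _ = -(a * (b * b) * c) := by rw [h01, h12]; noncomm_ring
      _ = _ := by rw [s1, mul_one]
  have m23 : (a * c) * (b * c) = -(a * b) := by
    calc _ = a * (c * b) * c := by noncomm_ring
      _ = -(a * b * (c * c)) := by rw [h12]; noncomm_ring
      _ = _ := by rw [s2, mul_one]
  have m32 : (b * c) * (a * c) = a * b := by
    calc _ = b * (c * a) * c := by noncomm_ring
      _ = -((b * a) * (c * c)) := by rw [h02]; noncomm_ring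
      _ = _ := by rw [s2, mul_one, h01, neg_neg]
  refine ⟨κ, inferInstance, inferInstance, Sum.elim Fin.elim0 ![a * b, a * c, b * c], ⟨?_, ?_⟩, ?_, hD⟩
  · rintro (i | i)
    · exact i.elim0
    · fin_cases i
      · simpa [sgn] using sq a b s0 s1 h01
      · simpa [sgn] using sq a c s0 s2 h02
      · simpa [sgn] using sq b c s1 s2 h12
  · rintro (i | i) (j | j) hij
    · exact j.elim0
    · exact i.elim0
    · exact j.elim0
    · fin_cases i <;> fin_cases j <;> simp at hij ⊢ <;>
        simp only [m12, m21, m13, m31, m23, m32, neg_neg]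
  · rintro (i | i)
    · exact i.elim0
    · fin_cases i <;> simp [sgn, transpose_mul, t0, t1, t2, h01, h02, h12]

theorem HasM.period {m D : ℕ} (h : HasM (sgn m 0) D) : HasM (sgn (m+8) 0) (16 * D) := by
  have := HasM.flip_pos (q := 0) h.double.double.double.double
  have e : 16 * D = 2 * (2 * (2 * (2 * D))) := by ring
  rw [e]; exact this

theorem hasM_beta (m : ℕ) : HasM (sgn m 0) (2 ^ hrBeta m) := by
  induction m using Nat.strong_induction_on with
  | _ m ih =>
    by_cases hm : 8 ≤ m
    · obtain ⟨m, rfl⟩ := Nat.exists_eq_add_of_le' hm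
      have := (ih m (by omega)).period
      have hb : hrBeta (m+8) = hrBeta m + 4 := by
        unfold hrBeta
        have h1 : (m+8)/8 = m/8+1 := by omega
        have h2 : (m+8)%8 = m%8 := by omega
        simp only [h1, h2]; ring
      rw [hb, pow_add, mul_comm]
      exact this
    · have h5 : HasM (sgn 5 0) 8 := HasM.flip_pos (p := 1) (q := 0) hasM_quat.double
      have h8 : HasM (sgn 8 0) 16 := HasM.period (m := 0) (D := 1) (hasM_base.mono (by norm_num) le_rfl)
      have : m = 0 ∨ m = 1 ∨ m = 2 ∨ m = 3 ∨ m = 4 ∨ m = 5 ∨ m = 6 ∨ m = 7 := by omega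
      rcases this with rfl | rfl | rfl | rfl | rfl | rfl | rfl | rfl
      · exact hasM_base.mono (by norm_num) le_rfl
      · exact hasM_base
      · exact hasM_base.double.mono le_rfl (by norm_num)
      · exact hasM_three
      · exact h5.mono (by norm_num) le_rfl
      · exact h5
      · exact h8.mono (by norm_num) le_rfl
      · exact h8.mono (by norm_num) le_rfl

theorem hr_construct (N : ℕ) (hN : 1 ≤ N) (n : ℕ) (h : (n : ℤ) ≤ hrRho ((N : ℚ) / 2) + 2) :
    ∃ f : EuclideanSpace ℝ (Fin n) →ₗ[ℝ]
          Matrix (Fin N ⊕ Fin N) (Fin N ⊕ Fin N) ℝ,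
        ∀ v, (f v)ᵀ = f v ∧ (f v)ᵀ * Jreal N + Jreal N * f v = 0 ∧
          (f v) ^ 2 = (‖v‖ ^ 2 : ℝ) • (1 : Matrix (Fin N ⊕ Fin N) (Fin N ⊕ Fin N) ℝ) := by
  rcases n with _ | m
  · refine ⟨0, fun v => ?_⟩
    have : v = 0 := Subsingleton.elim _ _
    subst this
    simp
  obtain ⟨k, hk⟩ := (rho_iff N hN m).2 h
  have hM := (hasM_beta m).mul k
  rw [← hk] at hM
  obtain ⟨κ, _, _, e, he, hT, hD⟩ := hM
  let σ : κ ≃ Fin N := Fintype.equivFinOfCardEq hD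
  let φ := Matrix.reindexAlgEquiv ℝ ℝ σ
  let E : Fin m → Matrix (Fin N) (Fin N) ℝ := fun i => φ (e (Sum.inl i))
  have hs : ∀ i, E i * E i = 1 := fun i => by
    simp only [E]; rw [← map_mul, he.1]; simp [sgn]
  have hanti : ∀ i j, i ≠ j → E i * E j + E j * E i = 0 := fun i j hij => by
    simp only [E]; rw [← map_mul, he.2 _ _ (by simpa using hij), map_neg, map_mul, neg_add_cancel]
  have ht : ∀ i, (E i)ᵀ = E i := fun i => by
    have := hT (Sum.inl i)
    simp [sgn] at this
    simp only [E, φ, Matrix.reindexAlgEquiv_apply, Matrix.transpose_reindex, this]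
  let A : EuclideanSpace ℝ (Fin (m+1)) →ₗ[ℝ] Matrix (Fin N) (Fin N) ℝ :=
    ∑ i : Fin m, (EuclideanSpace.proj (𝕜 := ℝ) (i.castSucc)).toLinearMap.smulRight (E i)
  have hA : ∀ v, A v = ∑ i : Fin m, v i.castSucc • E i := fun v => by simp [A]
  have hAt : ∀ v, (A v)ᵀ = A v := fun v => by
    rw [hA, transpose_sum]; simp [ht]
  have hAA : ∀ v, A v * A v = (∑ i : Fin m, v i.castSucc ^ 2) • 1 := fun v => by
    have h2 : (2 : ℝ) • (A v * A v) = (2 : ℝ) • ((∑ i : Fin m, v i.castSucc ^ 2) • (1 : Matrix (Fin N) (Fin N) ℝ)) := by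
      have e1 : A v * A v = ∑ i, ∑ j, (v i.castSucc * v j.castSucc) • (E i * E j) := by
        rw [hA, Finset.sum_mul_sum]; simp [smul_smul, mul_comm]
      have e2 : A v * A v = ∑ i, ∑ j, (v i.castSucc * v j.castSucc) • (E j * E i) := by
        rw [e1, Finset.sum_comm]; simp [mul_comm]
      rw [two_smul]; nth_rewrite 1 [e1]; rw [e2]
      simp_rw [← Finset.sum_add_distrib, ← smul_add]
      rw [Finset.sum_smul, Finset.smul_sum]
      refine Finset.sum_congr rfl fun i _ => ?_
      rw [Finset.sum_eq_single i]
      · rw [hs, ← two_smul ℝ, smul_smul, smul_smul]; congr 1; ring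
      · intro j _ hj; rw [hanti i j hj.symm, smul_zero]
      · simp
    exact smul_right_injective _ (two_ne_zero) h2
  let f : EuclideanSpace ℝ (Fin (m+1)) →ₗ[ℝ] Matrix (Fin N ⊕ Fin N) (Fin N ⊕ Fin N) ℝ :=
    { toFun := fun v => fromBlocks (A v) (v (Fin.last m) • 1) (v (Fin.last m) • 1) (-(A v))
      map_add' := fun x y => by simp [fromBlocks_add, add_smul, add_comm]
      map_smul' := fun c x => by simp [fromBlocks_smul, smul_smul] }
  have hf : ∀ v, f v = fromBlocks (A v) (v (Fin.last m) • 1) (v (Fin.last m) • 1) (-(A v)) := fun v => rfl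
  refine ⟨f, fun v => ?_⟩
  have h1 : (f v)ᵀ = f v := by rw [hf, fromBlocks_transpose]; simp [hAt]
  refine ⟨h1, ?_, ?_⟩
  · rw [h1, hf, Jreal]
    simp [fromBlocks_multiply, fromBlocks_add]
  · rw [hf, pow_two, fromBlocks_multiply, EuclideanSpace.norm_sq_eq, Fin.sum_univ_castSucc]
    simp only [neg_mul_neg, hAA, Real.norm_eq_abs, sq_abs]
    rw [← fromBlocks_one, fromBlocks_smul, add_smul]
    simp [smul_smul, pow_two, add_comm]

theorem equiv_compl_of_bij {E F : Type*} [NormedAddCommGroup E] [InnerProductSpace ℝ E]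
    [NormedAddCommGroup F] [InnerProductSpace ℝ F] [CompleteSpace E] [CompleteSpace F]
    (T : E →L[ℝ] F) (X : Submodule ℝ F) (hcl : IsClosed (LinearMap.range T.toLinearMap : Set F))
    (hb : Function.Bijective (T.coprod X.subtypeL)) :
    Module.finrank ℝ (LinearMap.range T.toLinearMap)ᗮ = Module.finrank ℝ X := by
  set R := LinearMap.range T.toLinearMap with hR
  have h1 : IsCompl R X := by
    constructor
    · rw [Submodule.disjoint_def]
      rintro x ⟨u, hu⟩ hx
      have h0 : T.coprod X.subtypeL (u, -⟨x, hx⟩) = T.coprod X.subtypeL 0 := by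
        have : T u = x := hu
        simp [ContinuousLinearMap.coprod_apply, this]
      have := hb.1 h0
      have h2 : (⟨x, hx⟩ : X) = 0 := by simpa using congrArg Prod.snd this
      exact congrArg Subtype.val h2
    · rw [codisjoint_iff_le_sup]
      intro x _
      obtain ⟨⟨u, y⟩, h⟩ := hb.2 x
      rw [← h]
      exact Submodule.add_mem_sup ⟨u, rfl⟩ y.2
  haveI : CompleteSpace R := hcl.completeSpace_coe
  have h2 : IsCompl R Rᗮ := Submodule.isCompl_orthogonal_of_hasOrthogonalProjection
  exact ((Submodule.quotientEquivOfIsCompl R Rᗮ h2).symm.trans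
    (Submodule.quotientEquivOfIsCompl R X h1)).finrank_eq

theorem coker_finrank_const {E F : Type*} [NormedAddCommGroup E] [InnerProductSpace ℝ E]
    [NormedAddCommGroup F] [InnerProductSpace ℝ F] [CompleteSpace E] [CompleteSpace F]
    (T : ℝ → E →L[ℝ] F) (hT : Continuous T)
    (hlow : ∀ θ, ∃ c : ℝ, 0 < c ∧ ∀ u, c * ‖u‖ ≤ ‖T θ u‖) (a b : ℝ) :
    Module.finrank ℝ (LinearMap.range (T a).toLinearMap)ᗮ =
      Module.finrank ℝ (LinearMap.range (T b).toLinearMap)ᗮ := by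
  have hanti : ∀ θ, ∃ K, AntilipschitzWith K (T θ) := fun θ => by
    obtain ⟨c, hc, h⟩ := hlow θ
    refine ⟨⟨c⁻¹, by positivity⟩, (T θ).antilipschitz_of_bound (fun x => ?_)⟩
    change ‖x‖ ≤ c⁻¹ * _
    rw [inv_mul_eq_div, le_div_iff₀ hc, mul_comm]
    exact h x
  have hcl : ∀ θ, IsClosed (LinearMap.range (T θ).toLinearMap : Set F) := fun θ => by
    obtain ⟨K, hK⟩ := hanti θ
    have := hK.isClosed_range (T θ).uniformContinuous
    exact this
  have hinj : ∀ θ, Function.Injective (T θ) := fun θ => by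
    obtain ⟨K, hK⟩ := hanti θ
    exact hK.injective
  have hlc : IsLocallyConstant (fun θ => Module.finrank ℝ (LinearMap.range (T θ).toLinearMap)ᗮ) := by
    rw [IsLocallyConstant.iff_eventually_eq]
    intro θ₀
    set R := LinearMap.range (T θ₀).toLinearMap with hR
    haveI : CompleteSpace R := (hcl θ₀).completeSpace_coe
    set X := Rᗮ with hX
    have hcont : Continuous (fun θ => (T θ).coprod X.subtypeL) := by
      have : (fun θ => (T θ).coprod X.subtypeL) = fun θ =>
          (T θ).comp (ContinuousLinearMap.fst ℝ E X) + X.subtypeL.comp (ContinuousLinearMap.snd ℝ E X) := by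
        funext θ; ext x <;> simp
      rw [this]
      exact (hT.clm_comp continuous_const).add continuous_const
    have hbij : Function.Bijective ((T θ₀).coprod X.subtypeL) := by
      constructor
      · rw [injective_iff_map_eq_zero]
        rintro ⟨u, x⟩ h
        have h' : T θ₀ u + x = 0 := by simpa using h
        have hx : (x : F) = 0 := by
          have h1 : (x : F) ∈ R := by
            rw [eq_neg_of_add_eq_zero_right h']
            exact R.neg_mem ⟨u, rfl⟩
          have := (Submodule.isCompl_orthogonal_of_hasOrthogonalProjection (K := R)).disjoint
          rw [Submodule.disjoint_def] at this
          exact this _ h1 x.2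
        have hu : u = 0 := by
          rw [hx, add_zero] at h'
          exact hinj θ₀ (by rw [h', map_zero])
        ext <;> simp [hx, hu]
      · intro y
        have := (Submodule.isCompl_orthogonal_of_hasOrthogonalProjection (K := R)).sup_eq_top
        have hy : y ∈ R ⊔ Rᗮ := by rw [this]; trivial
        obtain ⟨r, ⟨u, hu⟩, x, hx, rfl⟩ := Submodule.mem_sup.1 hy
        refine ⟨(u, ⟨x, hx⟩), ?_⟩
        have : T θ₀ u = r := hu
        simp [this]
    have hopen := ContinuousLinearEquiv.isOpen (𝕜 := ℝ) (E := E × X) (F := F)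
    have hmem : (T θ₀).coprod X.subtypeL ∈ Set.range ((↑) : ((E × X) ≃L[ℝ] F) → (E × X) →L[ℝ] F) := by
      refine ⟨ContinuousLinearEquiv.ofBijective _ (LinearMap.ker_eq_bot.2 hbij.1)
        (LinearMap.range_eq_top.2 hbij.2), ?_⟩
      ext <;> simp
    have hev := hcont.continuousAt.eventually (hopen.mem_nhds hmem)
    have key : ∀ θ, (T θ).coprod X.subtypeL ∈ Set.range ((↑) : ((E × X) ≃L[ℝ] F) → (E × X) →L[ℝ] F) →
        Module.finrank ℝ (LinearMap.range (T θ).toLinearMap)ᗮ = Module.finrank ℝ X := by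
      rintro θ ⟨e, he⟩
      apply equiv_compl_of_bij _ _ (hcl θ)
      rw [← he]
      exact e.bijective
    filter_upwards [hev] with θ hθ
    exact key θ hθ
  exact hlc.apply_eq_of_preconnectedSpace a b

section
open scoped InnerProductSpace

theorem pos_joint {B : Type*} [NormedAddCommGroup B] [InnerProductSpace ℝ B] [FiniteDimensional ℝ B]
    {n : ℕ} (X A : Fin n → B →ₗ[ℝ] B) (hX : ∀ i, (X i).IsSymmetric)
    (hXX : ∀ i j, i ≠ j → Commute (X i) (X j)) (hAX : ∀ i j v, A i (X j v) = X j (A i v))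
    (κ : ℝ) (hco : ∀ (x : Fin n → ℝ) (v : B), κ * (∑ i, x i ^ 2) * ‖v‖ ^ 2 ≤ ‖∑ i, x i • A i v‖ ^ 2)
    (v : B) : κ * ∑ i, ‖X i v‖ ^ 2 ≤ ‖∑ i, A i (X i v)‖ ^ 2 := by
  have htop := LinearMap.IsSymmetric.iSup_iInf_eq_top_of_commute hX (fun i j h => hXX i j h)
  have hof := LinearMap.IsSymmetric.orthogonalFamily_iInf_eigenspaces (𝕜 := ℝ) hX
  have hv : v ∈ ⨆ χ : Fin n → ℝ, ⨅ i, Module.End.eigenspace (X i) (χ i) := by rw [htop]; trivial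
  rw [Submodule.mem_iSup_iff_exists_finsupp] at hv
  obtain ⟨f, hf, rfl⟩ := hv
  have hfe : ∀ χ i, X i (f χ) = χ i • f χ := fun χ i => by
    have := hf χ
    rw [Submodule.mem_iInf] at this
    exact Module.End.mem_eigenspace_iff.1 (this i)
  have hpy : ∀ g : (Fin n → ℝ) → B, (∀ χ, g χ ∈ ⨅ i, Module.End.eigenspace (X i) (χ i)) →
      ‖∑ χ ∈ f.support, g χ‖ ^ 2 = ∑ χ ∈ f.support, ‖g χ‖ ^ 2 := fun g hg => by
    have := hof.norm_sum (fun χ => ⟨g χ, hg χ⟩) f.support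
    simpa using this
  have hmemX : ∀ i χ, χ i • f χ ∈ ⨅ i, Module.End.eigenspace (X i) (χ i) := fun i χ =>
    Submodule.smul_mem _ _ (hf χ)
  have hmemA : ∀ χ, ∑ i, χ i • A i (f χ) ∈ ⨅ i, Module.End.eigenspace (X i) (χ i) := fun χ => by
    refine Submodule.sum_mem _ fun i _ => Submodule.smul_mem _ _ ?_
    rw [Submodule.mem_iInf]
    intro j
    rw [Module.End.mem_eigenspace_iff, ← hAX, hfe, map_smul]
  have e1 : ∀ i, ‖X i (f.sum fun _ x => x)‖ ^ 2 = ∑ χ ∈ f.support, (χ i) ^ 2 * ‖f χ‖ ^ 2 := fun i => by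
    rw [Finsupp.sum, map_sum]
    simp_rw [hfe]
    rw [hpy _ (hmemX i)]
    refine Finset.sum_congr rfl fun χ _ => ?_
    rw [norm_smul, mul_pow, Real.norm_eq_abs, sq_abs]
  have e2 : ∑ i, A i (X i (f.sum fun _ x => x)) = ∑ χ ∈ f.support, ∑ i, χ i • A i (f χ) := by
    rw [Finset.sum_comm]
    refine Finset.sum_congr rfl fun i _ => ?_
    rw [Finsupp.sum, map_sum, map_sum]
    simp_rw [hfe, map_smul]
  rw [e2, hpy _ hmemA, Finset.sum_congr rfl fun i _ => e1 i, Finset.sum_comm, Finset.mul_sum]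
  refine Finset.sum_le_sum fun χ _ => ?_
  refine le_trans (le_of_eq ?_) (hco χ (f χ))
  rw [← Finset.sum_mul, mul_assoc]

theorem dirac_identity {E : Type*} [NormedAddCommGroup E] [InnerProductSpace ℝ E]
    {n : ℕ} (G A D X : Fin n → E →L[ℝ] E)
    (hA : ∀ i x y, ⟪A i x, y⟫_ℝ = ⟪x, A i y⟫_ℝ) (hX : ∀ i x y, ⟪X i x, y⟫_ℝ = ⟪x, X i y⟫_ℝ)
    (hG : ∀ i x y, ⟪G i x, y⟫_ℝ = -⟪x, G i y⟫_ℝ) (hD : ∀ i x y, ⟪D i x, y⟫_ℝ = -⟪x, D i y⟫_ℝ)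
    (hGD : ∀ i j x, G i (D j x) = D j (G i x)) (hGX : ∀ i j x, G i (X j x) = X j (G i x))
    (hAD : ∀ i j x, A i (D j x) = D j (A i x)) (hAX : ∀ i j x, A i (X j x) = X j (A i x))
    (hDD : ∀ i j x, D i (D j x) = D j (D i x))
    (hGG : ∀ i j x, G i (G j x) + G j (G i x) = if i = j then (-2 : ℝ) • x else 0)
    (hGA : ∀ i j x, G i (A j x) = -A j (G i x))
    (v : E) (hXD : ∀ i j, D i (X j v) - X j (D i v) = if i = j then (2 : ℝ) • v else 0) :
    ‖∑ i, (G i (D i v) + A i (X i v))‖ ^ 2 =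
      ∑ i, ‖D i v‖ ^ 2 + ‖∑ i, A i (X i v)‖ ^ 2 + 2 * ∑ i, ⟪v, G i (A i v)⟫_ℝ := by
  rw [Finset.sum_add_distrib, norm_add_sq_real]
  have h1 : ‖∑ i, G i (D i v)‖ ^ 2 = ∑ i, ‖D i v‖ ^ 2 := by
    have a1 : ‖∑ i, G i (D i v)‖ ^ 2 = ∑ i, ∑ j, ⟪v, G i (G j (D i (D j v)))⟫_ℝ := by
      rw [← real_inner_self_eq_norm_sq, sum_inner]
      refine Finset.sum_congr rfl fun i _ => ?_
      rw [inner_sum]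
      refine Finset.sum_congr rfl fun j _ => ?_
      rw [hG, hD, neg_neg, hGD j i, hGD i i]
    have a2 : ‖∑ i, G i (D i v)‖ ^ 2 = ∑ i, ∑ j, ⟪v, G j (G i (D i (D j v)))⟫_ℝ := by
      rw [a1, Finset.sum_comm]
      simp_rw [fun i j => hDD j i v]
    have a3 : 2 * ‖∑ i, G i (D i v)‖ ^ 2 = 2 * ∑ i, ‖D i v‖ ^ 2 := by
      rw [two_mul]; nth_rewrite 1 [a1]; rw [a2]
      simp_rw [← Finset.sum_add_distrib, ← inner_add_right, hGG]
      rw [Finset.mul_sum]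
      refine Finset.sum_congr rfl fun i _ => ?_
      rw [Finset.sum_eq_single i]
      · rw [if_pos rfl, inner_smul_right, ← real_inner_self_eq_norm_sq, hD]; ring
      · intro j _ hj; rw [if_neg hj.symm, inner_zero_right]
      · simp
    linarith
  have h2 : 2 * ⟪∑ i, G i (D i v), ∑ i, A i (X i v)⟫_ℝ = 2 * ∑ i, ⟪v, G i (A i v)⟫_ℝ := by
    have b : ∀ i j, 2 * ⟪G i (D i v), A j (X j v)⟫_ℝ = ⟪v, G i (A j (D i (X j v) - X j (D i v)))⟫_ℝ := by
      intro i j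
      have b1 : ⟪G i (D i v), A j (X j v)⟫_ℝ = ⟪v, G i (A j (D i (X j v)))⟫_ℝ := by
        rw [hG, hD, neg_neg, ← hGD, ← hAD]
      have b2 : ⟪G i (D i v), A j (X j v)⟫_ℝ = -⟪v, G i (A j (X j (D i v)))⟫_ℝ := by
        rw [real_inner_comm, hA, hX, ← hAX, ← hGX, hGA, inner_neg_right, neg_neg]
      rw [map_sub, map_sub, inner_sub_right, two_mul]
      nth_rewrite 1 [b1]; rw [b2]; ring
    rw [sum_inner, Finset.mul_sum, Finset.mul_sum]
    refine Finset.sum_congr rfl fun i _ => ?_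
    rw [inner_sum, Finset.mul_sum, Finset.sum_eq_single i]
    · rw [b, hXD, if_pos rfl, map_smul, map_smul, inner_smul_right]
    · intro j _ hj; rw [b, hXD, if_neg hj.symm]; simp
    · simp
  rw [h1, h2]; ring

end

section
open scoped InnerProductSpace

/-- multi-indices -/
abbrev Ix (n : ℕ) := Fin n → ℕ

/-- Hilbert space of square summable families -/
abbrev HS (n : ℕ) (W : Type) [NormedAddCommGroup W] := lp (fun _ : Ix n => W) 2

/-- raise the `i`-th index -/
def upI {n : ℕ} (i : Fin n) (k : Ix n) : Ix n := Function.update k i (k i + 1)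

/-- lower the `i`-th index -/
def dnI {n : ℕ} (i : Fin n) (k : Ix n) : Ix n := Function.update k i (k i - 1)

/-- degree -/
def deg {n : ℕ} (k : Ix n) : ℕ := ∑ i, k i

theorem dn_up {n : ℕ} (i : Fin n) (k : Ix n) : dnI i (upI i k) = k := by
  simp [dnI, upI]

theorem up_dn {n : ℕ} (i : Fin n) (k : Ix n) (h : k i ≠ 0) : upI i (dnI i k) = k := by
  simp [dnI, upI]
  have : k i - 1 + 1 = k i := by omega
  rw [this]

theorem upI_inj {n : ℕ} (i : Fin n) : Function.Injective (upI (n := n) i) :=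
  Function.LeftInverse.injective (dn_up i)

@[simp] theorem upI_same {n : ℕ} (i : Fin n) (k : Ix n) : upI i k i = k i + 1 := by simp [upI]
@[simp] theorem dnI_same {n : ℕ} (i : Fin n) (k : Ix n) : dnI i k i = k i - 1 := by simp [dnI]
theorem upI_ne {n : ℕ} {i j : Fin n} (h : j ≠ i) (k : Ix n) : upI i k j = k j := by simp [upI, h]
theorem dnI_ne {n : ℕ} {i j : Fin n} (h : j ≠ i) (k : Ix n) : dnI i k j = k j := by simp [dnI, h]

theorem up_up {n : ℕ} (i j : Fin n) (k : Ix n) : upI i (upI j k) = upI j (upI i k) := by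
  by_cases h : i = j
  · subst h; rfl
  · unfold upI
    rw [Function.update_of_ne h, Function.update_of_ne (Ne.symm h), Function.update_comm h]

theorem up_dn_comm {n : ℕ} {i j : Fin n} (h : i ≠ j) (k : Ix n) :
    upI i (dnI j k) = dnI j (upI i k) := by
  unfold upI dnI
  rw [Function.update_of_ne h, Function.update_of_ne (Ne.symm h), Function.update_comm h]

theorem dn_dn {n : ℕ} (i j : Fin n) (k : Ix n) : dnI i (dnI j k) = dnI j (dnI i k) := by
  by_cases h : i = j
  · subst h; rfl
  · unfold dnI
    rw [Function.update_of_ne h, Function.update_of_ne (Ne.symm h), Function.update_comm h]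

theorem deg_up {n : ℕ} (i : Fin n) (k : Ix n) : deg (upI i k) = deg k + 1 := by
  unfold deg upI
  rw [Finset.sum_update_of_mem (Finset.mem_univ i), ← Finset.add_sum_erase _ _ (Finset.mem_univ i),
    Finset.sdiff_singleton_eq_erase]
  ring

theorem deg_dn {n : ℕ} (i : Fin n) (k : Ix n) (h : k i ≠ 0) : deg (dnI i k) + 1 = deg k := by
  rw [← deg_up i, up_dn i k h]

theorem le_deg {n : ℕ} (i : Fin n) (k : Ix n) : k i ≤ deg k :=
  Finset.single_le_sum (f := k) (fun _ _ => Nat.zero_le _) (Finset.mem_univ i)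

variable {n : ℕ} {W : Type} [NormedAddCommGroup W] [InnerProductSpace ℝ W]

theorem exists_genOp (c : Ix n → ℝ) (C : ℝ) (hc : ∀ k, |c k| ≤ C) (M : W →L[ℝ] W)
    (σ : Ix n → Ix n) (hσ : Function.Injective σ) :
    ∃ T : HS n W →L[ℝ] HS n W, ∀ u k, T u k = c k • M (u (σ k)) := by
  have hC : 0 ≤ C := (abs_nonneg _).trans (hc 0)
  have h2 : (2 : ENNReal).toReal = 2 := by norm_num
  have hp : 0 < (2 : ENNReal).toReal := by norm_num
  set K := C * ‖M‖
  have hK : 0 ≤ K := by positivity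
  have hsum : ∀ (u : HS n W) (s : Finset (Ix n)),
      ∑ k ∈ s, ‖c k • M (u (σ k))‖ ^ (2 : ENNReal).toReal ≤ (K * ‖u‖) ^ (2 : ENNReal).toReal := by
    intro u s
    calc ∑ k ∈ s, ‖c k • M (u (σ k))‖ ^ (2 : ENNReal).toReal
        ≤ ∑ k ∈ s, K ^ (2 : ENNReal).toReal * ‖u (σ k)‖ ^ (2 : ENNReal).toReal := by
          refine Finset.sum_le_sum fun k _ => ?_
          rw [← Real.mul_rpow hK (norm_nonneg _)]
          refine Real.rpow_le_rpow (norm_nonneg _) ?_ hp.le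
          rw [norm_smul, Real.norm_eq_abs, mul_assoc]
          exact mul_le_mul (hc k) (M.le_opNorm _) (norm_nonneg _) hC
      _ = K ^ (2 : ENNReal).toReal * ∑ k ∈ s.map ⟨σ, hσ⟩, ‖u k‖ ^ (2 : ENNReal).toReal := by
          rw [Finset.mul_sum, Finset.sum_map]; rfl
      _ ≤ K ^ (2 : ENNReal).toReal * ‖u‖ ^ (2 : ENNReal).toReal := by
          refine mul_le_mul_of_nonneg_left (lp.sum_rpow_le_norm_rpow hp u _) (by positivity)
      _ = _ := by rw [Real.mul_rpow hK (norm_nonneg _)]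
  let L : HS n W →ₗ[ℝ] HS n W :=
    { toFun := fun u => ⟨fun k => c k • M (u (σ k)), memℓp_gen' (hsum u)⟩
      map_add' := fun u v => by
        ext k
        change c k • M (u (σ k) + v (σ k)) = c k • M (u (σ k)) + c k • M (v (σ k))
        rw [map_add, smul_add]
      map_smul' := fun a u => by
        ext k
        change c k • M (a • u (σ k)) = a • (c k • M (u (σ k)))
        rw [map_smul, smul_comm] }
  refine ⟨L.mkContinuous K (fun u => ?_), fun u k => rfl⟩
  exact lp.norm_le_of_forall_sum_le hp (by positivity) (hsum u)

open Classical in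
/-- weighted composition operator -/
noncomputable def genOp (c : Ix n → ℝ) (M : W →L[ℝ] W) (σ : Ix n → Ix n) : HS n W →L[ℝ] HS n W :=
  if h : (∃ C, ∀ k, |c k| ≤ C) ∧ Function.Injective σ then
    Classical.choose (exists_genOp c _ h.1.choose_spec M σ h.2) else 0

theorem genOp_apply (c : Ix n → ℝ) (M : W →L[ℝ] W) (σ : Ix n → Ix n) {C : ℝ} (hC : ∀ k, |c k| ≤ C)
    (hσ : Function.Injective σ) (u : HS n W) (k : Ix n) : genOp c M σ u k = c k • M (u (σ k)) := by
  have h : (∃ C, ∀ k, |c k| ≤ C) ∧ Function.Injective σ := ⟨⟨C, hC⟩, hσ⟩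
  unfold genOp
  rw [dif_pos h]
  exact Classical.choose_spec (exists_genOp c _ h.1.choose_spec M σ h.2) u k

/-- fibrewise operator -/
noncomputable def fib (M : W →L[ℝ] W) : HS n W →L[ℝ] HS n W := genOp (fun _ => 1) M id

@[simp] theorem fib_apply (M : W →L[ℝ] W) (u : HS n W) (k : Ix n) : fib M u k = M (u k) := by
  rw [fib, genOp_apply (C := 1) _ _ _ (by simp) Function.injective_id]; simp

/-- diagonal operator -/
noncomputable def diagOp (c : Ix n → ℝ) : HS n W →L[ℝ] HS n W := genOp c (ContinuousLinearMap.id ℝ W) id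

theorem diagOp_apply (c : Ix n → ℝ) {C : ℝ} (hC : ∀ k, |c k| ≤ C) (u : HS n W) (k : Ix n) :
    diagOp c u k = c k • u k := by
  rw [diagOp, genOp_apply _ _ _ hC Function.injective_id]; simp

/-- lowering operator -/
noncomputable def shOp (i : Fin n) (c : Ix n → ℝ) : HS n W →L[ℝ] HS n W :=
  genOp c (ContinuousLinearMap.id ℝ W) (upI i)

theorem shOp_apply (i : Fin n) (c : Ix n → ℝ) {C : ℝ} (hC : ∀ k, |c k| ≤ C) (u : HS n W) (k : Ix n) :
    shOp i c u k = c k • u (upI i k) := by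
  rw [shOp, genOp_apply _ _ _ hC (upI_inj i)]; simp

variable [CompleteSpace W]

/-- raising operator -/
noncomputable def shAd (i : Fin n) (c : Ix n → ℝ) : HS n W →L[ℝ] HS n W :=
  ContinuousLinearMap.adjoint (shOp i c)

theorem shAd_inner (i : Fin n) (c : Ix n → ℝ) (u v : HS n W) :
    ⟪shAd i c u, v⟫_ℝ = ⟪u, shOp i c v⟫_ℝ := ContinuousLinearMap.adjoint_inner_left _ _ _

theorem shOp_inner (i : Fin n) (c : Ix n → ℝ) (u v : HS n W) :
    ⟪shOp i c u, v⟫_ℝ = ⟪u, shAd i c v⟫_ℝ := (ContinuousLinearMap.adjoint_inner_right _ _ _).symm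

theorem shAd_apply (i : Fin n) (c : Ix n → ℝ) {C : ℝ} (hC : ∀ k, |c k| ≤ C) (u : HS n W) (k : Ix n) :
    shAd i c u k = if k i = 0 then 0 else c (dnI i k) • u (dnI i k) := by
  refine ext_inner_left ℝ fun x => ?_
  rw [← lp.inner_single_left k x (shAd i c u), real_inner_comm, shAd_inner]
  split_ifs with h
  · have : shOp i c (lp.single 2 k x : HS n W) = 0 := by
      ext j
      rw [shOp_apply i c hC, lp.single_apply_ne, smul_zero]
      · rfl
      · rintro rfl; simp at h
    rw [this, inner_zero_right, inner_zero_right]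
  · have : shOp i c (lp.single 2 k x : HS n W) = lp.single 2 (dnI i k) (c (dnI i k) • x) := by
      ext j
      rw [shOp_apply i c hC]
      by_cases hj : j = dnI i k
      · subst hj
        rw [up_dn i k h, lp.single_apply_self, lp.single_apply_self]
      · rw [lp.single_apply_ne, lp.single_apply_ne _ _ _ hj, smul_zero]
        rintro rfl
        exact hj (dn_up i j).symm
    rw [this, real_inner_comm, lp.inner_single_left, inner_smul_left, inner_smul_right]
    rfl

theorem fib_inner (M M' : W →L[ℝ] W) (h : ∀ x y, ⟪M x, y⟫_ℝ = ⟪x, M' y⟫_ℝ) (u v : HS n W) :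
    ⟪fib M u, v⟫_ℝ = ⟪u, fib M' v⟫_ℝ := by
  rw [lp.inner_eq_tsum, lp.inner_eq_tsum]
  simp [h]

theorem fib_shOp (M : W →L[ℝ] W) (i : Fin n) (c : Ix n → ℝ) {C : ℝ} (hC : ∀ k, |c k| ≤ C) (u : HS n W) :
    fib M (shOp i c u) = shOp i c (fib M u) := by
  ext k
  rw [fib_apply, shOp_apply i c hC, shOp_apply i c hC, fib_apply, map_smul]

theorem fib_shAd (M : W →L[ℝ] W) (i : Fin n) (c : Ix n → ℝ) {C : ℝ} (hC : ∀ k, |c k| ≤ C) (u : HS n W) :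
    fib M (shAd i c u) = shAd i c (fib M u) := by
  ext k
  rw [fib_apply, shAd_apply i c hC, shAd_apply i c hC, fib_apply]
  split_ifs <;> simp

end

section
open scoped InnerProductSpace
variable {n : ℕ} {W : Type} [NormedAddCommGroup W] [InnerProductSpace ℝ W]

/-- weight -/
noncomputable def lam (k : Ix n) : ℝ := Real.sqrt (deg k + 1)

theorem lam_pos (k : Ix n) : 0 < lam k := Real.sqrt_pos.2 (by positivity)

theorem lam_sq (k : Ix n) : lam k ^ 2 = deg k + 1 := Real.sq_sqrt (by positivity)

theorem one_le_lam (k : Ix n) : 1 ≤ lam k := by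
  rw [lam, Real.one_le_sqrt]; simp

/-- lowering weight -/
noncomputable def c1 (i : Fin n) (k : Ix n) : ℝ := Real.sqrt (k i + 1) / lam (upI i k)
/-- raising weight -/
noncomputable def c2 (i : Fin n) (k : Ix n) : ℝ := Real.sqrt (k i + 1) / lam k

theorem c1_le (i : Fin n) (k : Ix n) : |c1 i k| ≤ 1 := by
  have h := lam_pos (upI i k)
  rw [c1, abs_of_nonneg (by positivity), div_le_one h]
  apply Real.sqrt_le_sqrt
  have := le_deg i (upI i k)
  simp at this
  have h2 : ((k i + 1 : ℕ) : ℝ) ≤ deg (upI i k) := by exact_mod_cast this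
  push_cast at h2; linarith

theorem c2_le (i : Fin n) (k : Ix n) : |c2 i k| ≤ 1 := by
  have h := lam_pos k
  rw [c2, abs_of_nonneg (by positivity), div_le_one h]
  apply Real.sqrt_le_sqrt
  have h2 : ((k i : ℕ) : ℝ) ≤ deg k := by exact_mod_cast le_deg i k
  linarith

/-- truncated weight -/
noncomputable def cL (L : ℕ) (i : Fin n) (k : Ix n) : ℝ := if k i + 1 < L then Real.sqrt (k i + 1) else 0

theorem cL_le (L : ℕ) (i : Fin n) (k : Ix n) : |cL L i k| ≤ Real.sqrt L := by
  unfold cL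
  split_ifs with h
  · rw [abs_of_nonneg (by positivity)]
    apply Real.sqrt_le_sqrt
    have : ((k i + 1 : ℕ) : ℝ) < L := by exact_mod_cast h
    push_cast at this; linarith
  · simp

/-- formal Dirac-type operator -/
noncomputable def Hf (A G : Fin n → W →L[ℝ] W) (w : Ix n → W) (k : Ix n) : W :=
  ∑ i, (Real.sqrt (k i + 1) • (A i (w (upI i k)) + G i (w (upI i k))) +
    Real.sqrt (k i) • (A i (w (dnI i k)) - G i (w (dnI i k))))

theorem normsq_hasSum (u : HS n W) : HasSum (fun k => ‖u k‖ ^ 2) (‖u‖ ^ 2) := by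
  have := lp.hasSum_inner (𝕜 := ℝ) u u
  simpa [real_inner_self_eq_norm_sq] using this

variable [CompleteSpace W]

/-- normalized bounded operator -/
noncomputable def TopOp (A G : Fin n → W →L[ℝ] W) : HS n W →L[ℝ] HS n W :=
  ∑ i, ((fib (A i)).comp (shOp i (c1 i) + shAd i (c2 i)) +
    (fib (G i)).comp (shOp i (c1 i) - shAd i (c2 i)))

/-- its adjoint -/
noncomputable def Tad (A G : Fin n → W →L[ℝ] W) : HS n W →L[ℝ] HS n W :=
  ∑ i, ((shAd i (c1 i) + shOp i (c2 i)).comp (fib (A i)) -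
    (shAd i (c1 i) - shOp i (c2 i)).comp (fib (G i)))

theorem TopOp_inner (A G : Fin n → W →L[ℝ] W) (hA : ∀ i x y, ⟪A i x, y⟫_ℝ = ⟪x, A i y⟫_ℝ)
    (hG : ∀ i x y, ⟪G i x, y⟫_ℝ = -⟪x, G i y⟫_ℝ) (u w : HS n W) :
    ⟪TopOp A G u, w⟫_ℝ = ⟪u, Tad A G w⟫_ℝ := by
  simp only [TopOp, Tad, ContinuousLinearMap.sum_apply, sum_inner, inner_sum]
  refine Finset.sum_congr rfl fun i _ => ?_
  simp only [ContinuousLinearMap.add_apply, ContinuousLinearMap.sub_apply,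
    ContinuousLinearMap.comp_apply]
  have h1 := fun u v : HS n W => fib_inner (A i) (A i) (hA i) u v
  have h2 := fun u v : HS n W => fib_inner (G i) (-G i) (by intro x y; simp [hG]) u v
  have h3 : ∀ v : HS n W, fib (-G i) v = - fib (G i) v := fun v => by
    ext k; simp
  simp only [map_add, map_sub, inner_add_left, inner_sub_left, inner_add_right, inner_sub_right,
    h1, h2, h3, inner_neg_right, shOp_inner, shAd_inner]
  ring

theorem lp_sum_apply {ι : Type*} (s : Finset ι) (f : ι → HS n W) (k : Ix n) :
    (∑ i ∈ s, f i) k = ∑ i ∈ s, f i k := by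
  rw [lp.coeFn_sum, Finset.sum_apply]

theorem Tad_apply (A G : Fin n → W →L[ℝ] W) (w : HS n W) (k : Ix n) :
    Tad A G w k = (lam k)⁻¹ • Hf A G w k := by
  rw [Tad, ContinuousLinearMap.sum_apply, lp_sum_apply, Hf, Finset.smul_sum]
  refine Finset.sum_congr rfl fun i _ => ?_
  simp only [ContinuousLinearMap.add_apply, ContinuousLinearMap.sub_apply,
    ContinuousLinearMap.comp_apply, lp.coeFn_add, lp.coeFn_sub, Pi.add_apply, Pi.sub_apply,
    shAd_apply i (c1 i) (c1_le i), shOp_apply i (c2 i) (c2_le i), fib_apply]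
  by_cases h : k i = 0
  · simp only [h, if_true, c2]
    simp [smul_smul, smul_add, div_eq_inv_mul]
  · rw [if_neg h, if_neg h]
    have e1 : c1 i (dnI i k) = (lam k)⁻¹ * Real.sqrt (k i) := by
      rw [c1, up_dn i k h, dnI_same, div_eq_inv_mul]
      congr 2
      have : 1 ≤ k i := by omega
      push_cast [this]; ring
    rw [e1, c2, div_eq_inv_mul]
    simp only [smul_add, smul_sub, smul_smul]
    abel

theorem TopOp_apply (A G : Fin n → W →L[ℝ] W) (u : HS n W) (k : Ix n) :
    TopOp A G u k = ∑ i, (A i (c1 i k • u (upI i k) + (if k i = 0 then 0 else c2 i (dnI i k) • u (dnI i k))) +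
      G i (c1 i k • u (upI i k) - (if k i = 0 then 0 else c2 i (dnI i k) • u (dnI i k)))) := by
  rw [TopOp, ContinuousLinearMap.sum_apply, lp_sum_apply]
  refine Finset.sum_congr rfl fun i _ => ?_
  simp only [ContinuousLinearMap.add_apply, ContinuousLinearMap.sub_apply,
    ContinuousLinearMap.comp_apply, lp.coeFn_add, lp.coeFn_sub, Pi.add_apply, Pi.sub_apply,
    shAd_apply i (c2 i) (c2_le i), shOp_apply i (c1 i) (c1_le i), fib_apply]

/-- truncated lowering operator -/
noncomputable def sL (L : ℕ) (i : Fin n) : HS n W →L[ℝ] HS n W := shOp i (cL L i)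
/-- truncated raising operator -/
noncomputable def rL (L : ℕ) (i : Fin n) : HS n W →L[ℝ] HS n W := shAd i (cL L i)

theorem sL_apply (L : ℕ) (i : Fin n) (u : HS n W) (k : Ix n) : sL L i u k = cL L i k • u (upI i k) :=
  shOp_apply i _ (cL_le L i) u k

theorem rL_apply (L : ℕ) (i : Fin n) (u : HS n W) (k : Ix n) :
    rL L i u k = if k i = 0 then 0 else cL L i (dnI i k) • u (dnI i k) :=
  shAd_apply i _ (cL_le L i) u k

theorem cL_up_ne (L : ℕ) {i j : Fin n} (h : i ≠ j) (k : Ix n) : cL L i (upI j k) = cL L i k := by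
  simp [cL, upI_ne h]
theorem cL_dn_ne (L : ℕ) {i j : Fin n} (h : i ≠ j) (k : Ix n) : cL L i (dnI j k) = cL L i k := by
  simp [cL, dnI_ne h]

theorem sL_sL (L : ℕ) {i j : Fin n} (h : i ≠ j) (u : HS n W) : sL L i (sL L j u) = sL L j (sL L i u) := by
  ext k
  simp only [sL_apply, cL_up_ne L h, cL_up_ne L h.symm, up_up i j, smul_smul]
  rw [mul_comm]

theorem sL_rL (L : ℕ) {i j : Fin n} (h : i ≠ j) (u : HS n W) : sL L i (rL L j u) = rL L j (sL L i u) := by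
  ext k
  simp only [sL_apply, rL_apply, upI_ne h.symm]
  split_ifs
  · simp
  · rw [← up_dn_comm h, cL_up_ne L h.symm, cL_dn_ne L h, smul_smul, smul_smul, mul_comm]

theorem rL_rL (L : ℕ) {i j : Fin n} (h : i ≠ j) (u : HS n W) : rL L i (rL L j u) = rL L j (rL L i u) := by
  ext k
  simp only [rL_apply, dnI_ne h, dnI_ne h.symm]
  split_ifs
  · rfl
  · simp
  · simp
  · have e1 : cL L j (dnI j (dnI i k)) = cL L j (dnI j k) := by rw [dn_dn j i, cL_dn_ne L h.symm]
    have e2 : cL L i (dnI i (dnI j k)) = cL L i (dnI i k) := by rw [dn_dn i j, cL_dn_ne L h]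
    rw [e1, e2, dn_dn j i, smul_smul, smul_smul, mul_comm]

/-- supported in the box -/
def InBox (L : ℕ) (v : HS n W) : Prop := ∀ k : Ix n, (∃ i, L ≤ k i + 1) → v k = 0

theorem sL_rL_same (L : ℕ) (i : Fin n) (v : HS n W) (hv : InBox L v) (k : Ix n) :
    sL L i (rL L i v) k = (k i + 1 : ℝ) • v k := by
  simp only [sL_apply, rL_apply, upI_same, dn_up]
  by_cases h : k i + 1 < L
  · simp only [cL, if_pos h]
    rw [if_neg (by omega), smul_smul, Real.mul_self_sqrt (by positivity)]
  · rw [hv k ⟨i, by omega⟩]; simp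

theorem rL_sL_same (L : ℕ) (i : Fin n) (v : HS n W) (hv : InBox L v) (k : Ix n) :
    rL L i (sL L i v) k = (k i : ℝ) • v k := by
  simp only [sL_apply, rL_apply]
  by_cases h0 : k i = 0
  · simp [h0]
  rw [if_neg h0, up_dn i k h0]
  by_cases h : k i + 1 < L
  · have h1 : 1 ≤ k i := by omega
    simp only [cL, dnI_same]
    rw [if_pos (by omega), smul_smul, Real.mul_self_sqrt (by positivity)]
    push_cast [h1]; congr 1; ring
  · rw [hv k ⟨i, by omega⟩]; simp

/-- box subspace -/
def boxSub (n : ℕ) (W : Type) [NormedAddCommGroup W] [InnerProductSpace ℝ W] (L : ℕ) :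
    Submodule ℝ (HS n W) where
  carrier := {w | ∀ k : Ix n, (∃ i, L ≤ k i) → w k = 0}
  add_mem' := fun {a b} ha hb k hk => by
    have := ha k hk; have := hb k hk
    simp [*]
  zero_mem' := fun k _ => rfl
  smul_mem' := fun c a ha k hk => by
    have := ha k hk
    simp [*]

instance boxSub_fd [FiniteDimensional ℝ W] (L : ℕ) : FiniteDimensional ℝ (boxSub n W L) := by
  let φ : boxSub n W L →ₗ[ℝ] ((Fin n → Fin L) → W) :=
    { toFun := fun w k => w.1 (fun i => (k i : ℕ))
      map_add' := fun _ _ => rfl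
      map_smul' := fun _ _ => rfl }
  refine FiniteDimensional.of_injective φ ?_
  rw [injective_iff_map_eq_zero]
  rintro ⟨w, hw⟩ h
  apply Subtype.ext
  ext k
  by_cases hk : ∃ i, L ≤ k i
  · exact hw k hk
  · push Not at hk
    exact congrFun h (fun i => ⟨k i, hk i⟩)

theorem sL_box (L : ℕ) (i : Fin n) (w : HS n W) (hw : w ∈ boxSub n W L) : sL L i w ∈ boxSub n W L := by
  rintro k ⟨j, hj⟩
  rw [sL_apply]
  by_cases h : j = i
  · subst h; rw [cL, if_neg (by omega), zero_smul]
  · rw [hw _ ⟨j, by rw [upI_ne h]; exact hj⟩, smul_zero]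

theorem rL_box (L : ℕ) (i : Fin n) (w : HS n W) (hw : w ∈ boxSub n W L) : rL L i w ∈ boxSub n W L := by
  rintro k ⟨j, hj⟩
  rw [rL_apply]
  split_ifs with h0
  · rfl
  by_cases h : j = i
  · subst h; rw [cL, if_neg (by rw [dnI_same]; omega), zero_smul]
  · rw [hw _ ⟨j, by rw [dnI_ne h]; exact hj⟩, smul_zero]

theorem fib_box (L : ℕ) (M : W →L[ℝ] W) (w : HS n W) (hw : w ∈ boxSub n W L) : fib M w ∈ boxSub n W L := by
  intro k hk
  rw [fib_apply, hw k hk, map_zero]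

end

section
open scoped InnerProductSpace
variable {n : ℕ} {W : Type} [NormedAddCommGroup W] [InnerProductSpace ℝ W]

theorem linv_le (k : Ix n) : |(lam k)⁻¹| ≤ 1 := by
  rw [abs_of_pos (inv_pos.2 (lam_pos k))]
  exact inv_le_one_of_one_le₀ (one_le_lam k)

theorem hs_coercive (A : Fin n → W →L[ℝ] W) (κ : ℝ)
    (hco : ∀ (x : Fin n → ℝ) (w : W), κ * (∑ i, x i ^ 2) * ‖w‖ ^ 2 ≤ ‖∑ i, x i • A i w‖ ^ 2)
    (x : Fin n → ℝ) (v : HS n W) : κ * (∑ i, x i ^ 2) * ‖v‖ ^ 2 ≤ ‖∑ i, x i • fib (A i) v‖ ^ 2 := by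
  refine hasSum_le (fun k => ?_) ((normsq_hasSum v).mul_left _) (normsq_hasSum _)
  have : (∑ i, x i • fib (A i) v) k = ∑ i, x i • A i (v k) := by
    rw [lp.coeFn_sum, Finset.sum_apply]
    simp
  rw [this]
  exact hco x (v k)

variable [CompleteSpace W]

/-- position -/
noncomputable def xL (L : ℕ) (i : Fin n) : HS n W →L[ℝ] HS n W := sL L i + rL L i
/-- derivative -/
noncomputable def dL (L : ℕ) (i : Fin n) : HS n W →L[ℝ] HS n W := sL L i - rL L i
theorem xL_ap (L : ℕ) (i : Fin n) (x : HS n W) : xL L i x = sL L i x + rL L i x := rfl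
theorem dL_ap (L : ℕ) (i : Fin n) (x : HS n W) : dL L i x = sL L i x - rL L i x := rfl

theorem TopOp_box (A G : Fin n → W →L[ℝ] W) (L : ℕ) (u : HS n W) (hu : InBox L u) :
    TopOp A G u = ∑ i, (fib (G i) ((dL L i) (diagOp (fun k => (lam k)⁻¹) u)) +
      fib (A i) ((xL L i) (diagOp (fun k => (lam k)⁻¹) u))) := by
  ext k
  rw [TopOp_apply, lp_sum_apply]
  refine Finset.sum_congr rfl fun i _ => ?_
  have key1 : c1 i k • u (upI i k) = cL L i k • (lam (upI i k))⁻¹ • u (upI i k) := by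
    by_cases h : k i + 1 < L
    · rw [cL, if_pos h, smul_smul, c1, div_eq_mul_inv]
    · rw [hu (upI i k) ⟨i, by rw [upI_same]; omega⟩]; simp
  have key2 : ∀ k : Ix n, c2 i k • u k = cL L i k • (lam k)⁻¹ • u k := fun k => by
    by_cases h : k i + 1 < L
    · rw [cL, if_pos h, smul_smul, c2, div_eq_mul_inv]
    · rw [hu k ⟨i, by omega⟩]; simp
  simp only [lp.coeFn_add, lp.coeFn_sub, Pi.add_apply, Pi.sub_apply, fib_apply,
    xL_ap, dL_ap, sL_apply, rL_apply,
    diagOp_apply _ linv_le, key1, key2]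
  rw [add_comm]

theorem HasSum.congr_fun' {ι : Type*} {f g : ι → ℝ} {a : ℝ} (h : HasSum f a) (e : ∀ k, g k = f k) :
    HasSum g a := by rwa [funext e]

theorem XD_normsq (L : ℕ) (i : Fin n) (v : HS n W) (hv : InBox L v) :
    HasSum (fun k => (4 * (k i : ℝ) + 2) * ‖v k‖ ^ 2)
      (‖(dL L i) v‖ ^ 2 + ‖(xL L i) v‖ ^ 2) := by
  have e : ‖(dL L i) v‖ ^ 2 + ‖(xL L i) v‖ ^ 2 =
      2 * ⟪v, rL L i (sL L i v) + sL L i (rL L i v)⟫_ℝ := by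
    rw [dL_ap, xL_ap, norm_add_sq_real,
      norm_sub_sq_real, inner_add_right, ← real_inner_self_eq_norm_sq, ← real_inner_self_eq_norm_sq]
    have h1 : ⟪sL L i v, sL L i v⟫_ℝ = ⟪v, rL L i (sL L i v)⟫_ℝ := shOp_inner _ _ _ _
    have h2 : ⟪rL L i v, rL L i v⟫_ℝ = ⟪v, sL L i (rL L i v)⟫_ℝ := shAd_inner _ _ _ _
    rw [h1, h2]; ring
  rw [e]
  have := (lp.hasSum_inner (𝕜 := ℝ) v (rL L i (sL L i v) + sL L i (rL L i v))).mul_left 2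
  refine HasSum.congr_fun' this fun k => ?_
  rw [lp.coeFn_add, Pi.add_apply, sL_rL_same L i v hv, rL_sL_same L i v hv, inner_add_right,
    inner_smul_right, inner_smul_right, real_inner_self_eq_norm_sq]
  ring

variable [FiniteDimensional ℝ W]

theorem lower_box (A G : Fin n → W →L[ℝ] W) (hA : ∀ i x y, ⟪A i x, y⟫_ℝ = ⟪x, A i y⟫_ℝ)
    (hG : ∀ i x y, ⟪G i x, y⟫_ℝ = -⟪x, G i y⟫_ℝ)
    (hGG : ∀ i j x, G i (G j x) + G j (G i x) = if i = j then (-2 : ℝ) • x else 0)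
    (hGA : ∀ i j x, G i (A j x) = -A j (G i x))
    (κ : ℝ) (hκ : 0 < κ) (hκ1 : κ ≤ 1)
    (hco : ∀ (x : Fin n → ℝ) (w : W), κ * (∑ i, x i ^ 2) * ‖w‖ ^ 2 ≤ ‖∑ i, x i • A i w‖ ^ 2)
    (C : ℝ) (hC : ∀ w : W, |∑ i, ⟪w, G i (A i w)⟫_ℝ| ≤ C * ‖w‖ ^ 2) (d : ℕ) (hd : 2 * C ≤ κ * (d + 1))
    (L : ℕ) (u : HS n W) (hu : InBox L u) (hud : ∀ k : Ix n, deg k ≤ d → u k = 0) :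
    κ * ‖u‖ ^ 2 ≤ ‖TopOp A G u‖ ^ 2 := by
  rw [TopOp_box A G L u hu]
  set v : HS n W := diagOp (fun k => (lam k)⁻¹) u with hvdef
  have hvk : ∀ k, v k = (lam k)⁻¹ • u k := fun k => diagOp_apply _ linv_le u k
  have hv : InBox L v := fun k hk => by rw [hvk, hu k hk, smul_zero]
  have huk : ∀ k, ‖u k‖ ^ 2 = (deg k + 1) * ‖v k‖ ^ 2 := fun k => by
    rw [hvk, norm_smul, mul_pow, Real.norm_eq_abs, sq_abs, inv_pow, ← mul_assoc, lam_sq,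
      mul_inv_cancel₀ (by positivity), one_mul]
  have hvd : ∀ k : Ix n, deg k ≤ d → v k = 0 := fun k hk => by rw [hvk, hud k hk, smul_zero]
  have hfs : ∀ (M : W →L[ℝ] W) i (x : HS n W), fib M (sL L i x) = sL L i (fib M x) :=
    fun M i x => fib_shOp M i _ (cL_le L i) x
  have hfr : ∀ (M : W →L[ℝ] W) i (x : HS n W), fib M (rL L i x) = rL L i (fib M x) :=
    fun M i x => fib_shAd M i _ (cL_le L i) x
  have hsi : ∀ i (x y : HS n W), ⟪sL L i x, y⟫_ℝ = ⟪x, rL L i y⟫_ℝ := fun i x y => shOp_inner _ _ _ _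
  have hri : ∀ i (x y : HS n W), ⟪rL L i x, y⟫_ℝ = ⟪x, sL L i y⟫_ℝ := fun i x y => shAd_inner _ _ _ _
  have hXs : ∀ i (x y : HS n W), ⟪(xL L i) x, y⟫_ℝ = ⟪x, (xL L i) y⟫_ℝ := fun i x y => by
    simp only [xL_ap, inner_add_left, inner_add_right, hsi, hri]; ring
  have hXX : ∀ i j, i ≠ j → ∀ x : HS n W, (xL L i) ((xL L j) x) =
      (xL L j) ((xL L i) x) := fun i j h x => by
    simp only [xL_ap, map_add, sL_sL L h, sL_rL L h, ← sL_rL L h.symm, rL_rL L h]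
    abel
  have hAX : ∀ i j (x : HS n W), fib (A i) ((xL L j) x) = (xL L j) (fib (A i) x) :=
    fun i j x => by simp only [xL_ap, map_add, hfs, hfr]
  have hid := dirac_identity (fun i => fib (G i)) (fun i => fib (A i)) (fun i => dL L i)
    (fun i => xL L i) (fun i => fib_inner _ _ (hA i)) hXs
    (fun i x y => by
      rw [fib_inner (G i) (-G i) (by intro x y; simp [hG])]
      have : fib (-G i) y = - fib (G i) y := by ext k; simp
      rw [this, inner_neg_right])
    (fun i x y => by
      simp only [dL_ap, inner_sub_left, inner_sub_right, hsi, hri]; ring)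
    (fun i j x => by simp only [dL_ap, map_sub, hfs, hfr])
    (fun i j x => by simp only [xL_ap, map_add, hfs, hfr])
    (fun i j x => by simp only [dL_ap, map_sub, hfs, hfr])
    hAX
    (fun i j x => by
      by_cases h : i = j
      · subst h; rfl
      · simp only [dL_ap, map_sub, sL_sL L h, sL_rL L h, ← sL_rL L (Ne.symm h),
          rL_rL L h]
        abel)
    (fun i j x => by
      ext k
      have := hGG i j (x k)
      split_ifs at this ⊢
      · change _ = (-2 : ℝ) • x k
        simpa using this
      · simpa using this)
    (fun i j x => by
      ext k
      simpa using hGA i j (x k))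
    v
    (fun i j => by
      by_cases h : i = j
      · subst h
        rw [if_pos rfl]
        have e : sL L i (rL L i v) - rL L i (sL L i v) = v := by
          ext k
          rw [lp.coeFn_sub, Pi.sub_apply, sL_rL_same L i v hv, rL_sL_same L i v hv, ← sub_smul]
          simp
        have e4 : dL L i (xL L i v) - xL L i (dL L i v) =
            (sL L i (rL L i v) - rL L i (sL L i v)) + (sL L i (rL L i v) - rL L i (sL L i v)) := by
          simp only [dL_ap, xL_ap, map_add, map_sub]
          abel
        rw [two_smul, e4, e]
      · rw [if_neg h]
        simp only [dL_ap, xL_ap, map_add, map_sub,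
          sL_sL L h, sL_rL L h, ← sL_rL L (Ne.symm h), rL_rL L h]
        abel)
  rw [hid]
  have hvb : v ∈ boxSub n W L := fun k ⟨i, hi⟩ => hv k ⟨i, by omega⟩
  have hXb : ∀ i, ∀ x ∈ boxSub n W L, ((xL L i : HS n W →L[ℝ] HS n W) : HS n W →ₗ[ℝ] HS n W) x ∈ boxSub n W L :=
    fun i x hx => Submodule.add_mem _ (sL_box L i x hx) (rL_box L i x hx)
  have hAb : ∀ i, ∀ x ∈ boxSub n W L, ((fib (A i) : HS n W →L[ℝ] HS n W) : HS n W →ₗ[ℝ] HS n W) x ∈ boxSub n W L :=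
    fun i x hx => fib_box L _ x hx
  have hpos := pos_joint (B := boxSub n W L) (fun i => LinearMap.restrict _ (hXb i))
    (fun i => LinearMap.restrict _ (hAb i)) (fun i x y => hXs i x y)
    (fun i j h => LinearMap.ext fun x => Subtype.ext (hXX i j h x))
    (fun i j x => Subtype.ext (hAX i j x)) κ
    (fun x w => by
      have := hs_coercive A κ hco x w.1
      have e3 : ((∑ i, x i • (LinearMap.restrict _ (hAb i)) w : boxSub n W L) : HS n W) =
          ∑ i, x i • fib (A i) w.1 := by rw [Submodule.coe_sum]; rfl
      rw [← e3] at this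
      exact this) ⟨v, hvb⟩
  have hpos' : κ * ∑ i, ‖(xL L i) v‖ ^ 2 ≤ ‖∑ i, fib (A i) ((xL L i) v)‖ ^ 2 := by
    have e3 : ((∑ i, (LinearMap.restrict _ (hAb i)) ((LinearMap.restrict _ (hXb i)) ⟨v, hvb⟩) :
        boxSub n W L) : HS n W) = ∑ i, fib (A i) (xL L i v) := by rw [Submodule.coe_sum]; rfl
    rw [← e3]
    exact hpos
  have hcr : |∑ i, ⟪v, fib (G i) (fib (A i) v)⟫_ℝ| ≤ C * ‖v‖ ^ 2 := by
    have h1 : HasSum (fun k => ∑ i, ⟪v k, G i (A i (v k))⟫_ℝ) (∑ i, ⟪v, fib (G i) (fib (A i) v)⟫_ℝ) := by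
      refine hasSum_sum fun i _ => ?_
      simpa using lp.hasSum_inner (𝕜 := ℝ) v (fib (G i) (fib (A i) v))
    have h2 := (normsq_hasSum v).mul_left C
    rw [abs_le]
    constructor
    · have := hasSum_le (fun k => (abs_le.1 (hC (v k))).1) h2.neg h1
      exact this
    · exact hasSum_le (fun k => (abs_le.1 (hC (v k))).2) h1 h2
  have hsumXD : HasSum (fun k : Ix n => ∑ i, (4 * (k i : ℝ) + 2) * ‖v k‖ ^ 2)
      (∑ i, (‖(dL L i) v‖ ^ 2 + ‖(xL L i) v‖ ^ 2)) :=
    hasSum_sum fun i _ => XD_normsq L i v hv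
  have hb1 : 2 * ‖u‖ ^ 2 ≤ ∑ i, (‖(dL L i) v‖ ^ 2 + ‖(xL L i) v‖ ^ 2) := by
    refine hasSum_le (fun k => ?_) ((normsq_hasSum u).mul_left 2) hsumXD
    rw [huk, ← Finset.sum_mul]
    by_cases hk : deg k ≤ d
    · rw [hvd k hk]; simp
    rw [← mul_assoc]
    refine mul_le_mul_of_nonneg_right ?_ (by positivity)
    have : (1 : ℝ) ≤ deg k := by exact_mod_cast (by omega : 1 ≤ deg k)
    rw [Finset.sum_add_distrib, ← Finset.mul_sum]
    have e : ((deg k : ℕ) : ℝ) = ∑ i, (k i : ℝ) := by simp [deg]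
    rw [← e]
    have : (0 : ℝ) ≤ ∑ i : Fin n, 2 := by positivity
    linarith
  have hb2 : ((d : ℝ) + 1) * ‖v‖ ^ 2 ≤ ‖u‖ ^ 2 := by
    refine hasSum_le (fun k => ?_) ((normsq_hasSum v).mul_left _) (normsq_hasSum u)
    rw [huk]
    by_cases hk : deg k ≤ d
    · rw [hvd k hk]; simp
    refine mul_le_mul_of_nonneg_right ?_ (by positivity)
    have : (d : ℝ) ≤ deg k := by exact_mod_cast (by omega : d ≤ deg k)
    linarith
  have hDn : κ * ∑ i, ‖(dL L i) v‖ ^ 2 ≤ ∑ i, ‖(dL L i) v‖ ^ 2 :=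
    mul_le_of_le_one_left (Finset.sum_nonneg fun i _ => by positivity) hκ1
  rw [Finset.sum_add_distrib] at hb1
  have h5 := mul_le_mul_of_nonneg_left hb1 hκ.le
  have h6 := mul_le_mul_of_nonneg_left hb2 hκ.le
  have h7 := mul_le_mul_of_nonneg_right hd (sq_nonneg ‖v‖)
  have h8 := (abs_le.1 hcr).1
  nlinarith

theorem lower_bd (A G : Fin n → W →L[ℝ] W) (hA : ∀ i x y, ⟪A i x, y⟫_ℝ = ⟪x, A i y⟫_ℝ)
    (hG : ∀ i x y, ⟪G i x, y⟫_ℝ = -⟪x, G i y⟫_ℝ)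
    (hGG : ∀ i j x, G i (G j x) + G j (G i x) = if i = j then (-2 : ℝ) • x else 0)
    (hGA : ∀ i j x, G i (A j x) = -A j (G i x))
    (κ : ℝ) (hκ : 0 < κ) (hκ1 : κ ≤ 1)
    (hco : ∀ (x : Fin n → ℝ) (w : W), κ * (∑ i, x i ^ 2) * ‖w‖ ^ 2 ≤ ‖∑ i, x i • A i w‖ ^ 2)
    (C : ℝ) (hC : ∀ w : W, |∑ i, ⟪w, G i (A i w)⟫_ℝ| ≤ C * ‖w‖ ^ 2) (d : ℕ) (hd : 2 * C ≤ κ * (d + 1))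
    (u : HS n W) (hud : ∀ k : Ix n, deg k ≤ d → u k = 0) :
    κ * ‖u‖ ^ 2 ≤ ‖TopOp A G u‖ ^ 2 := by
  have hs := lp.hasSum_single (p := 2) (by norm_num) u
  have hs' : Filter.Tendsto (fun s : Finset (Ix n) => ∑ k ∈ s, (lp.single 2 k (u k) : HS n W)) Filter.atTop (nhds u) := hs
  have t1 : Filter.Tendsto (fun s : Finset (Ix n) => κ * ‖∑ k ∈ s, (lp.single 2 k (u k) : HS n W)‖ ^ 2)
      Filter.atTop (nhds (κ * ‖u‖ ^ 2)) := (hs'.norm.pow 2).const_mul κ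
  have t2 : Filter.Tendsto (fun s : Finset (Ix n) => ‖TopOp A G (∑ k ∈ s, (lp.single 2 k (u k) : HS n W))‖ ^ 2)
      Filter.atTop (nhds (‖TopOp A G u‖ ^ 2)) :=
    ((((TopOp A G).continuous.tendsto u).comp hs').norm).pow 2
  refine le_of_tendsto_of_tendsto' t1 t2 fun s => ?_
  have hval : ∀ k, (∑ j ∈ s, (lp.single 2 j (u j) : HS n W)) k = if k ∈ s then u k else 0 := fun k => by
    rw [lp_sum_apply]
    split_ifs with h
    · rw [Finset.sum_eq_single k]
      · exact lp.single_apply_self _ _ _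
      · intro j _ hj; exact lp.single_apply_ne _ _ _ hj.symm
      · intro h'; exact absurd h h'
    · refine Finset.sum_eq_zero fun j hj => lp.single_apply_ne _ _ _ ?_
      rintro rfl; exact h hj
  refine lower_box A G hA hG hGG hGA κ hκ hκ1 hco C hC d hd (s.sup deg + 2) _ ?_ ?_
  · rintro k ⟨i, hi⟩
    rw [hval, if_neg]
    intro hk
    have := Finset.le_sup (f := deg) hk
    have := le_deg i k
    omega
  · intro k hk
    rw [hval, hud k hk]; simp

end

section
open scoped InnerProductSpace
variable {n : ℕ} {W : Type} [NormedAddCommGroup W] [InnerProductSpace ℝ W]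

/-- families supported on `P` -/
def suppSub (n : ℕ) (W : Type) [NormedAddCommGroup W] [InnerProductSpace ℝ W] (P : Ix n → Prop) :
    Submodule ℝ (HS n W) where
  carrier := {w | ∀ k : Ix n, ¬ P k → w k = 0}
  add_mem' := fun {a b} ha hb k hk => by
    have := ha k hk; have := hb k hk
    simp [*]
  zero_mem' := fun k _ => rfl
  smul_mem' := fun c a ha k hk => by
    have := ha k hk
    simp [*]

theorem suppSub_closed (P : Ix n → Prop) : IsClosed (suppSub n W P : Set (HS n W)) := by
  have : (suppSub n W P : Set (HS n W)) = ⋂ k : Ix n, ⋂ _ : ¬ P k, {w | lp.evalCLM ℝ (fun _ : Ix n => W) 2 k w = 0} := by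
    ext w
    simp only [Set.mem_iInter, Set.mem_setOf_eq]
    rfl
  rw [this]
  refine isClosed_iInter fun k => isClosed_iInter fun _ => ?_
  exact isClosed_eq (ContinuousLinearMap.continuous _) continuous_const

theorem Hf_add (A G : Fin n → W →L[ℝ] W) (u w : Ix n → W) (k : Ix n) :
    Hf A G (u + w) k = Hf A G u k + Hf A G w k := by
  simp only [Hf, ← Finset.sum_add_distrib, Pi.add_apply, map_add, smul_add, smul_sub]
  refine Finset.sum_congr rfl fun i _ => ?_
  abel

theorem Hf_smul (A G : Fin n → W →L[ℝ] W) (c : ℝ) (w : Ix n → W) (k : Ix n) :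
    Hf A G (c • w) k = c • Hf A G w k := by
  simp only [Hf, Finset.smul_sum, Pi.smul_apply, map_smul, smul_add, smul_sub, smul_comm c]

/-- the kernel space -/
def Xsub (A G : Fin n → W →L[ℝ] W) (d : ℕ) : Submodule ℝ (HS n W) where
  carrier := {w | (∀ k : Ix n, Even (deg k) → w k = 0) ∧
    ∀ k : Ix n, Even (deg k) → d < deg k → Hf A G w k = 0}
  add_mem' := fun {a b} ha hb => by
    refine ⟨fun k hk => ?_, fun k hk hd => ?_⟩
    · simp [ha.1 k hk, hb.1 k hk]
    · rw [lp.coeFn_add, Hf_add, ha.2 k hk hd, hb.2 k hk hd, add_zero]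
  zero_mem' := ⟨fun k _ => rfl, fun k _ _ => by simp [Hf]⟩
  smul_mem' := fun c a ha => by
    refine ⟨fun k hk => ?_, fun k hk hd => ?_⟩
    · simp [ha.1 k hk]
    · rw [lp.coeFn_smul, Hf_smul, ha.2 k hk hd, smul_zero]

variable [CompleteSpace W]

instance suppSub_complete (P : Ix n → Prop) : CompleteSpace (suppSub n W P) :=
  (suppSub_closed P).completeSpace_coe

theorem TopOp_odd (A G : Fin n → W →L[ℝ] W) (u : HS n W) (d : ℕ)
    (hu : u ∈ suppSub n W (fun k => Even (deg k) ∧ d < deg k)) :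
    TopOp A G u ∈ suppSub n W (fun k => ¬ Even (deg k)) := by
  intro k hk
  rw [not_not] at hk
  rw [TopOp_apply]
  refine Finset.sum_eq_zero fun i _ => ?_
  have h1 : u (upI i k) = 0 := hu _ fun h => by
    have := h.1
    rw [deg_up] at this
    rw [Nat.even_add_one] at this
    exact this hk
  rw [h1]
  split_ifs with h0
  · simp
  · have h2 : u (dnI i k) = 0 := hu _ fun h => by
      have h3 := deg_dn i k h0
      rw [← h3, Nat.even_add_one] at hk
      exact hk h.1
    rw [h2]; simp

/-- the restricted operator -/
noncomputable def TV (A G : Fin n → W →L[ℝ] W) (d : ℕ) :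
    suppSub n W (fun k => Even (deg k) ∧ d < deg k) →L[ℝ] suppSub n W (fun k => ¬ Even (deg k)) :=
  ((suppSub n W (fun k => ¬ Even (deg k))).orthogonalProjectionOnto).comp
    ((TopOp A G).comp (suppSub n W (fun k => Even (deg k) ∧ d < deg k)).subtypeL)

theorem TV_coe (A G : Fin n → W →L[ℝ] W) (d : ℕ) (u) : ((TV A G d u : suppSub n W (fun k => ¬ Even (deg k))) : HS n W) = TopOp A G u := by
  have h := TopOp_odd A G u.1 d u.2
  exact congrArg Subtype.val (Submodule.orthogonalProjectionOnto_mem_subspace_eq_self ⟨_, h⟩)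

theorem range_TV (A G : Fin n → W →L[ℝ] W) (hA : ∀ i x y, ⟪A i x, y⟫_ℝ = ⟪x, A i y⟫_ℝ)
    (hG : ∀ i x y, ⟪G i x, y⟫_ℝ = -⟪x, G i y⟫_ℝ) (d : ℕ) :
    Module.finrank ℝ (LinearMap.range (TV A G d).toLinearMap)ᗮ = Module.finrank ℝ (Xsub A G d) := by
  have : ((LinearMap.range (TV A G d).toLinearMap)ᗮ).map (Submodule.subtype _) = Xsub A G d := by
    ext w
    rw [Submodule.mem_map]
    have key : ∀ w : suppSub n W (fun k => ¬ Even (deg k)),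
        w ∈ (LinearMap.range (TV A G d).toLinearMap)ᗮ ↔ ∀ k : Ix n, Even (deg k) → d < deg k → Hf A G w.1 k = 0 := by
      intro w
      have hin : ∀ u, ⟪(TV A G d).toLinearMap u, w⟫_ℝ = ⟪u.1, Tad A G w.1⟫_ℝ := fun u => by
        rw [← TopOp_inner A G hA hG, ← TV_coe A G d]; rfl
      rw [Submodule.mem_orthogonal]
      constructor
      · intro h k hk hd
        have hmem : ∀ x : W, (lp.single 2 k x : HS n W) ∈ suppSub n W (fun k => Even (deg k) ∧ d < deg k) := by
          intro x j hj
          rw [lp.single_apply_ne]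
          rintro rfl; exact hj ⟨hk, hd⟩
        have h2 : Tad A G w.1 k = 0 := by
          refine ext_inner_left ℝ fun x => ?_
          rw [inner_zero_right]
          have := h _ (LinearMap.mem_range_self _ ⟨_, hmem x⟩)
          rw [hin] at this
          rw [← this]
          exact (lp.inner_single_left (𝕜 := ℝ) (G := fun _ : Ix n => W) k x _).symm
        rw [Tad_apply] at h2
        exact (smul_eq_zero.1 h2).resolve_left (inv_ne_zero (lam_pos k).ne')
      · rintro h _ ⟨u, rfl⟩
        rw [hin, lp.inner_eq_tsum]
        refine (tsum_congr fun k => ?_).trans tsum_zero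
        by_cases hk : Even (deg k) ∧ d < deg k
        · rw [Tad_apply, h k hk.1 hk.2, smul_zero, inner_zero_right]
        · rw [u.2 k hk, inner_zero_left]
    constructor
    · rintro ⟨w, hw, rfl⟩
      exact ⟨fun k hk => w.2 k (not_not.2 hk), (key w).1 hw⟩
    · intro hw
      exact ⟨⟨w, fun k hk => hw.1 k (not_not.1 hk)⟩, (key _).2 hw.2, rfl⟩
  rw [← this]
  exact (LinearEquiv.finrank_eq (Submodule.equivMapOfInjective _ (Submodule.injective_subtype _) _))

variable [FiniteDimensional ℝ W]

theorem homotopy (A0 A1 G : Fin n → W →L[ℝ] W)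
    (hA0 : ∀ i x y, ⟪A0 i x, y⟫_ℝ = ⟪x, A0 i y⟫_ℝ)
    (hA1 : ∀ i x y, ⟪A1 i x, y⟫_ℝ = ⟪x, A1 i y⟫_ℝ)
    (hG : ∀ i x y, ⟪G i x, y⟫_ℝ = -⟪x, G i y⟫_ℝ)
    (hGG : ∀ i j x, G i (G j x) + G j (G i x) = if i = j then (-2 : ℝ) • x else 0)
    (hGA0 : ∀ i j x, G i (A0 j x) = -A0 j (G i x))
    (hGA1 : ∀ i j x, G i (A1 j x) = -A1 j (G i x))
    (κ : ℝ) (hκ : 0 < κ) (hκ1 : κ ≤ 1)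
    (hco : ∀ (θ : ℝ) (x : Fin n → ℝ) (w : W), κ * (∑ i, x i ^ 2) * ‖w‖ ^ 2 ≤
      ‖∑ i, x i • (Real.cos θ • A0 i w + Real.sin θ • A1 i w)‖ ^ 2) :
    ∃ d : ℕ, Module.finrank ℝ (Xsub A0 G d) = Module.finrank ℝ (Xsub A1 G d) := by
  set Aθ : ℝ → Fin n → W →L[ℝ] W := fun θ i => Real.cos θ • A0 i + Real.sin θ • A1 i with hAθ
  set C : ℝ := ∑ i, ‖G i‖ * (‖A0 i‖ + ‖A1 i‖) with hCdef
  have hC : ∀ θ (w : W), |∑ i, ⟪w, G i (Aθ θ i w)⟫_ℝ| ≤ C * ‖w‖ ^ 2 := by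
    intro θ w
    rw [hCdef, Finset.sum_mul]
    refine (Finset.abs_sum_le_sum_abs _ _).trans (Finset.sum_le_sum fun i _ => ?_)
    refine (abs_real_inner_le_norm _ _).trans ?_
    have h1 : ‖Aθ θ i w‖ ≤ (‖A0 i‖ + ‖A1 i‖) * ‖w‖ := by
      change ‖Real.cos θ • A0 i w + Real.sin θ • A1 i w‖ ≤ _
      refine (norm_add_le _ _).trans ?_
      rw [norm_smul, norm_smul, add_mul]
      refine add_le_add ?_ ?_
      · exact (mul_le_of_le_one_left (norm_nonneg _) (Real.abs_cos_le_one θ)).trans ((A0 i).le_opNorm w)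
      · exact (mul_le_of_le_one_left (norm_nonneg _) (Real.abs_sin_le_one θ)).trans ((A1 i).le_opNorm w)
    have h2 : ‖G i (Aθ θ i w)‖ ≤ ‖G i‖ * ((‖A0 i‖ + ‖A1 i‖) * ‖w‖) :=
      ((G i).le_opNorm _).trans (mul_le_mul_of_nonneg_left h1 (norm_nonneg _))
    calc ‖w‖ * ‖G i (Aθ θ i w)‖ ≤ ‖w‖ * (‖G i‖ * ((‖A0 i‖ + ‖A1 i‖) * ‖w‖)) :=
          mul_le_mul_of_nonneg_left h2 (norm_nonneg _)
      _ = _ := by ring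
  obtain ⟨d, hd⟩ := exists_nat_ge (2 * C / κ)
  have hd' : 2 * C ≤ κ * (d + 1) := by
    rw [div_le_iff₀ hκ] at hd; nlinarith
  refine ⟨d, ?_⟩
  have hAs : ∀ θ i x y, ⟪Aθ θ i x, y⟫_ℝ = ⟪x, Aθ θ i y⟫_ℝ := fun θ i x y => by
    simp [hAθ, inner_add_left, inner_add_right, inner_smul_left, inner_smul_right, hA0, hA1]
  have hGAs : ∀ θ i j x, G i (Aθ θ j x) = -Aθ θ j (G i x) := fun θ i j x => by
    simp [hAθ, hGA0, hGA1]; abel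
  have hlin : ∀ θ, TopOp (Aθ θ) G = Real.cos θ • TopOp A0 0 + Real.sin θ • TopOp A1 0 + TopOp 0 G := by
    intro θ
    refine ContinuousLinearMap.ext fun u => ?_
    ext k
    simp only [ContinuousLinearMap.add_apply, ContinuousLinearMap.smul_apply, lp.coeFn_add,
      lp.coeFn_smul, Pi.add_apply, Pi.smul_apply]
    simp only [TopOp_apply, Finset.smul_sum, ← Finset.sum_add_distrib]
    refine Finset.sum_congr rfl fun i _ => ?_
    simp [hAθ]
  have hcont : Continuous fun θ => TV (Aθ θ) G d := by
    have : (fun θ => TV (Aθ θ) G d) = fun θ => Real.cos θ • TV A0 0 d + Real.sin θ • TV A1 0 d + TV 0 G d := by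
      funext θ
      refine ContinuousLinearMap.ext fun u => Subtype.ext ?_
      rw [TV_coe, hlin]
      simp only [ContinuousLinearMap.add_apply, ContinuousLinearMap.smul_apply, Submodule.coe_add,
        Submodule.coe_smul, TV_coe]
    rw [this]
    fun_prop
  have hmain := coker_finrank_const (fun θ => TV (Aθ θ) G d) hcont (fun θ => ⟨Real.sqrt κ, Real.sqrt_pos.2 hκ, fun u => by
    have h := lower_bd (Aθ θ) G (hAs θ) hG hGG (hGAs θ) κ hκ hκ1 (fun x w => hco θ x w) C (hC θ) d hd' u.1
      (fun k hk => u.2 k (fun h => by omega))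
    have e : ‖TV (Aθ θ) G d u‖ = ‖TopOp (Aθ θ) G u.1‖ := by rw [← TV_coe]; rfl
    rw [e]
    refine abs_le_of_sq_le_sq' ?_ (norm_nonneg _) |>.2
    rw [mul_pow, Real.sq_sqrt hκ.le]
    exact h⟩) 0 (Real.pi / 2)
  rw [range_TV _ _ (hAs _) hG, range_TV _ _ (hAs _) hG] at hmain
  have z0 : Aθ 0 = A0 := by funext i; simp [hAθ]
  have z1 : Aθ (Real.pi / 2) = A1 := by funext i; simp [hAθ]
  rwa [z0, z1] at hmain

end

section

theorem joint_fix {V : Type*} [AddCommGroup V] [Module ℝ V] [FiniteDimensional ℝ V] {n : ℕ}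
    (B A : Fin n → Module.End ℝ V) (hAA : ∀ i, A i * A i = 1) (hBB : ∀ i, B i * B i = 1)
    (hanti : ∀ i, A i * B i = -(B i * A i)) (hAB : ∀ i j, i ≠ j → A i * B j = B j * A i)
    (hB : ∀ i j, B i * B j = B j * B i) (s : Finset (Fin n)) :
    Module.finrank ℝ V = 2 ^ s.card *
      Module.finrank ℝ (⨅ i ∈ s, LinearMap.eqLocus (B i) LinearMap.id : Submodule ℝ V) := by
  induction s using Finset.induction_on with
  | empty =>
    have : (⨅ i ∈ (∅ : Finset (Fin n)), LinearMap.eqLocus (B i) LinearMap.id : Submodule ℝ V) = ⊤ := by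
      simp
    rw [this]; simp
  | insert a s ha ih =>
    set p : Submodule ℝ V := ⨅ i ∈ s, LinearMap.eqLocus (B i) LinearMap.id with hp
    have hmem : ∀ x, x ∈ p ↔ ∀ i ∈ s, B i x = x := fun x => by
      simp [hp, Submodule.mem_iInf, LinearMap.mem_eqLocus]
    have hA : ∀ x ∈ p, A a x ∈ p := fun x hx => by
      rw [hmem] at hx ⊢
      intro i hi
      have h := LinearMap.congr_fun (hAB a i (fun h => ha (h ▸ hi))) x
      simp only [Module.End.mul_apply] at h
      rw [← h, hx i hi]
    have hBp : ∀ x ∈ p, B a x ∈ p := fun x hx => by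
      rw [hmem] at hx ⊢
      intro i hi
      have h := LinearMap.congr_fun (hB a i) x
      simp only [Module.End.mul_apply] at h
      rw [← h, hx i hi]
    have h1 := finrank_split ((A a).restrict hA) ((B a).restrict hBp)
      (LinearMap.ext fun x => Subtype.ext (LinearMap.congr_fun (hAA a) x.1))
      (LinearMap.ext fun x => Subtype.ext (LinearMap.congr_fun (hBB a) x.1))
      (LinearMap.ext fun x => Subtype.ext (LinearMap.congr_fun (hanti a) x.1))
    have h2 : (LinearMap.eqLocus ((B a).restrict hBp) LinearMap.id).map p.subtype =
        ⨅ i ∈ insert a s, LinearMap.eqLocus (B i) LinearMap.id := by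
      ext x
      simp only [Submodule.mem_map, Submodule.mem_iInf, LinearMap.mem_eqLocus, Finset.forall_mem_insert]
      constructor
      · rintro ⟨y, hy, rfl⟩
        exact ⟨congrArg Subtype.val hy, (hmem _).1 y.2⟩
      · rintro ⟨h1, h2⟩
        exact ⟨⟨x, (hmem x).2 h2⟩, Subtype.ext h1, rfl⟩
    rw [ih, h1, Finset.card_insert_of_notMem ha, ← h2,
      LinearEquiv.finrank_eq (Submodule.equivMapOfInjective _ p.injective_subtype _)]
    ring

theorem dirac_sq {R : Type*} [Ring R] [Module ℝ R] {n : ℕ} (Z Y s r : Fin n → R)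
    (hZs : ∀ i j, s i * Z j = Z j * s i) (hZr : ∀ i j, r i * Z j = Z j * r i)
    (hYs : ∀ i j, s i * Y j = Y j * s i) (hYr : ∀ i j, r i * Y j = Y j * r i)
    (hZZ : ∀ i j, Z i * Z j = -(Z j * Z i)) (hYY : ∀ i j, Y i * Y j = -(Y j * Y i))
    (hZY : ∀ i j, Z i * Y j + Y j * Z i = if i = j then 4 else 0)
    (hss : ∀ i j, s i * s j = s j * s i) (hrr : ∀ i j, r i * r j = r j * r i)
    (hsr : ∀ i j, s i * r j = r j * s i + if i = j then 1 else 0) :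
    (∑ i, (Z i * s i + Y i * r i)) * (∑ i, (Z i * s i + Y i * r i)) =
      ∑ i, Z i * Y i + 4 * ∑ i, r i * s i := by
  have hz : ∀ x : R, x = -x → x = 0 := fun x hx => by
    have h : (2 : ℝ) • x = 0 := by rw [two_smul]; nth_rewrite 1 [hx]; simp
    exact (smul_eq_zero.1 h).resolve_left (by norm_num)
  have e1 : ∑ i, ∑ j, Z i * Z j * (s i * s j) = 0 := by
    apply hz
    nth_rewrite 1 [Finset.sum_comm]
    simp_rw [← Finset.sum_neg_distrib]
    refine Finset.sum_congr rfl fun i _ => Finset.sum_congr rfl fun j _ => ?_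
    rw [hZZ j i, hss j i]; noncomm_ring
  have e2 : ∑ i, ∑ j, Y i * Y j * (r i * r j) = 0 := by
    apply hz
    nth_rewrite 1 [Finset.sum_comm]
    simp_rw [← Finset.sum_neg_distrib]
    refine Finset.sum_congr rfl fun i _ => Finset.sum_congr rfl fun j _ => ?_
    rw [hYY j i, hrr j i]; noncomm_ring
  have e3 : ∑ i, ∑ j, Y i * Z j * (r i * s j) = ∑ i, ∑ j, Y j * Z i * (r j * s i) := Finset.sum_comm
  have e4 : (∑ i, (Z i * s i + Y i * r i)) * (∑ i, (Z i * s i + Y i * r i)) =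
      ∑ i, ∑ j, Z i * Z j * (s i * s j) + ∑ i, ∑ j, Y i * Y j * (r i * r j) +
      (∑ i, ∑ j, Z i * Y j * (s i * r j) + ∑ i, ∑ j, Y i * Z j * (r i * s j)) := by
    rw [Finset.sum_mul_sum]
    simp_rw [← Finset.sum_add_distrib]
    refine Finset.sum_congr rfl fun i _ => Finset.sum_congr rfl fun j _ => ?_
    have a1 : Z i * s i * (Z j * s j) = Z i * Z j * (s i * s j) := by
      rw [mul_assoc, ← mul_assoc (s i), hZs, mul_assoc, mul_assoc]
    have a2 : Z i * s i * (Y j * r j) = Z i * Y j * (s i * r j) := by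
      rw [mul_assoc, ← mul_assoc (s i), hYs, mul_assoc, mul_assoc]
    have a3 : Y i * r i * (Z j * s j) = Y i * Z j * (r i * s j) := by
      rw [mul_assoc, ← mul_assoc (r i), hZr, mul_assoc, mul_assoc]
    have a4 : Y i * r i * (Y j * r j) = Y i * Y j * (r i * r j) := by
      rw [mul_assoc, ← mul_assoc (r i), hYr, mul_assoc, mul_assoc]
    rw [add_mul, mul_add, mul_add, a1, a2, a3, a4]
    abel
  rw [e4, e1, e2, e3, add_zero, zero_add, Finset.mul_sum]
  simp_rw [← Finset.sum_add_distrib]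
  refine Finset.sum_congr rfl fun i _ => ?_
  rw [Finset.sum_eq_single i]
  · rw [hsr, if_pos rfl, mul_add, mul_one, add_right_comm, ← add_mul, hZY, if_pos rfl, add_comm]
  · intro j _ hj
    rw [hsr, if_neg hj.symm, add_zero, ← add_mul, hZY, if_neg hj.symm, zero_mul]
  · intro h; exact absurd (Finset.mem_univ i) h

end

section
open scoped InnerProductSpace
variable {n : ℕ} {W : Type} [NormedAddCommGroup W] [InnerProductSpace ℝ W]

/-- formal lowering -/
noncomputable def fs (W : Type) [NormedAddCommGroup W] [InnerProductSpace ℝ W] (i : Fin n) :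
    Module.End ℝ (Ix n → W) where
  toFun w k := Real.sqrt (k i + 1) • w (upI i k)
  map_add' u w := by funext k; simp
  map_smul' c w := by funext k; simp [smul_comm c]

/-- formal raising -/
noncomputable def fr (W : Type) [NormedAddCommGroup W] [InnerProductSpace ℝ W] (i : Fin n) :
    Module.End ℝ (Ix n → W) where
  toFun w k := Real.sqrt (k i) • w (dnI i k)
  map_add' u w := by funext k; simp
  map_smul' c w := by funext k; simp [smul_comm c]

/-- formal fibre map -/
noncomputable def fm (n : ℕ) (M : W →L[ℝ] W) : Module.End ℝ (Ix n → W) where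
  toFun w k := M (w k)
  map_add' u w := by funext k; simp
  map_smul' c w := by funext k; simp

theorem fs_ap (i : Fin n) (w : Ix n → W) (k) : fs W i w k = Real.sqrt (k i + 1) • w (upI i k) := rfl
theorem fr_ap (i : Fin n) (w : Ix n → W) (k) : fr W i w k = Real.sqrt (k i) • w (dnI i k) := rfl
theorem fm_ap (M : W →L[ℝ] W) (w : Ix n → W) (k) : fm n M w k = M (w k) := rfl

theorem fs_fs (i j : Fin n) : fs W i * fs W j = fs W j * fs W i := by
  by_cases h : i = j
  · subst h; rfl
  refine LinearMap.ext fun w => funext fun k => ?_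
  simp only [Module.End.mul_apply, fs_ap, upI_ne h, upI_ne (Ne.symm h), up_up i j]
  rw [smul_comm]

theorem fr_fr (i j : Fin n) : fr W i * fr W j = fr W j * fr W i := by
  by_cases h : i = j
  · subst h; rfl
  refine LinearMap.ext fun w => funext fun k => ?_
  simp only [Module.End.mul_apply, fr_ap, dnI_ne h, dnI_ne (Ne.symm h), dn_dn i j]
  rw [smul_comm]

theorem fr_fs_same (i : Fin n) (w : Ix n → W) (k) : fr W i (fs W i w) k = (k i : ℝ) • w k := by
  simp only [fs_ap, fr_ap]
  by_cases h0 : k i = 0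
  · simp [h0]
  rw [up_dn i k h0, smul_smul, dnI_same]
  have h1 : 1 ≤ k i := by omega
  push_cast [h1]
  rw [sub_add_cancel, Real.mul_self_sqrt (by positivity)]

theorem fs_fr (i j : Fin n) : fs W i * fr W j = fr W j * fs W i + if i = j then 1 else 0 := by
  refine LinearMap.ext fun w => funext fun k => ?_
  by_cases h : i = j
  · subst h
    rw [if_pos rfl, LinearMap.add_apply, Pi.add_apply, Module.End.mul_apply, Module.End.mul_apply,
      fr_fs_same, fs_ap, fr_ap, dn_up, smul_smul, upI_same]
    push_cast
    rw [Real.mul_self_sqrt (by positivity), add_smul, one_smul]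
    rfl
  · rw [if_neg h, add_zero, Module.End.mul_apply, Module.End.mul_apply]
    simp only [fs_ap, fr_ap, upI_ne (Ne.symm h), dnI_ne h]
    rw [up_dn_comm h, smul_comm]

theorem Hf_eq (A G : Fin n → W →L[ℝ] W) (w : Ix n → W) :
    Hf A G w = (∑ i, (fm n (A i + G i) * fs W i + fm n (A i - G i) * fr W i)) w := by
  funext k
  rw [LinearMap.sum_apply, Finset.sum_apply, Hf]
  refine Finset.sum_congr rfl fun i _ => ?_
  simp only [LinearMap.add_apply, Pi.add_apply, Module.End.mul_apply, fm_ap, fs_ap, fr_ap, map_smul,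
    ContinuousLinearMap.add_apply, ContinuousLinearMap.sub_apply]

theorem four_eq : (4 : Module.End ℝ (Ix n → W)) = (4 : ℝ) • 1 := by
  rw [← Algebra.algebraMap_eq_smul_one]; exact (map_ofNat _ 4).symm

theorem Hf_sq (A G : Fin n → W →L[ℝ] W)
    (hAA : ∀ i j x, A i (A j x) + A j (A i x) = if i = j then (2 : ℝ) • x else 0)
    (hGG : ∀ i j x, G i (G j x) + G j (G i x) = if i = j then (-2 : ℝ) • x else 0)
    (hGA : ∀ i j x, G i (A j x) = -A j (G i x)) (w : Ix n → W) (k : Ix n) :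
    Hf A G (Hf A G w) k = ∑ i, (A i + G i) ((A i - G i) (w k)) + (4 * deg k : ℝ) • w k := by
  have hz : ∀ x : W, (-2 : ℝ) • x = -((2 : ℝ) • x) := fun x => by rw [neg_smul]
  have hms : ∀ (M : W →L[ℝ] W) i, fs W i * fm n M = fm n M * fs W i := fun M i =>
    LinearMap.ext fun w => funext fun k => (map_smul M _ _).symm
  have hmr : ∀ (M : W →L[ℝ] W) i, fr W i * fm n M = fm n M * fr W i := fun M i =>
    LinearMap.ext fun w => funext fun k => (map_smul M _ _).symm
  have key := dirac_sq (fun i => fm n (A i + G i)) (fun i => fm n (A i - G i)) (fs W) (fr W)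
    (fun i j => hms _ _) (fun i j => hmr _ _) (fun i j => hms _ _) (fun i j => hmr _ _)
    (fun i j => by
      refine LinearMap.ext fun w => funext fun k => ?_
      change (A i + G i) ((A j + G j) (w k)) = -((A j + G j) ((A i + G i) (w k)))
      have h1 := hAA i j (w k)
      have h2 := hGG i j (w k)
      simp only [ContinuousLinearMap.add_apply, map_add, hGA]
      rw [← sub_eq_zero]
      have h3 : (A i (A j (w k)) + A j (A i (w k))) + (G i (G j (w k)) + G j (G i (w k))) = 0 := by
        rw [h1, h2]; split_ifs <;> simp
      rw [← h3]; abel)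
    (fun i j => by
      refine LinearMap.ext fun w => funext fun k => ?_
      change (A i - G i) ((A j - G j) (w k)) = -((A j - G j) ((A i - G i) (w k)))
      have h1 := hAA i j (w k)
      have h2 := hGG i j (w k)
      simp only [ContinuousLinearMap.sub_apply, map_sub, hGA]
      rw [← sub_eq_zero]
      have h3 : (A i (A j (w k)) + A j (A i (w k))) + (G i (G j (w k)) + G j (G i (w k))) = 0 := by
        rw [h1, h2]; split_ifs <;> simp
      rw [← h3]; abel)
    (fun i j => by
      refine LinearMap.ext fun w => funext fun k => ?_
      have h1 := hAA i j (w k)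
      have h2 := hGG i j (w k)
      have h3 : (A i + G i) ((A j - G j) (w k)) + (A j - G j) ((A i + G i) (w k)) =
          (if i = j then (4 : ℝ) • w k else 0) := by
        simp only [ContinuousLinearMap.sub_apply, ContinuousLinearMap.add_apply, map_sub, map_add, hGA]
        have h3 : (A i (A j (w k)) + A j (A i (w k))) - (G i (G j (w k)) + G j (G i (w k))) =
          (if i = j then (4 : ℝ) • w k else 0) := by
          rw [h1, h2]; split_ifs
          · rw [hz, sub_neg_eq_add, ← add_smul]; norm_num
          · simp
        rw [← h3]; abel
      refine Eq.trans h3 ?_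
      split_ifs
      · have : ((4 : Module.End ℝ (Ix n → W)) w) = (4 : ℝ) • w := by
          rw [four_eq]; rfl
        rw [this]; rfl
      · rfl)
    fs_fs fr_fr fs_fr
  rw [Hf_eq A G, Hf_eq A G, ← Module.End.mul_apply, key, LinearMap.add_apply, Pi.add_apply]
  congr 1
  · rw [LinearMap.sum_apply, Finset.sum_apply]; rfl
  · rw [four_eq, smul_one_mul, LinearMap.smul_apply, Pi.smul_apply, LinearMap.sum_apply, Finset.sum_apply]
    simp only [Module.End.mul_apply, fr_fs_same]
    rw [← Finset.sum_smul, smul_smul]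
    simp [deg]

end

section
open scoped InnerProductSpace
variable {n : ℕ} {W : Type} [NormedAddCommGroup W] [InnerProductSpace ℝ W]

theorem Hf_zero (A G : Fin n → W →L[ℝ] W) (w : Ix n → W) (k : Ix n)
    (h1 : ∀ i, w (upI i k) = 0) (h2 : ∀ i, k i ≠ 0 → w (dnI i k) = 0) : Hf A G w k = 0 := by
  refine Finset.sum_eq_zero fun i _ => ?_
  rw [h1 i]
  by_cases h : k i = 0
  · simp [h]
  · rw [h2 i h]; simp

theorem deg_up_even (i : Fin n) (k : Ix n) : Even (deg (upI i k)) ↔ ¬ Even (deg k) := by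
  rw [deg_up, Nat.even_add_one]

theorem deg_dn_even (i : Fin n) (k : Ix n) (h : k i ≠ 0) : Even (deg (dnI i k)) ↔ ¬ Even (deg k) := by
  rw [← deg_dn i k h, Nat.even_add_one, not_not]

theorem finite_deg (d : ℕ) : {k : Ix n | deg k ≤ d}.Finite := by
  refine (Set.Finite.pi' (t := fun _ : Fin n => Set.Iic d) fun _ => Set.finite_Iic d).subset ?_
  intro k hk i
  exact (le_deg i k).trans hk

variable [FiniteDimensional ℝ W]

/-- the index set -/
abbrev KI (n d : ℕ) := {k : Ix n // Even (deg k) ∧ deg k ≤ d}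

instance (d : ℕ) : Finite (KI n d) :=
  Set.Finite.to_subtype ((finite_deg (n := n) d).subset fun _ hk => hk.2)

/-- the square at degree zero -/
noncomputable def Qop (A G : Fin n → W →L[ℝ] W) : W →ₗ[ℝ] W :=
  ∑ i, ((A i + G i).toLinearMap ∘ₗ (A i - G i).toLinearMap)

theorem Qop_apply (A G : Fin n → W →L[ℝ] W) (x : W) :
    Qop A G x = ∑ i, (A i + G i) ((A i - G i) x) := by
  rw [Qop, LinearMap.sum_apply]; rfl

theorem Qop_inner (A G : Fin n → W →L[ℝ] W)
    (hA : ∀ i x y, ⟪A i x, y⟫_ℝ = ⟪x, A i y⟫_ℝ)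
    (hG : ∀ i x y, ⟪G i x, y⟫_ℝ = -⟪x, G i y⟫_ℝ)
 : ∀ x y, ⟪(Qop A G) x, y⟫_ℝ = ∑ i, ⟪(A i - G i) x, (A i - G i) y⟫_ℝ := by
  have hQa := Qop_apply A G
  generalize hQ : Qop A G = Q at *
  have hadj : ∀ i x y, ⟪(A i + G i) x, y⟫_ℝ = ⟪x, (A i - G i) y⟫_ℝ := fun i x y => by
    simp only [ContinuousLinearMap.add_apply, ContinuousLinearMap.sub_apply, inner_add_left,
      inner_sub_right, hA, hG]; ring
  have hQi : ∀ x y, ⟪Q x, y⟫_ℝ = ∑ i, ⟪(A i - G i) x, (A i - G i) y⟫_ℝ := fun x y => by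
    rw [hQa, sum_inner]; simp only [hadj]
  exact hQi

theorem Qop_symm (A G : Fin n → W →L[ℝ] W)
    (hQi : ∀ x y, ⟪(Qop A G) x, y⟫_ℝ = ∑ i, ⟪(A i - G i) x, (A i - G i) y⟫_ℝ) : (Qop A G).IsSymmetric := by
  have hQa := Qop_apply A G
  generalize hQ : Qop A G = Q at *
  have hQs : Q.IsSymmetric := fun x y => by
    rw [hQi, real_inner_comm, hQi]
    simp only [real_inner_comm]
  exact hQs

theorem Qop_ker (A G : Fin n → W →L[ℝ] W)
    (hQi : ∀ x y, ⟪(Qop A G) x, y⟫_ℝ = ∑ i, ⟪(A i - G i) x, (A i - G i) y⟫_ℝ) : ∀ x, (Qop A G) x = 0 ↔ ∀ i, (A i - G i) x = 0 := by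
  have hQa := Qop_apply A G
  generalize hQ : Qop A G = Q at *
  have hQker : ∀ x, Q x = 0 ↔ ∀ i, (A i - G i) x = 0 := fun x => by
    constructor
    · intro h i
      have h1 := hQi x x
      rw [h, inner_zero_left] at h1
      have h2 := (Finset.sum_eq_zero_iff_of_nonneg (fun i _ => real_inner_self_nonneg)).1 h1.symm i (Finset.mem_univ i)
      exact inner_self_eq_zero.1 h2
    · intro h
      rw [hQa]; simp only [h, map_zero, Finset.sum_const_zero]
  exact hQker

theorem Qop_c (A G : Fin n → W →L[ℝ] W)
    (hQi : ∀ x y, ⟪(Qop A G) x, y⟫_ℝ = ∑ i, ⟪(A i - G i) x, (A i - G i) y⟫_ℝ) : ∀ c : ℝ, 0 < c → ∀ x, (Qop A G) x + c • x = 0 → x = 0 := by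
  have hQa := Qop_apply A G
  generalize hQ : Qop A G = Q at *
  have hQc : ∀ c : ℝ, 0 < c → ∀ x, Q x + c • x = 0 → x = 0 := fun c hc x hx => by
    have h1 : ⟪Q x + c • x, x⟫_ℝ = 0 := by rw [hx, inner_zero_left]
    rw [inner_add_left, hQi, inner_smul_left, real_inner_self_eq_norm_sq] at h1
    have h2 : 0 ≤ ∑ i, ⟪(A i - G i) x, (A i - G i) x⟫_ℝ := Finset.sum_nonneg fun i _ => real_inner_self_nonneg
    simp only [conj_trivial] at h1
    have h3 : ‖x‖ ^ 2 = 0 := by nlinarith [sq_nonneg ‖x‖]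
    simpa using h3
  exact hQc

theorem Qop_surj (A G : Fin n → W →L[ℝ] W)
    (hQc : ∀ c : ℝ, 0 < c → ∀ x, (Qop A G) x + c • x = 0 → x = 0) : ∀ c : ℝ, 0 < c → ∀ y, ∃ x, (Qop A G) x + c • x = y := by
  have hQa := Qop_apply A G
  generalize hQ : Qop A G = Q at *
  have hQsurj : ∀ c : ℝ, 0 < c → ∀ y, ∃ x, Q x + c • x = y := fun c hc y => by
    have hinj : Function.Injective (Q + c • LinearMap.id : W →ₗ[ℝ] W) := by
      rw [injective_iff_map_eq_zero]
      intro x hx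
      exact hQc c hc x hx
    exact LinearMap.injective_iff_surjective.1 hinj y
  exact hQsurj

theorem Qop_range (A G : Fin n → W →L[ℝ] W)
    (hQs : (Qop A G).IsSymmetric) : ∀ y ∈ (LinearMap.ker (Qop A G))ᗮ, ∃ x, (Qop A G) x = y := by
  have hQa := Qop_apply A G
  generalize hQ : Qop A G = Q at *
  have hQrange : ∀ y ∈ (LinearMap.ker Q)ᗮ, ∃ x, Q x = y := fun y hy => by
    rw [← hQs.orthogonal_range, Submodule.orthogonal_orthogonal] at hy
    exact hy
  exact hQrange

/-- evaluation of the Dirac operator in low degree -/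
noncomputable def PsiL (A G : Fin n → W →L[ℝ] W) (d : ℕ) : Xsub A G d →ₗ[ℝ] (KI n d → W) :=
    { toFun := fun w k => Hf A G w.1 k.1
      map_add' := fun u w => by
        funext k
        exact Hf_add A G _ _ _
      map_smul' := fun c w => by
        funext k
        exact Hf_smul A G _ _ _ }

theorem PsiL_apply (A G : Fin n → W →L[ℝ] W) (d : ℕ) (w : Xsub A G d) (k : KI n d) :
    PsiL A G d w k = Hf A G w.1 k.1 := rfl

/-- zero index -/
def k0 (n d : ℕ) : KI n d := ⟨0, by simp [deg]⟩

theorem PsiL_inj (A G : Fin n → W →L[ℝ] W) (d : ℕ)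
    (hQc : ∀ c : ℝ, 0 < c → ∀ x, (Qop A G) x + c • x = 0 → x = 0)
    (hsq : ∀ (w : Ix n → W) k, Hf A G (Hf A G w) k = (Qop A G) (w k) + (4 * deg k : ℝ) • w k)
    : Function.Injective (PsiL A G d) := by
  rw [injective_iff_map_eq_zero]
  intro w hw
  have h0 : Hf A G w.1 = 0 := by
    funext k
    by_cases hk : Even (deg k)
    · by_cases hd : d < deg k
      · exact w.2.2 k hk hd
      · exact congrFun hw ⟨k, hk, not_lt.1 hd⟩
    · refine Hf_zero A G _ k (fun i => w.2.1 _ ((deg_up_even i k).2 hk))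
        (fun i hi => w.2.1 _ ((deg_dn_even i k hi).2 hk))
  apply Subtype.ext
  ext k
  by_cases hk : Even (deg k)
  · exact w.2.1 k hk
  · have h1 := hsq w.1 k
    rw [h0, Hf_zero A G 0 k (fun _ => rfl) (fun _ _ => rfl)] at h1
    have hp : (0 : ℝ) < 4 * deg k := by
      have : 0 < deg k := by
        rcases Nat.eq_zero_or_pos (deg k) with h | h
        · rw [h] at hk; exact absurd (by simp) hk
        · exact h
      positivity
    exact hQc _ hp _ h1.symm

/-- projection -/
noncomputable def PhiL (A G : Fin n → W →L[ℝ] W) (d : ℕ) : (KI n d → W) →ₗ[ℝ] LinearMap.ker (Qop A G) :=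
  (LinearMap.ker (Qop A G)).orthogonalProjectionOnto.toLinearMap ∘ₗ LinearMap.proj (k0 n d)

theorem PhiL_ker (A G : Fin n → W →L[ℝ] W) (d : ℕ) (v : KI n d → W) :
    PhiL A G d v = 0 ↔ v (k0 n d) ∈ (LinearMap.ker (Qop A G))ᗮ := by
  have h : PhiL A G d v = (LinearMap.ker (Qop A G)).orthogonalProjectionOnto (v (k0 n d)) := by
    simp only [PhiL, LinearMap.comp_apply, LinearMap.proj_apply, ContinuousLinearMap.coe_coe]
  rw [h]
  exact Submodule.orthogonalProjectionOnto_eq_zero_iff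

theorem PhiL_surj (A G : Fin n → W →L[ℝ] W) (d : ℕ) : LinearMap.range (PhiL A G d) = ⊤ := by
  rw [LinearMap.range_eq_top]
  intro x
  refine ⟨fun _ => x.1, ?_⟩
  exact Submodule.orthogonalProjectionOnto_mem_subspace_eq_self x

theorem range_le (A G : Fin n → W →L[ℝ] W) (d : ℕ)
    (hQker : ∀ x, (Qop A G) x = 0 ↔ ∀ i, (A i - G i) x = 0)
    (hadj : ∀ i x y, ⟪(A i + G i) x, y⟫_ℝ = ⟪x, (A i - G i) y⟫_ℝ)
    : LinearMap.range (PsiL A G d) ≤ LinearMap.ker (PhiL A G d) := by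
  rintro _ ⟨w, rfl⟩
  rw [LinearMap.mem_ker, PhiL_ker, Submodule.mem_orthogonal]
  intro x hx
  rw [PsiL_apply]
  change ⟪x, Hf A G w.1 0⟫_ℝ = 0
  rw [Hf, inner_sum]
  refine Finset.sum_eq_zero fun i _ => ?_
  have hx' := (hQker x).1 hx i
  have h2 := hadj i (w.1 (upI i 0)) x
  rw [hx', inner_zero_right, real_inner_comm] at h2
  simp only [Pi.zero_apply, Nat.cast_zero, Real.sqrt_zero, zero_smul, add_zero, inner_smul_right]
  rw [ContinuousLinearMap.add_apply] at h2
  rw [h2, mul_zero]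

theorem ker_le (A G : Fin n → W →L[ℝ] W) (d : ℕ)
    (hQsurj : ∀ c : ℝ, 0 < c → ∀ y, ∃ x, (Qop A G) x + c • x = y)
    (hQrange : ∀ y ∈ (LinearMap.ker (Qop A G))ᗮ, ∃ x, (Qop A G) x = y)
    (hsq : ∀ (w : Ix n → W) k, Hf A G (Hf A G w) k = (Qop A G) (w k) + (4 * deg k : ℝ) • w k)
    : LinearMap.ker (PhiL A G d) ≤ LinearMap.range (PsiL A G d) := by
  have hdeg0 : deg (0 : Ix n) = 0 := by simp [deg]
  have hdegpos : ∀ k : Ix n, k ≠ 0 → 0 < deg k := fun k hk => by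
    by_contra h
    apply hk; funext i
    have := le_deg i k
    change k i = 0
    omega
  intro v hv
  rw [LinearMap.mem_ker, PhiL_ker] at hv
  have hy : ∀ k : KI n d, ∃ x, (Qop A G) x + (4 * deg k.1 : ℝ) • x = v k := fun k => by
    by_cases h : k.1 = 0
    · have hk : k = (k0 n d) := Subtype.ext h
      subst hk
      obtain ⟨x, hx⟩ := hQrange _ hv
      refine ⟨x, ?_⟩
      change (Qop A G) x + (4 * ((deg (0 : Ix n) : ℕ) : ℝ)) • x = _
      rw [hdeg0]; simpa using hx
    · have := hdegpos _ h
      exact hQsurj _ (by positivity) _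
  choose y hy using hy
  classical
  let Y : Ix n → W := fun k => if h : Even (deg k) ∧ deg k ≤ d then y ⟨k, h⟩ else 0
  have hY0 : ∀ k : Ix n, ¬ (Even (deg k) ∧ deg k ≤ d) → Y k = 0 := fun k h => dif_neg h
  have hmem : Memℓp (Hf A G Y) 2 := by
    apply memℓp_gen
    refine summable_of_finite_support ((finite_deg (n := n) (d + 1)).subset ?_)
    intro k hk
    by_contra h
    have h' : d + 1 < deg k := not_le.1 h
    apply hk
    simp only
    rw [Hf_zero A G Y k]
    · simp
    · intro i
      apply hY0
      rw [deg_up]; rintro ⟨_, h⟩; omega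
    · intro i hi
      apply hY0
      have := deg_dn i k hi
      rintro ⟨_, h⟩; omega
  have hHH : ∀ k, Hf A G (Hf A G Y) k = if h : Even (deg k) ∧ deg k ≤ d then v ⟨k, h⟩ else 0 := fun k => by
    rw [hsq]
    split_ifs with h
    · rw [← hy ⟨k, h⟩]
      simp only [Y, dif_pos h]
    · rw [hY0 k h]; simp
  refine ⟨⟨⟨Hf A G Y, hmem⟩, ⟨fun k hk => ?_, fun k hk hd => ?_⟩⟩, ?_⟩
  · refine Hf_zero A G Y k (fun i => hY0 _ fun h => ?_) (fun i hi => hY0 _ fun h => ?_)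
    · exact (deg_up_even i k).1 h.1 hk
    · exact (deg_dn_even i k hi).1 h.1 hk
  · change Hf A G (Hf A G Y) k = 0
    rw [hHH, dif_neg (fun h => by omega)]
  · funext k
    change Hf A G (Hf A G Y) k.1 = v k
    rw [hHH, dif_pos k.2]

theorem end_count (A G : Fin n → W →L[ℝ] W) (d : ℕ)
    (hrange : LinearMap.range (PsiL A G d) = LinearMap.ker (PhiL A G d))
    (hinj : Function.Injective (PsiL A G d)) :
    Module.finrank ℝ (Xsub A G d) + Module.finrank ℝ (LinearMap.ker (Qop A G)) =
      Nat.card (KI n d) * Module.finrank ℝ W := by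
  have := Fintype.ofFinite (KI n d)
  have h1 := LinearMap.finrank_range_add_finrank_ker (PhiL A G d)
  rw [PhiL_surj, finrank_top, ← hrange, LinearMap.finrank_range_of_inj hinj, Module.finrank_pi_fintype] at h1
  simp only [Finset.sum_const, Finset.card_univ, smul_eq_mul] at h1
  rw [Nat.card_eq_fintype_card]
  omega

theorem end_spin (A G : Fin n → W →L[ℝ] W)
    (hQker : ∀ x, (Qop A G) x = 0 ↔ ∀ i, (A i - G i) x = 0)
    
    (hAA : ∀ i j x, A i (A j x) + A j (A i x) = if i = j then (2 : ℝ) • x else 0)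
    (hGG : ∀ i j x, G i (G j x) + G j (G i x) = if i = j then (-2 : ℝ) • x else 0)
    (hGA : ∀ i j x, G i (A j x) = -A j (G i x)) : Module.finrank ℝ W = 2 ^ n * Module.finrank ℝ (LinearMap.ker (Qop A G)) := by
  have hAA' : ∀ i x, A i (A i x) = x := fun i x => by
    have := hAA i i x
    rw [if_pos rfl, ← two_smul ℝ] at this
    exact smul_right_injective W (two_ne_zero (α := ℝ)) this
  have hGG' : ∀ i x, G i (G i x) = -x := fun i x => by
    have := hGG i i x
    rw [if_pos rfl, ← two_smul ℝ, neg_smul, ← smul_neg] at this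
    exact smul_right_injective W (two_ne_zero (α := ℝ)) this
  have hAn : ∀ i j, i ≠ j → ∀ x, A i (A j x) = -A j (A i x) := fun i j h x => by
    have := hAA i j x
    rw [if_neg h] at this
    exact eq_neg_of_add_eq_zero_left this
  have hGn : ∀ i j, i ≠ j → ∀ x, G i (G j x) = -G j (G i x) := fun i j h x => by
    have := hGG i j x
    rw [if_neg h] at this
    exact eq_neg_of_add_eq_zero_left this
  have key := joint_fix (fun i => (A i).toLinearMap * (G i).toLinearMap) (fun i => (A i).toLinearMap)
    (fun i => LinearMap.ext fun x => hAA' i x)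
    (fun i => LinearMap.ext fun x => by
      change A i (G i (A i (G i x))) = x
      rw [hGA, map_neg, hAA', hGG', neg_neg])
    (fun i => LinearMap.ext fun x => by
      change A i (A i (G i x)) = - (A i (G i (A i x)))
      rw [hGA, map_neg, neg_neg])
    (fun i j h => LinearMap.ext fun x => by
      change A i (A j (G j x)) = A j (G j (A i x))
      rw [hGA, hAn i j h, map_neg])
    (fun i j => LinearMap.ext fun x => by
      change A i (G i (A j (G j x))) = A j (G j (A i (G i x)))
      by_cases h : i = j
      · subst h; rfl
      · rw [hGA, hGA, hGn i j h, map_neg, map_neg, map_neg, map_neg, neg_neg, hAn i j h])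
    Finset.univ
  have e : (⨅ i ∈ (Finset.univ : Finset (Fin n)), LinearMap.eqLocus ((A i).toLinearMap * (G i).toLinearMap) LinearMap.id :
      Submodule ℝ W) = LinearMap.ker (Qop A G) := by
    ext x
    simp only [Submodule.mem_iInf, Finset.mem_univ, true_imp_iff, LinearMap.mem_eqLocus, LinearMap.mem_ker, hQker]
    refine forall_congr' fun i => ?_
    change A i (G i x) = x ↔ A i x - G i x = 0
    rw [sub_eq_zero]
    constructor
    · intro h; nth_rewrite 1 [← h]; exact hAA' i _
    · intro h; rw [← h]; exact hAA' i x
  rw [e] at key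
  simpa using key

theorem endpoint (A G : Fin n → W →L[ℝ] W)
    (hA : ∀ i x y, ⟪A i x, y⟫_ℝ = ⟪x, A i y⟫_ℝ)
    (hG : ∀ i x y, ⟪G i x, y⟫_ℝ = -⟪x, G i y⟫_ℝ)
    (hAA : ∀ i j x, A i (A j x) + A j (A i x) = if i = j then (2 : ℝ) • x else 0)
    (hGG : ∀ i j x, G i (G j x) + G j (G i x) = if i = j then (-2 : ℝ) • x else 0)
    (hGA : ∀ i j x, G i (A j x) = -A j (G i x)) (d : ℕ) :
    ∃ c K0 : ℕ, Module.finrank ℝ (Xsub A G d) + K0 = c * Module.finrank ℝ W ∧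
      Module.finrank ℝ W = 2 ^ n * K0 := by
  have hi := Qop_inner A G hA hG
  have hc := Qop_c A G hi
  have hk := Qop_ker A G hi
  have hsq : ∀ (w : Ix n → W) k, Hf A G (Hf A G w) k = Qop A G (w k) + (4 * deg k : ℝ) • w k := fun w k => by
    rw [Hf_sq A G hAA hGG hGA, Qop_apply]
  have hadj : ∀ i x y, ⟪(A i + G i) x, y⟫_ℝ = ⟪x, (A i - G i) y⟫_ℝ := fun i x y => by
    simp only [ContinuousLinearMap.add_apply, ContinuousLinearMap.sub_apply, inner_add_left,
      inner_sub_right, hA, hG]; ring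
  refine ⟨_, _, end_count A G d (le_antisymm (range_le A G d hk hadj)
    (ker_le A G d (Qop_surj A G hc) (Qop_range A G (Qop_symm A G hi)) hsq)) (PsiL_inj A G d hc hsq),
    end_spin A G hk hAA hGG hGA⟩

end

section
open scoped InnerProductSpace
variable {n : ℕ} {W : Type} [NormedAddCommGroup W] [InnerProductSpace ℝ W]

theorem coercive_of_inj [FiniteDimensional ℝ W] (A : Fin n → W →L[ℝ] W)
    (h : ∀ x : Fin n → ℝ, x ≠ 0 → ∀ w, ∑ i, x i • A i w = 0 → w = 0) :
    ∃ κ : ℝ, 0 < κ ∧ ∀ (x : Fin n → ℝ) w, κ * (∑ i, x i ^ 2) * ‖w‖ ^ 2 ≤ ‖∑ i, x i • A i w‖ ^ 2 := by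
  have : ProperSpace W := FiniteDimensional.proper_real W
  let K : Set (EuclideanSpace ℝ (Fin n) × W) := Metric.sphere 0 1 ×ˢ Metric.sphere 0 1
  have hK : IsCompact K := (isCompact_sphere 0 1).prod (isCompact_sphere 0 1)
  let g : EuclideanSpace ℝ (Fin n) × W → ℝ := fun p => ‖∑ i, p.1 i • A i p.2‖ ^ 2
  have hg : Continuous g := by
    unfold g
    fun_prop
  obtain ⟨κ, hκ, hle⟩ := hK.exists_forall_le' hg.continuousOn (a := 0) (by
    rintro ⟨x, w⟩ ⟨hx, hw⟩
    simp only [mem_sphere_iff_norm, sub_zero] at hx hw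
    have hne : ∑ i, x i • A i w ≠ 0 := fun h0 => by
      have := h x.ofLp (fun h1 => by
        have : x = 0 := by ext i; exact congrFun h1 i
        rw [this] at hx; simp at hx) w h0
      rw [this] at hw; simp at hw
    have := norm_pos_iff.2 hne
    change 0 < ‖∑ i, x i • A i w‖ ^ 2
    positivity)
  refine ⟨κ, hκ, fun x w => ?_⟩
  by_cases hx : x = 0
  · subst hx; simp
  by_cases hw : w = 0
  · subst hw; simp
  let X : EuclideanSpace ℝ (Fin n) := WithLp.toLp 2 x
  have hX : ‖X‖ ^ 2 = ∑ i, x i ^ 2 := by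
    rw [EuclideanSpace.norm_sq_eq]; simp [X]
  have hX0 : 0 < ‖X‖ := norm_pos_iff.2 fun h0 => hx (by
    funext i
    exact congrArg (fun z : EuclideanSpace ℝ (Fin n) => z i) h0)
  have hw0 : 0 < ‖w‖ := norm_pos_iff.2 hw
  have := hle (‖X‖⁻¹ • X, ‖w‖⁻¹ • w) ⟨by
    simp [norm_smul, hX0.ne'], by simp [norm_smul, hw0.ne']⟩
  have e : g (‖X‖⁻¹ • X, ‖w‖⁻¹ • w) = (‖X‖⁻¹ * ‖w‖⁻¹) ^ 2 * ‖∑ i, x i • A i w‖ ^ 2 := by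
    have : ∑ i, (‖X‖⁻¹ • X) i • A i (‖w‖⁻¹ • w) = (‖X‖⁻¹ * ‖w‖⁻¹) • ∑ i, x i • A i w := by
      rw [Finset.smul_sum]
      refine Finset.sum_congr rfl fun i _ => ?_
      rw [map_smul]
      simp only [PiLp.smul_apply, smul_smul, smul_eq_mul, X]
      congr 1; ring
    change ‖∑ i, (‖X‖⁻¹ • X) i • A i (‖w‖⁻¹ • w)‖ ^ 2 = _
    rw [this, norm_smul, mul_pow]; simp [mul_pow]
  rw [e] at this
  rw [← hX]
  calc κ * ‖X‖ ^ 2 * ‖w‖ ^ 2 ≤ ((‖X‖⁻¹ * ‖w‖⁻¹) ^ 2 * ‖∑ i, x i • A i w‖ ^ 2) * ‖X‖ ^ 2 * ‖w‖ ^ 2 := by gcongr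
    _ = _ := by field_simp

theorem coercive_path (A0 A1 : Fin n → W →L[ℝ] W)
    (hA0 : ∀ i x y, ⟪A0 i x, y⟫_ℝ = ⟪x, A0 i y⟫_ℝ)
    (hA1 : ∀ i x y, ⟪A1 i x, y⟫_ℝ = ⟪x, A1 i y⟫_ℝ)
    (h01 : ∀ i j x, A0 i (A1 j x) = -A1 j (A0 i x))
    (hAA : ∀ i j x, A1 i (A1 j x) + A1 j (A1 i x) = if i = j then (2 : ℝ) • x else 0)
    (κ : ℝ) (hκ1 : κ ≤ 1)
    (hc : ∀ (x : Fin n → ℝ) w, κ * (∑ i, x i ^ 2) * ‖w‖ ^ 2 ≤ ‖∑ i, x i • A0 i w‖ ^ 2)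
    (θ : ℝ) (x : Fin n → ℝ) (w : W) :
    κ * (∑ i, x i ^ 2) * ‖w‖ ^ 2 ≤ ‖∑ i, x i • (Real.cos θ • A0 i w + Real.sin θ • A1 i w)‖ ^ 2 := by
  set a := ∑ i, x i • A0 i w with ha
  set b := ∑ i, x i • A1 i w with hb
  have e : ∑ i, x i • (Real.cos θ • A0 i w + Real.sin θ • A1 i w) = Real.cos θ • a + Real.sin θ • b := by
    rw [ha, hb, Finset.smul_sum, Finset.smul_sum, ← Finset.sum_add_distrib]
    refine Finset.sum_congr rfl fun i _ => ?_
    rw [smul_add, smul_comm (x i), smul_comm (x i)]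
  have hab : ⟪a, b⟫_ℝ = 0 := by
    rw [ha, hb, sum_inner]
    refine Finset.sum_eq_zero fun i _ => ?_
    rw [inner_sum]
    refine Finset.sum_eq_zero fun j _ => ?_
    have h1 : ⟪A0 i w, A1 j w⟫_ℝ = -⟪A0 i w, A1 j w⟫_ℝ := by
      conv_lhs => rw [hA0, h01, inner_neg_right, ← hA1, real_inner_comm]
    have h2 : ⟪A0 i w, A1 j w⟫_ℝ = 0 := by linarith
    simp [inner_smul_left, inner_smul_right, h2]
  have hbb : ‖b‖ ^ 2 = (∑ i, x i ^ 2) * ‖w‖ ^ 2 := by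
    rw [← real_inner_self_eq_norm_sq, hb, sum_inner, Finset.sum_mul]
    refine Finset.sum_congr rfl fun i _ => ?_
    rw [inner_sum, Finset.sum_eq_single i]
    · have h1 := congrArg (fun z => ⟪w, z⟫_ℝ) (hAA i i w)
      simp only [if_true, inner_add_right, inner_smul_right, ← hA1] at h1
      rw [hA1 i (A1 i w)] at h1
      have h2 : ⟪A1 i w, A1 i w⟫_ℝ = ‖w‖ ^ 2 := by
        rw [← real_inner_self_eq_norm_sq]; linarith
      rw [inner_smul_left, inner_smul_right, h2]; simp; ring
    · intro j _ hj
      have h1 := congrArg (fun z => ⟪w, z⟫_ℝ) (hAA i j w)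
      simp only [if_neg (Ne.symm hj), inner_add_right, ← hA1, inner_zero_right] at h1
      rw [hA1 i (A1 j w), hA1 j (A1 i w), real_inner_comm (A1 i w) (A1 j w)] at h1
      have h2 : ⟪A1 i w, A1 j w⟫_ℝ = 0 := by linarith
      rw [inner_smul_left, inner_smul_right, h2]; simp
    · simp
  rw [e, norm_add_sq_real, norm_smul, norm_smul, inner_smul_left, inner_smul_right, hab, mul_pow, mul_pow, hbb]
  simp only [Real.norm_eq_abs, sq_abs, mul_zero, add_zero]
  have h1 := hc x w
  have h2 : 0 ≤ (∑ i, x i ^ 2) * ‖w‖ ^ 2 := by positivity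
  have h3 := Real.cos_sq_add_sin_sq θ
  calc κ * (∑ i, x i ^ 2) * ‖w‖ ^ 2
      = Real.cos θ ^ 2 * (κ * (∑ i, x i ^ 2) * ‖w‖ ^ 2) + Real.sin θ ^ 2 * (κ * ((∑ i, x i ^ 2) * ‖w‖ ^ 2)) := by
        linear_combination (-(κ * (∑ i, x i ^ 2) * ‖w‖ ^ 2)) * h3
    _ ≤ Real.cos θ ^ 2 * ‖a‖ ^ 2 + Real.sin θ ^ 2 * (1 * ((∑ i, x i ^ 2) * ‖w‖ ^ 2)) := by gcongr
    _ = _ := by ring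

theorem Hf_fib (A G : Fin n → W →L[ℝ] W) (R : W →L[ℝ] W) (c : ℝ)
    (hA : ∀ j x, A j (R x) = c • R (A j x)) (hG : ∀ j x, G j (R x) = c • R (G j x))
    (w : HS n W) (k : Ix n) : Hf A G (fib R w) k = c • R (Hf A G w k) := by
  unfold Hf
  rw [map_sum, Finset.smul_sum]
  refine Finset.sum_congr rfl fun i _ => ?_
  simp only [fib_apply, hA, hG, map_add, map_smul, map_sub]
  module

theorem X_dvd {m : ℕ} (A G : Fin n → W →L[ℝ] W) (d : ℕ)
    (R : Fin (m+1) ⊕ Fin 1 → W →L[ℝ] W) (hR : IsCl (sgn (m+1) 1) R)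
    (c : Fin (m+1) ⊕ Fin 1 → ℝ)
    (hA : ∀ i j x, A j (R i x) = c i • R i (A j x)) (hG : ∀ i j x, G j (R i x) = c i • R i (G j x)) :
    2 ^ (hrBeta m + 1) ∣ Module.finrank ℝ (Xsub A G d) := by
  by_cases hf : FiniteDimensional ℝ (Xsub A G d)
  swap
  · rw [Module.finrank_of_not_finite hf]; exact dvd_zero _
  have hcl : IsCl (sgn (m+1) 1) (fun i => ((fib (R i) : HS n W →L[ℝ] HS n W) : Module.End ℝ (HS n W))) := by
    constructor
    · intro i
      refine LinearMap.ext fun w => ?_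
      ext k
      have := congrArg (fun T : W →L[ℝ] W => T (w k)) (hR.1 i)
      simp only [ContinuousLinearMap.mul_apply] at this
      change fib (R i) (fib (R i) w) k = _
      rw [fib_apply, fib_apply, this]
      rcases i with i | i <;> simp [sgn]
    · intro i j hij
      refine LinearMap.ext fun w => ?_
      ext k
      have := congrArg (fun T : W →L[ℝ] W => T (w k)) (hR.2 i j hij)
      simp only [ContinuousLinearMap.mul_apply, ContinuousLinearMap.neg_apply] at this
      change fib (R i) (fib (R j) w) k = -(fib (R j) (fib (R i) w)) k
      rw [fib_apply, fib_apply, this]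
      simp
  refine HasCl.beta_dvd' ⟨Xsub A G d, inferInstance, inferInstance, hf, _, isCl_restrict hcl (Xsub A G d) ?_, rfl⟩
  intro i w hw
  refine ⟨fun k hk => ?_, fun k hk hd => ?_⟩
  · change fib (R i) w k = 0
    rw [fib_apply, hw.1 k hk, map_zero]
  · change Hf A G (fib (R i) w) k = 0
    rw [Hf_fib A G (R i) (c i) (hA i) (hG i), hw.2 k hk hd, map_zero, smul_zero]

theorem W_dvd {m : ℕ} [FiniteDimensional ℝ W]
    (R : Fin (m+1) ⊕ Fin 1 → W →L[ℝ] W) (hR : IsCl (sgn (m+1) 1) R) :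
    2 ^ (hrBeta m + 1) ∣ Module.finrank ℝ W := by
  refine HasCl.beta_dvd' ⟨W, inferInstance, inferInstance, inferInstance,
    fun i => ((R i : W →L[ℝ] W) : Module.End ℝ W), ⟨?_, ?_⟩, rfl⟩
  · intro i
    refine LinearMap.ext fun w => ?_
    have := congrArg (fun T : W →L[ℝ] W => T w) (hR.1 i)
    simp only [ContinuousLinearMap.mul_apply] at this
    change R i (R i w) = _
    rw [this]
    rcases i with i | i <;> simp [sgn]
  · intro i j hij
    refine LinearMap.ext fun w => ?_
    exact congrArg (fun T : W →L[ℝ] W => T w) (hR.2 i j hij)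

theorem core {m : ℕ} [FiniteDimensional ℝ W] [CompleteSpace W] (A0 A1 G : Fin n → W →L[ℝ] W)
    (hA0 : ∀ i x y, ⟪A0 i x, y⟫_ℝ = ⟪x, A0 i y⟫_ℝ)
    (hA1 : ∀ i x y, ⟪A1 i x, y⟫_ℝ = ⟪x, A1 i y⟫_ℝ)
    (hG : ∀ i x y, ⟪G i x, y⟫_ℝ = -⟪x, G i y⟫_ℝ)
    (h01 : ∀ i j x, A0 i (A1 j x) = -A1 j (A0 i x))
    (hAA : ∀ i j x, A1 i (A1 j x) + A1 j (A1 i x) = if i = j then (2 : ℝ) • x else 0)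
    (hGG : ∀ i j x, G i (G j x) + G j (G i x) = if i = j then (-2 : ℝ) • x else 0)
    (hGA0 : ∀ i j x, G i (A0 j x) = -A0 j (G i x))
    (hGA1 : ∀ i j x, G i (A1 j x) = -A1 j (G i x))
    (hinv : ∀ x : Fin n → ℝ, x ≠ 0 → ∀ w, ∑ i, x i • A0 i w = 0 → w = 0)
    (R : Fin (m+1) ⊕ Fin 1 → W →L[ℝ] W) (hR : IsCl (sgn (m+1) 1) R)
    (c : Fin (m+1) ⊕ Fin 1 → ℝ)
    (hRA : ∀ i j x, A0 j (R i x) = c i • R i (A0 j x)) (hRG : ∀ i j x, G j (R i x) = c i • R i (G j x))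
    (K : ℕ) (hK : Module.finrank ℝ W = 2 ^ n * K) : 2 ^ (hrBeta m + 1) ∣ K := by
  obtain ⟨κ0, hκ0, hco⟩ := coercive_of_inj A0 hinv
  obtain ⟨d, hd⟩ := homotopy A0 A1 G hA0 hA1 hG hGG hGA0 hGA1 (min κ0 1) (lt_min hκ0 one_pos)
    (min_le_right _ _) (coercive_path A0 A1 hA0 hA1 h01 hAA _ (min_le_right _ _) fun x w => by
      refine le_trans ?_ (hco x w)
      gcongr
      exact min_le_left _ _)
  obtain ⟨c', K0, h1, h2⟩ := endpoint A1 G hA1 hG hAA hGG hGA1 d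
  have hKK : K0 = K := Nat.eq_of_mul_eq_mul_left (by positivity : 0 < 2 ^ n) (h2.symm.trans hK)
  subst hKK
  have hX := X_dvd A0 G d R hR c hRA hRG
  rw [hd] at hX
  refine (Nat.dvd_add_right hX).1 ?_
  rw [h1]
  exact (W_dvd R hR).mul_left _

end

section
open scoped InnerProductSpace Kronecker

/-- matrices as operators -/
noncomputable abbrev TT {ι : Type} [Fintype ι] [DecidableEq ι] (M : Matrix ι ι ℝ) :
    EuclideanSpace ℝ ι →L[ℝ] EuclideanSpace ℝ ι := Matrix.toEuclideanCLM (n := ι) (𝕜 := ℝ) M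

theorem TT_inner {ι : Type} [Fintype ι] [DecidableEq ι] (M : Matrix ι ι ℝ) (x y : EuclideanSpace ℝ ι) :
    ⟪TT M x, y⟫_ℝ = ⟪x, TT Mᵀ y⟫_ℝ := by
  have h : TT Mᵀ = ContinuousLinearMap.adjoint (TT M) := by
    rw [← ContinuousLinearMap.star_eq_adjoint, ← map_star, star_eq_conjTranspose, conjTranspose_eq_transpose_of_trivial]
  rw [h, ContinuousLinearMap.adjoint_inner_right]

theorem TT_mul {ι : Type} [Fintype ι] [DecidableEq ι] (M M' : Matrix ι ι ℝ) (x : EuclideanSpace ℝ ι) :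
    TT M (TT M' x) = TT (M * M') x := by
  rw [TT, TT, TT, map_mul]; rfl

theorem hasM_pow (n : ℕ) : HasM (sgn (n+1) n) (2 ^ n) := by
  induction n with
  | zero => exact hasM_base
  | succ n ih => rw [pow_succ, mul_comm]; exact ih.double

theorem matrix_core {m : ℕ} {κ L : Type} [Fintype κ] [DecidableEq κ] [Fintype L] [DecidableEq L]
    (e : Fin (m+1+1) ⊕ Fin (m+1) → Matrix κ κ ℝ) (he : IsCl (sgn (m+1+1) (m+1)) e)
    (hT : ∀ i, (e i)ᵀ = (sgn (m+1+1) (m+1) i : Matrix κ κ ℝ) * e i)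
    (hcard : Fintype.card κ = 2 ^ (m+1))
    (J : Matrix L L ℝ) (hJ : J * J = -1) (hJT : Jᵀ = -J) (F : Fin (m+1) → Matrix L L ℝ)
    (hF : ∀ i, (F i)ᵀ = F i) (hFJ : ∀ i, F i * J = -(J * F i))
    (hinv : ∀ x : Fin (m+1) → ℝ, x ≠ 0 → IsUnit (∑ i, x i • F i)) :
    2 ^ (hrBeta m + 1) ∣ Fintype.card L := by
  set α := e (Sum.inl (Fin.last _)) with hα
  let γ : Fin (m+1) → Matrix κ κ ℝ := fun i => e (Sum.inl i.castSucc)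
  let δ : Fin (m+1) → Matrix κ κ ℝ := fun i => e (Sum.inr i)
  have hαT : αᵀ = α := by rw [hα, hT]; simp [sgn]
  have hγT : ∀ i, (γ i)ᵀ = γ i := fun i => by simp only [γ]; rw [hT]; simp [sgn]
  have hδT : ∀ i, (δ i)ᵀ = -δ i := fun i => by simp only [δ]; rw [hT]; simp [sgn]
  have hαα : α * α = 1 := by rw [hα, he.1]; simp [sgn]
  have hγγ : ∀ i, γ i * γ i = 1 := fun i => by simp only [γ]; rw [he.1]; simp [sgn]
  have hδδ : ∀ i, δ i * δ i = -1 := fun i => by simp only [δ]; rw [he.1]; simp [sgn]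
  have hγn : ∀ i j, i ≠ j → γ i * γ j = -(γ j * γ i) := fun i j h => he.2 _ _ (by simpa using h)
  have hδn : ∀ i j, i ≠ j → δ i * δ j = -(δ j * δ i) := fun i j h => he.2 _ _ (by simpa using h)
  have hαγ : ∀ i, α * γ i = -(γ i * α) := fun i => he.2 _ _ (by simpa using (Fin.castSucc_ne_last i).symm)
  have hαδ : ∀ i, α * δ i = -(δ i * α) := fun i => he.2 _ _ (by simp)
  have hγδ : ∀ i j, γ i * δ j = -(δ j * γ i) := fun i j => he.2 _ _ (by simp)
  have neg_k : ∀ (a : Matrix κ κ ℝ) (b : Matrix L L ℝ), (-a) ⊗ₖ b = -(a ⊗ₖ b) := fun a b => by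
    ext; simp [kroneckerMap_apply]
  have k_neg : ∀ (a : Matrix κ κ ℝ) (b : Matrix L L ℝ), a ⊗ₖ (-b) = -(a ⊗ₖ b) := fun a b => by
    ext; simp [kroneckerMap_apply]
  have kT : ∀ (a : Matrix κ κ ℝ) (b : Matrix L L ℝ), (a ⊗ₖ b)ᵀ = aᵀ ⊗ₖ bᵀ := fun a b => by
    ext; simp [kroneckerMap_apply]
  have kk : ∀ (a c : Matrix κ κ ℝ) (b d : Matrix L L ℝ), (a ⊗ₖ b) * (c ⊗ₖ d) = (a * c) ⊗ₖ (b * d) :=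
    fun a c b d => (mul_kronecker_mul a c b d).symm
  have nT : ∀ M : Matrix (κ × L) (κ × L) ℝ, TT (-M) = -TT M := fun M => map_neg _ _
  have oneT : TT (1 : Matrix (κ × L) (κ × L) ℝ) = 1 := map_one _
  let R : Fin (m+1) ⊕ Fin 1 → Matrix (κ × L) (κ × L) ℝ :=
    Sum.elim (fun i => (δ i * α) ⊗ₖ 1) (fun _ => α ⊗ₖ J)
  have hda : ∀ i j, (δ i * α) * (δ j * α) = -(δ i * δ j) := fun i j => by
    rw [mul_assoc, ← mul_assoc α, hαδ, neg_mul, mul_assoc (δ j), hαα, mul_one, mul_neg]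
  have hR : IsCl (sgn (m+1) 1) R := by
    constructor
    · rintro (i | i)
      · change ((δ i * α) ⊗ₖ (1 : Matrix L L ℝ)) * ((δ i * α) ⊗ₖ (1 : Matrix L L ℝ)) = _
        rw [kk, hda, hδδ, neg_neg, mul_one, one_kronecker_one]; simp [sgn]
      · change (α ⊗ₖ J) * (α ⊗ₖ J) = _
        rw [kk, hαα, hJ, k_neg, one_kronecker_one]; simp [sgn]
    · rintro (i | i) (j | j) hij
      · change ((δ i * α) ⊗ₖ (1 : Matrix L L ℝ)) * ((δ j * α) ⊗ₖ (1 : Matrix L L ℝ)) =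
          -(((δ j * α) ⊗ₖ (1 : Matrix L L ℝ)) * ((δ i * α) ⊗ₖ (1 : Matrix L L ℝ)))
        rw [kk, kk, hda, hda, hδn i j (by simpa using hij), neg_k, neg_k]
      · change ((δ i * α) ⊗ₖ (1 : Matrix L L ℝ)) * (α ⊗ₖ J) = -((α ⊗ₖ J) * ((δ i * α) ⊗ₖ (1 : Matrix L L ℝ)))
        rw [kk, kk, ← mul_assoc α, hαδ, neg_mul, neg_k, neg_neg, one_mul, mul_one]
      · change (α ⊗ₖ J) * ((δ j * α) ⊗ₖ (1 : Matrix L L ℝ)) = -(((δ j * α) ⊗ₖ (1 : Matrix L L ℝ)) * (α ⊗ₖ J))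
        rw [kk, kk, ← mul_assoc α, hαδ, neg_mul, neg_k, one_mul, mul_one]
      · exact absurd (by rw [Subsingleton.elim i j]) hij
  let c : Fin (m+1) ⊕ Fin 1 → ℝ := Sum.elim (fun _ => 1) (fun _ => -1)
  refine core (W := EuclideanSpace ℝ (κ × L)) (n := m+1) (m := m)
    (fun i => TT (1 ⊗ₖ F i)) (fun i => TT (δ i ⊗ₖ J)) (fun i => TT (γ i ⊗ₖ J))
    (fun i x y => ?_) (fun i x y => ?_) (fun i x y => ?_) (fun i j x => ?_) (fun i j x => ?_)
    (fun i j x => ?_) (fun i j x => ?_) (fun i j x => ?_) (fun x hx w hw => ?_)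
    (fun i => TT (R i)) ⟨fun i => ?_, fun i j hij => ?_⟩ c (fun i j x => ?_) (fun i j x => ?_) _ ?_
  · rw [TT_inner, kT, hF, transpose_one]
  · rw [TT_inner, kT, hδT, hJT, neg_k, k_neg, neg_neg]
  · rw [TT_inner, kT, hγT, hJT, k_neg, nT, ContinuousLinearMap.neg_apply, inner_neg_right]
  · rw [TT_mul, TT_mul, kk, kk, hFJ, k_neg, nT, ContinuousLinearMap.neg_apply, one_mul, mul_one]
  · rw [TT_mul, TT_mul, kk, kk, hJ]
    split_ifs with h
    · subst h
      rw [hδδ, neg_k, k_neg, neg_neg, one_kronecker_one, oneT, two_smul]; rfl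
    · rw [hδn i j h, neg_k, nT, ContinuousLinearMap.neg_apply, neg_add_cancel]
  · rw [TT_mul, TT_mul, kk, kk, hJ]
    split_ifs with h
    · subst h
      rw [hγγ, k_neg, one_kronecker_one, nT, oneT, neg_smul, two_smul, neg_add]; rfl
    · rw [hγn i j h, neg_k, nT, ContinuousLinearMap.neg_apply, neg_add_cancel]
  · rw [TT_mul, TT_mul, kk, kk, hFJ, k_neg, nT, ContinuousLinearMap.neg_apply, one_mul, mul_one, neg_neg]
  · rw [TT_mul, TT_mul, kk, kk, hγδ, neg_k, nT, ContinuousLinearMap.neg_apply]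
  · obtain ⟨u, hu⟩ := hinv x hx
    have h1 : ∑ i, x i • TT ((1 : Matrix κ κ ℝ) ⊗ₖ F i) w = TT ((1 : Matrix κ κ ℝ) ⊗ₖ (u : Matrix L L ℝ)) w := by
      have : (1 : Matrix κ κ ℝ) ⊗ₖ (u : Matrix L L ℝ) = ∑ i, x i • ((1 : Matrix κ κ ℝ) ⊗ₖ F i) := by
        rw [hu]
        ext a b
        simp only [kroneckerMap_apply, Matrix.sum_apply, Matrix.smul_apply, smul_eq_mul, Finset.mul_sum]
        refine Finset.sum_congr rfl fun i _ => ?_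
        ring
      rw [this, TT, map_sum, ContinuousLinearMap.sum_apply]
      refine Finset.sum_congr rfl fun i _ => ?_
      rw [map_smul]; rfl
    rw [h1] at hw
    have h2 := congrArg (TT ((1 : Matrix κ κ ℝ) ⊗ₖ ((u⁻¹ : (Matrix L L ℝ)ˣ) : Matrix L L ℝ))) hw
    rw [TT_mul, kk, Units.inv_mul, one_mul, one_kronecker_one, oneT, map_zero] at h2
    exact h2
  · have := congrArg TT (hR.1 i)
    rw [TT, map_mul] at this
    rw [this, TT, map_intCast]
  · have := congrArg TT (hR.2 i j hij)
    rw [TT, map_mul, TT, map_neg, map_mul] at this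
    exact this
  · rw [TT_mul, TT_mul]
    rcases i with i | i
    · change TT ((1 ⊗ₖ F j) * ((δ i * α) ⊗ₖ 1)) x = (1 : ℝ) • TT (((δ i * α) ⊗ₖ 1) * (1 ⊗ₖ F j)) x
      rw [kk, kk, one_smul]; simp only [one_mul, mul_one]
    · change TT ((1 ⊗ₖ F j) * (α ⊗ₖ J)) x = (-1 : ℝ) • TT ((α ⊗ₖ J) * (1 ⊗ₖ F j)) x
      rw [kk, kk, hFJ, k_neg, nT, one_mul, mul_one, neg_smul, one_smul]; rfl
  · rw [TT_mul, TT_mul]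
    rcases i with i | i
    · change TT ((γ j ⊗ₖ J) * ((δ i * α) ⊗ₖ 1)) x = (1 : ℝ) • TT (((δ i * α) ⊗ₖ 1) * (γ j ⊗ₖ J)) x
      rw [kk, kk, one_smul, ← mul_assoc, hγδ, mul_assoc (δ i), hαγ, one_mul, mul_one, mul_neg, neg_mul, mul_assoc]
    · change TT ((γ j ⊗ₖ J) * (α ⊗ₖ J)) x = (-1 : ℝ) • TT ((α ⊗ₖ J) * (γ j ⊗ₖ J)) x
      rw [kk, kk, hαγ, neg_k, nT, neg_smul, one_smul, ContinuousLinearMap.neg_apply, neg_neg]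
  · rw [finrank_euclideanSpace, Fintype.card_prod, hcard]

theorem hr_bound (N : ℕ) (hN : 1 ≤ N) (n : ℕ)
    (h : ∃ f : EuclideanSpace ℝ (Fin n) →ₗ[ℝ]
          Matrix (Fin N ⊕ Fin N) (Fin N ⊕ Fin N) ℝ,
        (∀ v, (f v)ᵀ = f v ∧ (f v)ᵀ * Jreal N + Jreal N * f v = 0) ∧
          ∀ v, v ≠ 0 → IsUnit (f v)) : (n : ℤ) ≤ hrRho ((N : ℚ) / 2) + 2 := by
  rcases n with _ | m
  · have := (rho_iff N hN 0).1 (by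
      have : hrBeta 0 = 0 := by simp [hrBeta]
      rw [this]; simp)
    push_cast at this ⊢
    linarith
  obtain ⟨f, hf, hu⟩ := h
  rw [← rho_iff N hN m]
  obtain ⟨κ, _, _, e, he, hT, hcard⟩ := hasM_pow (m+1)
  have hJ : Jreal N * Jreal N = -1 := by
    rw [Jreal, fromBlocks_multiply, ← fromBlocks_one, fromBlocks_neg]; simp
  have hJT : (Jreal N)ᵀ = -Jreal N := by
    rw [Jreal, fromBlocks_transpose, fromBlocks_neg]; simp
  have key := matrix_core e he hT hcard (Jreal N) hJ hJT (fun i => f (EuclideanSpace.single i 1))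
    (fun i => (hf _).1) (fun i => by
      have := (hf (EuclideanSpace.single i 1)).2
      rw [(hf _).1] at this
      exact eq_neg_of_add_eq_zero_left this) (fun x hx => by
      have hs : ∑ i, x i • f (EuclideanSpace.single i 1) = f (WithLp.toLp 2 x) := by
        simp only [← map_smul, ← map_sum]
        congr 1
        ext j
        simp [Pi.single_apply]
      rw [hs]
      apply hu
      intro h0
      exact hx (funext fun i => congrArg (fun z : EuclideanSpace ℝ (Fin (m+1)) => z i) h0))
  rw [Fintype.card_sum, Fintype.card_fin, ← two_mul, pow_succ, mul_comm] at key
  exact Nat.dvd_of_mul_dvd_mul_left two_pos key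

theorem hr_unit (N : ℕ) (n : ℕ)
    (h : ∃ f : EuclideanSpace ℝ (Fin n) →ₗ[ℝ]
          Matrix (Fin N ⊕ Fin N) (Fin N ⊕ Fin N) ℝ,
        ∀ v, (f v)ᵀ = f v ∧ (f v)ᵀ * Jreal N + Jreal N * f v = 0 ∧
          (f v) ^ 2 = (‖v‖ ^ 2 : ℝ) • (1 : Matrix (Fin N ⊕ Fin N) (Fin N ⊕ Fin N) ℝ)) :
    ∃ f : EuclideanSpace ℝ (Fin n) →ₗ[ℝ]
          Matrix (Fin N ⊕ Fin N) (Fin N ⊕ Fin N) ℝ,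
        (∀ v, (f v)ᵀ = f v ∧ (f v)ᵀ * Jreal N + Jreal N * f v = 0) ∧
          ∀ v, v ≠ 0 → IsUnit (f v) := by
  obtain ⟨f, hf⟩ := h
  refine ⟨f, fun v => ⟨(hf v).1, (hf v).2.1⟩, fun v hv => ?_⟩
  have hn : (‖v‖ ^ 2 : ℝ) ≠ 0 := by simpa using hv
  have h1 : f v * ((‖v‖ ^ 2 : ℝ)⁻¹ • f v) = 1 := by
    rw [mul_smul_comm, ← pow_two, (hf v).2.2, smul_smul, inv_mul_cancel₀ hn, one_smul]
  exact ((Matrix.isUnit_iff_isUnit_det _).2 (Matrix.isUnit_det_of_right_inverse h1))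

end

/-- Entry `𝔤 = 𝔰𝔭(N,ℝ)` of the Hurwitz–Radon value theorem
(the `𝔭`-part being the symmetric elements of `𝔰𝔭(N,ℝ)`):
`ρ⁽¹⁾ = ρ⁽²⁾ = ρ(N/2) + 2`. -/
theorem hurwitzRadon_sp_N_R (N : ℕ) (hN : 1 ≤ N) (n : ℕ) :
    ((∃ f : EuclideanSpace ℝ (Fin n) →ₗ[ℝ]
          Matrix (Fin N ⊕ Fin N) (Fin N ⊕ Fin N) ℝ,
        ∀ v, (f v)ᵀ = f v ∧ (f v)ᵀ * Jreal N + Jreal N * f v = 0 ∧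
          (f v) ^ 2 = (‖v‖ ^ 2 : ℝ) • (1 : Matrix (Fin N ⊕ Fin N) (Fin N ⊕ Fin N) ℝ)) ↔
      (∃ f : EuclideanSpace ℝ (Fin n) →ₗ[ℝ]
          Matrix (Fin N ⊕ Fin N) (Fin N ⊕ Fin N) ℝ,
        (∀ v, (f v)ᵀ = f v ∧ (f v)ᵀ * Jreal N + Jreal N * f v = 0) ∧
          ∀ v, v ≠ 0 → IsUnit (f v))) ∧
    ((∃ f : EuclideanSpace ℝ (Fin n) →ₗ[ℝ]
          Matrix (Fin N ⊕ Fin N) (Fin N ⊕ Fin N) ℝ,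
        (∀ v, (f v)ᵀ = f v ∧ (f v)ᵀ * Jreal N + Jreal N * f v = 0) ∧
          ∀ v, v ≠ 0 → IsUnit (f v)) ↔
      (n : ℤ) ≤ hrRho ((N : ℚ) / 2) + 2) := by
  exact ⟨⟨hr_unit N n, fun h => hr_construct N hN n (hr_bound N hN n h)⟩,
    ⟨hr_bound N hN n, fun h => hr_unit N n (hr_construct N hN n h)⟩⟩
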